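/- arXiv:2605.21438 — 2 statements merged into one kernel-verified Lean document; each statement's English description precedes it below -/
import Mathlib

section
/- Let d > 2 be an integer and c₀ ∈ (0,1]. There exist δ_s ∈ (0,1/2] and C > 0, depending only on (d, c₀), such that for every admissible kernel J on ℤ^d with constant c₀ and every G ∈ 𝒢 with (J,G) satisfying Assumption G, for every β < β(δ_s) and every x ∈ ℤ^d with |x| ≤ 2σ_J: F_β(x) ≤ (C/σ_J^d)·(σ_J/(σ_J∨|x|))^{d−2}. -/
open scoped ENNReal

noncomputable section

namespace Blackbox

/-- Supremum norm of a lattice point. -/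
def supNorm {d : ℕ} (x : Fin d → ℤ) : ℝ :=
  ((Finset.univ.sup fun i => (x i).natAbs : ℕ) : ℝ)

/-- Squared Euclidean norm of a lattice point. -/
def sqNorm {d : ℕ} (x : Fin d → ℤ) : ℝ :=
  ∑ i, ((x i : ℝ)) ^ 2

/-- Invariance under coordinate permutations and sign flips of individual coordinates. -/
def IsSymmFun {d : ℕ} {α : Type*} (f : (Fin d → ℤ) → α) : Prop :=
  ∀ (π : Equiv.Perm (Fin d)) (e : Fin d → Bool) (x : Fin d → ℤ),
    f (fun i => (if e i then -1 else 1) * x (π i)) = f x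

/-- First coordinate (dot product with `e₁`). -/
def e1 {d : ℕ} {α : Type*} [Zero α] (y : Fin d → α) : α :=
  if h : 0 < d then y ⟨0, h⟩ else 0

/-- An admissible kernel on `ℤ^d` with constant `c₀`. -/
structure AdmissibleKernel (d : ℕ) (c₀ : ℝ) where
  J : (Fin d → ℤ) → ℝ
  nonneg : ∀ x, 0 ≤ J x
  zero_at_zero : J 0 = 0
  summable : Summable J
  norm_one : ∑' x, J x = 1
  symm : IsSymmFun J
  R : ℝ
  R_ge_one : 1 ≤ R
  range_le : ∀ x, 0 < J x → supNorm x ≤ R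
  range_attained : ∃ x, 0 < J x ∧ supNorm x = R
  summable_sq : Summable fun x => sqNorm x * J x
  sigma_lower : c₀ * R ≤ Real.sqrt (∑' x, sqNorm x * J x)
  J_upper : ∀ x, J x ≤ c₀⁻¹ / R ^ d

/-- `σ_J`, the square root of the variance of the kernel. -/
def AdmissibleKernel.sigma {d : ℕ} {c₀ : ℝ} (K : AdmissibleKernel d c₀) : ℝ :=
  Real.sqrt (∑' x, sqNorm x * K.J x)

/-- A family `G ∈ 𝒢` together with an admissible kernel `J` such that `(J,G)` satisfies
Assumption G (with error-term family `H`). -/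
structure Model (d : ℕ) (c₀ : ℝ) where
  K : AdmissibleKernel d c₀
  G : ℝ → (Fin d → ℤ) → ℝ≥0∞
  βc : ℝ≥0∞
  βc_pos : 0 < βc
  init : ∀ x, G 0 x = if x = 0 then 1 else 0
  G' : ℝ → (Fin d → ℤ) → ℝ
  mono : ∀ (x : Fin d → ℤ) ⦃β₁ β₂ : ℝ⦄, 0 ≤ β₁ → β₁ ≤ β₂ →
    ENNReal.ofReal β₂ ≤ βc → G β₁ x ≤ G β₂ x
  deriv : ∀ (x : Fin d → ℤ) ⦃β : ℝ⦄, 0 ≤ β → ENNReal.ofReal β < βc →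
    HasDerivWithinAt (fun t => (G t x).toReal) (G' β x) (Set.Ici 0) β
  symm : ∀ β, IsSymmFun (G β)
  expDecay : ∀ ⦃β : ℝ⦄, 0 ≤ β → ENNReal.ofReal β < βc →
    ∃ C > (0:ℝ), ∃ c > (0:ℝ), ∀ x, G β x ≤ ENNReal.ofReal (C * Real.exp (-c * supNorm x))
  limit : βc ≠ ⊤ → ∀ x, G βc.toReal x = ⨆ β ∈ Set.Ico (0 : ℝ) βc.toReal, G β x
  I1 : ∀ ⦃β' β : ℝ⦄, 0 ≤ β' → β' ≤ β → ENNReal.ofReal β < βc →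
    ∀ x, G β x ≤ G β' x + ENNReal.ofReal (β - β') *
      ∑' p : (Fin d → ℤ) × (Fin d → ℤ),
        G β' p.1 * ENNReal.ofReal (K.J p.2) * G β (x - p.1 - p.2)
  H : ℝ → (Fin d → ℤ) → ℝ
  H_nonneg : ∀ β x, 0 ≤ H β x
  H_zero : ∀ x, H 0 x = 0
  H_symm : ∀ β x, H β (-x) = H β x
  H_cont : ∀ x, ContinuousOn (fun β => H β x)
    {β : ℝ | 0 ≤ β ∧ ENNReal.ofReal β < βc}
  H_expDecay : ∀ ⦃β : ℝ⦄, 0 ≤ β → ENNReal.ofReal β < βc →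
    ∃ C > (0:ℝ), ∃ c > (0:ℝ), ∀ x, H β x ≤ C * Real.exp (-c * supNorm x)
  I2 : ∀ ⦃β : ℝ⦄, 0 ≤ β → ENNReal.ofReal β < βc → ∀ x,
    (∑' p : (Fin d → ℤ) × (Fin d → ℤ),
      (G β p.1).toReal * (K.J p.2 - H β p.2) * (G β (x - p.1 - p.2)).toReal)
      ≤ G' β x

namespace Model

variable {d : ℕ} {c₀ : ℝ}

def sigma (M : Model d c₀) : ℝ := M.K.sigma

/-- `F_β = J * G_β`. -/
def F (M : Model d c₀) (β : ℝ) (x : Fin d → ℤ) : ℝ≥0∞ :=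
  ∑' y, ENNReal.ofReal (M.K.J y) * M.G β (x - y)

/-- The susceptibility `χ(β)`. -/
def chi (M : Model d c₀) (β : ℝ) : ℝ≥0∞ := ∑' x, M.G β x

/-- `ξ(β)²`. -/
def xiSq (M : Model d c₀) (β : ℝ) : ℝ≥0∞ :=
  (∑' x, ENNReal.ofReal (sqNorm x) * M.F β x) / M.chi β

/-- The correlation length of order two, `ξ(β)`. -/
def xi (M : Model d c₀) (β : ℝ) : ℝ := Real.sqrt (M.xiSq β).toReal

/-- The error term `E(β)`. -/
def E (M : Model d c₀) (β : ℝ) : ℝ≥0∞ :=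
  ⨆ t ∈ Set.Icc (0 : ℝ) β,
    (ENNReal.ofReal (∑' x, M.H t x) +
      ENNReal.ofReal (∑' x, sqNorm x * M.H t x) / M.xiSq t)

/-- `β(δ)`. -/
def betaOf (M : Model d c₀) (δ : ℝ) : ℝ :=
  sSup {β : ℝ | 0 ≤ β ∧ ENNReal.ofReal β < M.βc ∧ M.E β < ENNReal.ofReal δ}

/-- One-step distribution of the effective random walk at parameter `β`. -/
def effStep (M : Model d c₀) (β : ℝ) (y : Fin d → ℤ) : ℝ≥0∞ :=
  M.F β y / M.chi β

/-- `k`-step distribution of the effective random walk at parameter `β`. -/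
def effIter (M : Model d c₀) (β : ℝ) : ℕ → (Fin d → ℤ) → ℝ≥0∞
  | 0 => fun x => if x = 0 then 1 else 0
  | n + 1 => fun x => ∑' y, M.effStep β y * M.effIter β n (x - y)

/-- Moment generating function `M_β(s)` of the first coordinate of one step of the
effective random walk. -/
def Mgf (M : Model d c₀) (β s : ℝ) : ℝ≥0∞ :=
  ∑' y : Fin d → ℤ, M.effStep β y * ENNReal.ofReal (Real.exp (s / M.xi β * ((e1 y : ℤ) : ℝ)))

end Model

end Blackbox
section
open MeasureTheory Blackbox
namespace SX

abbrev Tor (d : ℕ) := Fin d → UnitAddCircle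

def ee {d : ℕ} (x : Fin d → ℤ) (θ : Tor d) : ℂ := UnitAddTorus.mFourier x θ

lemma ee_def {d : ℕ} (x : Fin d → ℤ) (θ : Tor d) : ee x θ = ∏ i, (fourier (x i) (θ i) : ℂ) := rfl

lemma norm_ee {d : ℕ} (x : Fin d → ℤ) (θ : Tor d) : ‖ee x θ‖ = 1 := by
  rw [ee_def, norm_prod]
  exact Finset.prod_eq_one fun i _ => Circle.norm_coe _

lemma ee_continuous {d : ℕ} (x : Fin d → ℤ) : Continuous (ee x : Tor d → ℂ) :=
  (UnitAddTorus.mFourier x).continuous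

lemma ee_neg {d : ℕ} (x : Fin d → ℤ) (θ : Tor d) : ee (-x) θ = (starRingEnd ℂ) (ee x θ) :=
  UnitAddTorus.mFourier_neg

lemma ee_add {d : ℕ} (x y : Fin d → ℤ) (θ : Tor d) : ee (x + y) θ = ee x θ * ee y θ :=
  UnitAddTorus.mFourier_add

lemma ee_zero {d : ℕ} (θ : Tor d) : ee (0 : Fin d → ℤ) θ = 1 := by
  simp [ee_def]

lemma ee_arg_sub {d : ℕ} (x : Fin d → ℤ) (θ η : Tor d) :
    ee x (θ - η) = ee x θ * (starRingEnd ℂ) (ee x η) := by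
  simp only [ee_def, map_prod, ← Finset.prod_mul_distrib]
  refine Finset.prod_congr rfl fun i _ => ?_
  obtain ⟨s, hs⟩ := QuotientAddGroup.mk_surjective (θ i)
  obtain ⟨t, ht⟩ := QuotientAddGroup.mk_surjective (η i)
  rw [Pi.sub_apply, ← hs, ← ht, ← fourier_neg]
  change fourier (x i) (((s - t : ℝ)) : AddCircle (1:ℝ)) =
    fourier (x i) ((s : ℝ) : AddCircle (1:ℝ)) * fourier (-(x i)) ((t : ℝ) : AddCircle (1:ℝ))
  rw [fourier_coe_apply, fourier_coe_apply, fourier_coe_apply, ← Complex.exp_add]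
  congr 1
  push_cast
  ring

lemma ee_re_cos {d : ℕ} (x : Fin d → ℤ) (t : Fin d → ℝ) :
    (ee x (fun i => (t i : UnitAddCircle))).re = Real.cos (2 * Real.pi * ∑ i, (x i : ℝ) * t i) := by
  have : ee x (fun i => (t i : UnitAddCircle)) =
      Complex.exp (((2 * Real.pi * ∑ i, (x i : ℝ) * t i : ℝ) : ℂ) * Complex.I) := by
    rw [ee_def]
    simp only [fourier_coe_apply, ← Complex.exp_sum]
    congr 1
    push_cast
    rw [Finset.mul_sum, Finset.sum_mul]
    refine Finset.sum_congr rfl fun i _ => ?_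
    push_cast
    ring
  rw [this, Complex.exp_ofReal_mul_I_re]

instance torProb (d : ℕ) : IsProbabilityMeasure (volume : Measure (Tor d)) := by
  constructor
  rw [volume_pi, Measure.pi_univ]
  simp

lemma integral_ee {d : ℕ} (x : Fin d → ℤ) :
    ∫ θ : Tor d, ee x θ = if x = 0 then 1 else 0 := by
  split_ifs with h
  · subst h
    simp [ee_zero]
  · simp only [ee_def]
    rw [MeasureTheory.integral_fintype_prod_volume_eq_prod (fun i (t : UnitAddCircle) => (fourier (x i) t : ℂ))]
    obtain ⟨i, hi⟩ := Function.ne_iff.mp h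
    apply Finset.prod_eq_zero (Finset.mem_univ i)
    exact integral_eq_zero_of_add_right_eq_neg (fourier_add_half_inv_index hi one_pos)

def hat {d : ℕ} (u : (Fin d → ℤ) → ℝ) (θ : Tor d) : ℂ := ∑' x, (u x : ℂ) * ee x θ

lemma summable_hat {d : ℕ} {u : (Fin d → ℤ) → ℝ} (hu : Summable u) (θ : Tor d) :
    Summable fun x => (u x : ℂ) * ee x θ := by
  refine Summable.of_norm ?_
  simpa [norm_ee] using hu.abs

lemma hat_continuous {d : ℕ} {u : (Fin d → ℤ) → ℝ} (hu : Summable u) :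
    Continuous (hat u) := by
  refine continuous_tsum (fun x => continuous_const.mul (ee_continuous x)) hu.abs ?_
  intro x θ
  simp [norm_ee]

lemma parseval {d : ℕ} {u : (Fin d → ℤ) → ℝ} (hu : Summable u) :
    ∫ θ : Tor d, ‖hat u θ‖ ^ 2 = ∑' x, u x ^ 2 := by
  have h1 : ∀ θ : Tor d, ((‖hat u θ‖ ^ 2 : ℝ) : ℂ) =
      ∑' p : (Fin d → ℤ) × (Fin d → ℤ), ((u p.1 * u p.2 : ℝ) : ℂ) * ee (p.1 - p.2) θ := by
    intro θ
    have : ((‖hat u θ‖ ^ 2 : ℝ) : ℂ) = hat u θ * (starRingEnd ℂ) (hat u θ) := by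
      rw [Complex.mul_conj, Complex.normSq_eq_norm_sq]
    rw [this, hat, Complex.conj_tsum, tsum_mul_tsum_of_summable_norm]
    · refine tsum_congr fun p => ?_
      rw [sub_eq_add_neg, ee_add, ee_neg]
      simp
      ring
    · simpa [norm_ee] using hu.abs
    · simpa [norm_ee] using hu.abs
  have hs : Summable fun p : (Fin d → ℤ) × (Fin d → ℤ) => |u p.1 * u p.2| := by
    have := Summable.mul_of_nonneg hu.abs hu.abs (fun _ => abs_nonneg _) (fun _ => abs_nonneg _)
    simpa [abs_mul] using this
  have h2 : ((∫ θ : Tor d, ‖hat u θ‖ ^ 2 : ℝ) : ℂ) = ∑' p : (Fin d → ℤ) × (Fin d → ℤ),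
      ((u p.1 * u p.2 : ℝ) : ℂ) * (if p.1 - p.2 = 0 then 1 else 0) := by
    rw [← integral_complex_ofReal]
    simp_rw [h1]
    rw [← integral_tsum_of_summable_integral_norm]
    · refine tsum_congr fun p => ?_
      rw [integral_const_mul, integral_ee]
    · intro p
      exact (continuous_const.mul (ee_continuous _)).integrable_of_hasCompactSupport
        (HasCompactSupport.of_compactSpace _)
    · simp only [norm_mul, norm_ee, mul_one]
      simpa using hs
  have h3 : ∑' p : (Fin d → ℤ) × (Fin d → ℤ),
      ((u p.1 * u p.2 : ℝ) : ℂ) * (if p.1 - p.2 = 0 then 1 else 0) = ∑' x, ((u x ^ 2 : ℝ) : ℂ) := by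
    rw [Summable.tsum_prod]
    · refine tsum_congr fun x => ?_
      rw [tsum_eq_single x]
      · simp [sq]
      · intro y hy
        simp [sub_eq_zero, hy.symm]
    · refine Summable.of_norm_bounded hs ?_
      intro p
      split_ifs <;> simp [abs_mul, mul_nonneg]
  rw [h3, ← Complex.ofReal_tsum] at h2
  exact_mod_cast h2

/-- real convolution -/
def rconv {d : ℕ} (u v : (Fin d → ℤ) → ℝ) (x : Fin d → ℤ) : ℝ := ∑' y, u y * v (x - y)

def shearEquiv (d : ℕ) : (Fin d → ℤ) × (Fin d → ℤ) ≃ (Fin d → ℤ) × (Fin d → ℤ) where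
  toFun p := (p.2, p.1 - p.2)
  invFun q := (q.1 + q.2, q.1)
  left_inv p := by simp
  right_inv q := by simp

lemma hat_rconv {d : ℕ} {u v : (Fin d → ℤ) → ℝ} (hu : Summable u) (hv : Summable v) (θ : Tor d) :
    hat (rconv u v) θ = hat u θ * hat v θ := by
  have hs : Summable fun p : (Fin d → ℤ) × (Fin d → ℤ) =>
      ((u p.1 : ℂ) * ee p.1 θ) * ((v p.2 : ℂ) * ee p.2 θ) := by
    exact summable_mul_of_summable_norm (f := fun x => (u x : ℂ) * ee x θ)
      (g := fun x => (v x : ℂ) * ee x θ) (by simpa [norm_ee] using hu.abs)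
      (by simpa [norm_ee] using hv.abs)
  have hs' := (shearEquiv d).summable_iff.mpr hs
  have e1 : hat u θ * hat v θ = ∑' p : (Fin d → ℤ) × (Fin d → ℤ),
      ((u p.1 : ℂ) * ee p.1 θ) * ((v p.2 : ℂ) * ee p.2 θ) := by
    rw [hat, hat]
    exact tsum_mul_tsum_of_summable_norm (f := fun x => (u x : ℂ) * ee x θ)
      (g := fun x => (v x : ℂ) * ee x θ) (by simpa [norm_ee] using hu.abs)
      (by simpa [norm_ee] using hv.abs)
  have e2 := (shearEquiv d).tsum_eq fun p : (Fin d → ℤ) × (Fin d → ℤ) =>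
      ((u p.1 : ℂ) * ee p.1 θ) * ((v p.2 : ℂ) * ee p.2 θ)
  have e3 := Summable.tsum_prod hs'
  rw [e1, ← e2]
  refine Eq.trans ?_ e3.symm
  rw [hat]
  refine tsum_congr fun x => ?_
  rw [rconv, Complex.ofReal_tsum, ← tsum_mul_right]
  refine tsum_congr fun y => ?_
  have : ee x θ = ee y θ * ee (x - y) θ := by rw [← ee_add]; congr 1; abel
  simp only [shearEquiv, Function.comp_apply, Equiv.coe_fn_mk, this]
  push_cast
  ring

lemma hat_im {d : ℕ} {u : (Fin d → ℤ) → ℝ} (he : ∀ x, u (-x) = u x) (θ : Tor d) :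
    (hat u θ).im = 0 := by
  rw [← Complex.conj_eq_iff_im, hat, Complex.conj_tsum, ← (Equiv.neg (Fin d → ℤ)).tsum_eq]
  refine tsum_congr fun x => ?_
  simp [he, ee_neg]

/-- real part of the transform -/
def ph {d : ℕ} (u : (Fin d → ℤ) → ℝ) (θ : Tor d) : ℝ := (hat u θ).re

lemma hat_eq_ph {d : ℕ} {u : (Fin d → ℤ) → ℝ} (he : ∀ x, u (-x) = u x) (θ : Tor d) :
    hat u θ = (ph u θ : ℂ) := by
  apply Complex.ext <;> simp [ph, hat_im he]

lemma ph_continuous {d : ℕ} {u : (Fin d → ℤ) → ℝ} (hu : Summable u) :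
    Continuous (ph u) := Complex.continuous_re.comp (hat_continuous hu)

lemma ph_eq {d : ℕ} {u : (Fin d → ℤ) → ℝ} (hu : Summable u) (θ : Tor d) :
    HasSum (fun x => u x * (ee x θ).re) (ph u θ) := by
  have := Complex.hasSum_re (summable_hat hu θ).hasSum
  refine this.congr_fun fun x => ?_
  simp

lemma one_sub_ph {d : ℕ} {u : (Fin d → ℤ) → ℝ} (hu : HasSum u 1) (θ : Tor d) :
    HasSum (fun x => u x * (1 - (ee x θ).re)) (1 - ph u θ) := by
  have := hu.sub (ph_eq hu.summable θ)
  refine this.congr_fun fun x => ?_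
  ring

lemma ee_re_le {d : ℕ} (x : Fin d → ℤ) (θ : Tor d) : |(ee x θ).re| ≤ 1 := by
  rw [← norm_ee x θ]; exact Complex.abs_re_le_norm _

lemma abs_ph_le {d : ℕ} {u : (Fin d → ℤ) → ℝ} (h0 : ∀ x, 0 ≤ u x) (hu : HasSum u 1) (θ : Tor d) :
    |ph u θ| ≤ 1 := by
  rw [abs_le]
  constructor
  · have h := (ph_eq hu.summable θ).add hu
    have := h.nonneg (fun x => ?_)
    · linarith
    · have := (abs_le.mp (ee_re_le x θ)).1
      nlinarith [h0 x]
  · have := (one_sub_ph hu θ).nonneg (fun x => ?_)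
    · linarith
    · have := (abs_le.mp (ee_re_le x θ)).2
      exact mul_nonneg (h0 x) (by linarith)

lemma unit_ineq (z w : ℂ) (hz : ‖z‖ = 1) (hw : ‖w‖ = 1) :
    1 - (z * (starRingEnd ℂ) w).re ≤ 2 * (1 - z.re) + 2 * (1 - w.re) := by
  have h1 : z.re ^ 2 + z.im ^ 2 = 1 := by
    have := Complex.sq_norm z; rw [hz, Complex.normSq_apply] at this; linarith
  have h2 : w.re ^ 2 + w.im ^ 2 = 1 := by
    have := Complex.sq_norm w; rw [hw, Complex.normSq_apply] at this; linarith
  simp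
  nlinarith [sq_nonneg (z.re + w.re - 2), sq_nonneg (z.im + w.im)]

lemma ph_sub {d : ℕ} {u : (Fin d → ℤ) → ℝ} (h0 : ∀ x, 0 ≤ u x) (hu : HasSum u 1) (θ η : Tor d) :
    1 - ph u (θ - η) ≤ 2 * (1 - ph u θ) + 2 * (1 - ph u η) := by
  refine hasSum_le (fun x => ?_) (one_sub_ph hu (θ - η))
    (((one_sub_ph hu θ).mul_left 2).add ((one_sub_ph hu η).mul_left 2))
  have := unit_ineq (ee x θ) (ee x η) (norm_ee _ _) (norm_ee _ _)
  rw [← ee_arg_sub] at this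
  nlinarith [h0 x]

end SX
end

section
open MeasureTheory Blackbox
namespace SX

lemma ww_ineq {ε a p q r : ℝ} (hε : ε = 1 - a) (hp : p ≤ 1) (hq : q ≤ 1) (hr : r ≤ 1)
    (ha : 1/2 ≤ a) (ha1 : a < 1)
    (h : 1 - r ≤ 2 * (1 - p) + 2 * (1 - q)) :
    ((1 - a * p)⁻¹) ^ 2 * ((1 - a * q)⁻¹) ^ 2 ≤
      ((ε + (1 - r) / 8)⁻¹) ^ 2 * (((1 - a * p)⁻¹) ^ 2 + ((1 - a * q)⁻¹) ^ 2) := by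
  have hP : 0 < 1 - a * p := by nlinarith
  have hQ : 0 < 1 - a * q := by nlinarith
  have hR : 0 < ε + (1 - r) / 8 := by subst hε; nlinarith
  have hsum : 2 * (ε + (1 - r) / 8) ≤ (1 - a * p) + (1 - a * q) := by subst hε; nlinarith
  generalize 1 - a * p = P at *
  generalize 1 - a * q = Q at *
  generalize ε + (1 - r) / 8 = R at *
  rcases le_total P Q with hPQ | hPQ
  · have h1 : Q⁻¹ ≤ R⁻¹ := inv_anti₀ hR (by linarith)
    have h2 : Q⁻¹ ^ 2 ≤ R⁻¹ ^ 2 := pow_le_pow_left₀ (by positivity) h1 2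
    have h3 : 0 ≤ P⁻¹ ^ 2 := by positivity
    have h4 : 0 ≤ Q⁻¹ ^ 2 := by positivity
    nlinarith [mul_nonneg (sq_nonneg R⁻¹) h4]
  · have h1 : P⁻¹ ≤ R⁻¹ := inv_anti₀ hR (by linarith)
    have h2 : P⁻¹ ^ 2 ≤ R⁻¹ ^ 2 := pow_le_pow_left₀ (by positivity) h1 2
    have h3 : 0 ≤ P⁻¹ ^ 2 := by positivity
    have h4 : 0 ≤ Q⁻¹ ^ 2 := by positivity
    nlinarith [mul_nonneg (sq_nonneg R⁻¹) h3]

instance circNeg : (volume : Measure UnitAddCircle).IsNegInvariant :=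
  Measure.IsAddHaarMeasure.isNegInvariant_of_regular _

instance torNeg (d : ℕ) : (volume : Measure (Tor d)).IsNegInvariant := by
  unfold Tor
  infer_instance

lemma core {d : ℕ} (φ : Tor d → ℝ) (hc : Continuous φ) (h1 : ∀ θ, |φ θ| ≤ 1)
    (hsub : ∀ θ η, 1 - φ (θ - η) ≤ 2 * (1 - φ θ) + 2 * (1 - φ η))
    (B : Set (Tor d)) (hB : MeasurableSet B) (hBup : ∀ θ ∈ B, 1 - φ θ ≤ 1/8)
    (a : ℝ) (ha : 1/2 ≤ a) (ha1 : a < 1)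
    (κ : Tor d → ℝ≥0∞) (hκm : Measurable κ)
    (hκ : ∀ θ ∈ B, ∀ η ∈ B,
      ENNReal.ofReal (((1 - a + (1 - φ (θ - η)) / 8)⁻¹) ^ 2) ≤ κ (θ - η)) :
    volume B * ∫⁻ θ, ENNReal.ofReal (φ θ ^ 2 * ((1 - a * φ θ)⁻¹) ^ 2) ≤
      (16 * volume B + 32 * ∫⁻ θ, κ θ) * ∫⁻ θ, ENNReal.ofReal (φ θ ^ 2) := by
  have hle : ∀ θ, φ θ ≤ 1 := fun θ => (abs_le.mp (h1 θ)).2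
  have hpos : ∀ θ, 1 - a ≤ 1 - a * φ θ := fun θ => by nlinarith [hle θ]
  set W : Tor d → ℝ≥0∞ := fun θ => ENNReal.ofReal (((1 - a * φ θ)⁻¹) ^ 2) with hW
  have hWm : Measurable W := by
    have := hc.measurable
    fun_prop
  set b : Tor d → ℝ≥0∞ := B.indicator 1 with hb
  have hbm : Measurable b := measurable_one.indicator hB
  have hb1 : ∀ θ, b θ ≤ 1 := fun θ => by
    by_cases h : θ ∈ B <;> simp [b, h]
  have hbint : ∫⁻ θ, b θ = volume B := by simp [b, hB]
  have hWbd : ∀ θ, W θ ≤ ENNReal.ofReal (((1 - a)⁻¹) ^ 2) := fun θ => by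
    apply ENNReal.ofReal_le_ofReal
    have : (1 - a * φ θ)⁻¹ ≤ (1 - a)⁻¹ := inv_anti₀ (by linarith) (hpos θ)
    have h0 : 0 ≤ (1 - a * φ θ)⁻¹ := inv_nonneg.mpr (by linarith [hpos θ])
    gcongr
  set I : Tor d → ℝ≥0∞ := fun θ => ∫⁻ η, b (η - θ) * W η with hI
  have hIfin : ∀ θ, I θ ≠ ⊤ := fun θ => by
    have : I θ ≤ ∫⁻ η : Tor d, ENNReal.ofReal (((1 - a)⁻¹) ^ 2) := by
      apply lintegral_mono
      intro η
      calc b (η - θ) * W η ≤ 1 * W η := by gcongr; exact hb1 _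
        _ ≤ _ := by rw [one_mul]; exact hWbd η
    refine ne_top_of_le_ne_top ?_ this
    simp
  set K : ℝ≥0∞ := ∫⁻ θ, κ θ with hK
  have hIK : ∀ θ, I θ ≤ 2 * K := by
    intro θ
    have key : I θ * I θ ≤ 2 * K * I θ := by
      calc I θ * I θ = ∫⁻ η, ∫⁻ η', (b (η - θ) * W η) * (b (η' - θ) * W η') := by
            simp only [hI]
            rw [← lintegral_mul_const _ (by fun_prop)]
            refine lintegral_congr fun η => ?_
            rw [lintegral_const_mul _ (by fun_prop)]
        _ ≤ ∫⁻ η, ∫⁻ η', ((b (η - θ) * W η) * κ (η - η') + (b (η' - θ) * W η') * κ (η - η')) := by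
            refine lintegral_mono fun η => lintegral_mono fun η' => ?_
            by_cases hη : η - θ ∈ B
            · by_cases hη' : η' - θ ∈ B
              · have e1 : b (η - θ) = 1 := by simp [b, hη]
                have e2 : b (η' - θ) = 1 := by simp [b, hη']
                have hk := hκ _ hη _ hη'
                rw [sub_sub_sub_cancel_right] at hk
                dsimp only
                rw [e1, e2, one_mul, one_mul]
                calc W η * W η' = ENNReal.ofReal (((1 - a * φ η)⁻¹) ^ 2 * ((1 - a * φ η')⁻¹) ^ 2) := by
                      rw [ENNReal.ofReal_mul (by positivity)]
                  _ ≤ ENNReal.ofReal (((1 - a + (1 - φ (η - η')) / 8)⁻¹) ^ 2 *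
                        (((1 - a * φ η)⁻¹) ^ 2 + ((1 - a * φ η')⁻¹) ^ 2)) :=
                      ENNReal.ofReal_le_ofReal (ww_ineq rfl (hle _) (hle _) (hle _) ha ha1 (hsub _ _))
                  _ = ENNReal.ofReal (((1 - a + (1 - φ (η - η')) / 8)⁻¹) ^ 2) * (W η + W η') := by
                      rw [ENNReal.ofReal_mul (by positivity), ENNReal.ofReal_add (by positivity) (by positivity)]
                  _ ≤ κ (η - η') * (W η + W η') := by gcongr
                  _ = _ := by ring
              · have e2 : b (η' - θ) = 0 := by simp [b, hη']
                simp [e2]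
            · have e2 : b (η - θ) = 0 := by simp [b, hη]
              simp [e2]
        _ = (∫⁻ η, ∫⁻ η', (b (η - θ) * W η) * κ (η - η')) +
              ∫⁻ η, ∫⁻ η', (b (η' - θ) * W η') * κ (η - η') := by
            rw [← lintegral_add_left (by fun_prop)]
            refine lintegral_congr fun η => ?_
            rw [lintegral_add_left (by fun_prop)]
        _ = K * I θ + K * I θ := by
            congr 1
            · simp only [hI]
              rw [← lintegral_const_mul _ (by fun_prop)]
              refine lintegral_congr fun η => ?_
              rw [lintegral_const_mul _ (by fun_prop), lintegral_sub_left_eq_self κ η, mul_comm]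
            · rw [lintegral_lintegral_swap (by fun_prop)]
              simp only [hI]
              rw [← lintegral_const_mul _ (by fun_prop)]
              refine lintegral_congr fun η => ?_
              rw [lintegral_const_mul _ (by fun_prop), lintegral_sub_right_eq_self κ η, mul_comm]
        _ = 2 * K * I θ := by ring
    by_cases h0 : I θ = 0
    · simp [h0]
    · exact (ENNReal.mul_le_mul_iff_left h0 (hIfin θ)).mp key
  set Φ : Tor d → ℝ≥0∞ := fun θ => ENNReal.ofReal (φ θ ^ 2) with hΦ
  have hΦm : Measurable Φ := by
    have := hc.measurable
    fun_prop
  have hAm : MeasurableSet {θ | 3/4 < φ θ} := measurableSet_lt measurable_const hc.measurable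
  set A : Tor d → ℝ≥0∞ := Set.indicator {θ | 3/4 < φ θ} W with hA
  have hAm' : Measurable A := hWm.indicator hAm
  have hsplit : ∀ θ, ENNReal.ofReal (φ θ ^ 2 * ((1 - a * φ θ)⁻¹) ^ 2) ≤ 16 * Φ θ + A θ := by
    intro θ
    by_cases h : 3/4 < φ θ
    · have : A θ = W θ := by simp [A, h]
      rw [this]
      refine le_trans ?_ le_add_self
      apply ENNReal.ofReal_le_ofReal
      have : φ θ ^ 2 ≤ 1 := by nlinarith [hle θ]
      nlinarith [sq_nonneg (1 - a * φ θ)⁻¹]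
    · have h16 : (1 - a * φ θ)⁻¹ ≤ 4 := by
        rw [inv_le_comm₀ (by linarith [hpos θ]) (by norm_num)]
        push Not at h
        rcases le_total (φ θ) 0 with hn | hn <;> nlinarith
      have h0 : 0 ≤ (1 - a * φ θ)⁻¹ := inv_nonneg.mpr (by linarith [hpos θ])
      refine le_trans ?_ le_self_add
      have : (16 : ℝ≥0∞) = ENNReal.ofReal 16 := by simp
      rw [this, hΦ, ← ENNReal.ofReal_mul (by norm_num)]
      apply ENNReal.ofReal_le_ofReal
      have : ((1 - a * φ θ)⁻¹) ^ 2 ≤ 16 := by nlinarith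
      nlinarith [sq_nonneg (φ θ)]
  have hAint : volume B * ∫⁻ η, A η ≤ 32 * K * ∫⁻ θ, Φ θ := by
    calc volume B * ∫⁻ η, A η = ∫⁻ η, ∫⁻ θ, A η * b (η - θ) := by
          rw [← lintegral_const_mul _ (by fun_prop)]
          refine lintegral_congr fun η => ?_
          rw [lintegral_const_mul _ (by fun_prop), lintegral_sub_left_eq_self b η, hbint, mul_comm]
      _ ≤ ∫⁻ η, ∫⁻ θ, 16 * Φ θ * (b (η - θ) * W η) := by
          refine lintegral_mono fun η => lintegral_mono fun θ => ?_
          dsimp only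
          by_cases h : 3/4 < φ η
          · have : A η = W η := by simp [A, h]
            rw [this]
            by_cases hη : η - θ ∈ B
            · have e1 : b (η - θ) = 1 := by simp [b, hη]
              rw [e1, mul_one, one_mul]
              have h2 := hsub η (η - θ)
              rw [sub_sub_cancel] at h2
              have h3 := hBup _ hη
              have h4 : 1/4 ≤ φ θ := by linarith
              have : (1 : ℝ≥0∞) ≤ 16 * Φ θ := by
                have e : (16 : ℝ≥0∞) = ENNReal.ofReal 16 := by simp
                rw [e, hΦ, ← ENNReal.ofReal_mul (by norm_num)]
                rw [ENNReal.one_le_ofReal]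
                nlinarith
              calc W η = 1 * W η := (one_mul _).symm
                _ ≤ _ := by gcongr
            · have e2 : b (η - θ) = 0 := by simp [b, hη]
              simp [e2]
          · have : A η = 0 := by simp [A, h]
            simp [this]
      _ = ∫⁻ θ, ∫⁻ η, 16 * Φ θ * (b (η - θ) * W η) := by
          rw [lintegral_lintegral_swap (by fun_prop)]
      _ = ∫⁻ θ, 16 * Φ θ * I θ := by
          refine lintegral_congr fun θ => ?_
          rw [lintegral_const_mul _ (by fun_prop)]
      _ ≤ ∫⁻ θ, (32 * K) * Φ θ := by
          refine lintegral_mono fun θ => ?_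
          calc 16 * Φ θ * I θ ≤ 16 * Φ θ * (2 * K) := by gcongr; exact hIK θ
            _ = _ := by ring
      _ = _ := by rw [lintegral_const_mul _ (by fun_prop)]
  calc volume B * ∫⁻ θ, ENNReal.ofReal (φ θ ^ 2 * ((1 - a * φ θ)⁻¹) ^ 2)
      ≤ volume B * ∫⁻ θ, (16 * Φ θ + A θ) := by
        gcongr with θ; exact hsplit θ
    _ = 16 * volume B * (∫⁻ θ, Φ θ) + volume B * (∫⁻ θ, A θ) := by
        rw [lintegral_add_left (by fun_prop), lintegral_const_mul _ (by fun_prop)]; ring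
    _ ≤ 16 * volume B * (∫⁻ θ, Φ θ) + 32 * K * (∫⁻ θ, Φ θ) := by gcongr
    _ = _ := by ring

end SX
end

section
open MeasureTheory Blackbox
namespace SX

lemma cos_lower (s : ℝ) : 8 * s ^ 2 - 32 * s ^ 4 ≤ 1 - Real.cos (2 * Real.pi * s) := by
  have hpi := Real.pi_pos
  by_cases h : |2 * Real.pi * s| ≤ Real.pi
  · have := Real.cos_le_one_sub_mul_cos_sq h
    have e : 2 / Real.pi ^ 2 * (2 * Real.pi * s) ^ 2 = 8 * s ^ 2 := by
      field_simp; ring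
    rw [e] at this
    nlinarith [sq_nonneg (s ^ 2)]
  · push Not at h
    have h1 : 1/2 < |s| := by
      rw [abs_mul, abs_of_pos (by positivity : 0 < 2 * Real.pi)] at h
      nlinarith
    have h2 : 1/4 ≤ s ^ 2 := by rw [← sq_abs]; nlinarith
    have := Real.cos_le_one (2 * Real.pi * s)
    nlinarith

lemma cos_upper (s : ℝ) : 1 - Real.cos (2 * Real.pi * s) ≤ 20 * s ^ 2 := by
  have := Real.one_sub_sq_div_two_le_cos (x := 2 * Real.pi * s)
  have hp := Real.pi_lt_d2
  have hpi := Real.pi_pos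
  have : Real.pi ^ 2 ≤ 10 := by nlinarith
  nlinarith [sq_nonneg s]

/-- bundle of hypotheses on a symmetric probability kernel -/
structure PK {d : ℕ} (p : (Fin d → ℤ) → ℝ) (X r : ℝ) : Prop where
  nonneg : ∀ x, 0 ≤ p x
  sum : HasSum p 1
  flip : ∀ (i : Fin d) (x : Fin d → ℤ), p (Function.update x i (- x i)) = p x
  even : ∀ x, p (-x) = p x
  m2 : ∀ i, HasSum (fun x => (x i : ℝ) ^ 2 * p x) X
  s4 : ∀ i, Summable (fun x => (x i : ℝ) ^ 4 * p x)
  m4 : ∀ i, ∑' x, (x i : ℝ) ^ 4 * p x ≤ r * X ^ 2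
  r1 : 1 ≤ r
  rX : 1 ≤ r * X

lemma PK.cross {d : ℕ} {p : (Fin d → ℤ) → ℝ} {X r : ℝ} (h : PK p X r) (i j : Fin d) (hij : i ≠ j) :
    HasSum (fun x => (x i : ℝ) * (x j : ℝ) * p x) 0 := by
  have hs : Summable (fun x => (x i : ℝ) * (x j : ℝ) * p x) := by
    refine Summable.of_norm_bounded ((h.m2 i).summable.add (h.m2 j).summable) fun x => ?_
    rw [Real.norm_eq_abs, abs_mul, abs_mul, abs_of_nonneg (h.nonneg x), ← add_mul]
    refine mul_le_mul_of_nonneg_right ?_ (h.nonneg x)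
    rw [← sq_abs (x i : ℝ), ← sq_abs (x j : ℝ)]
    nlinarith [sq_nonneg (|(x i : ℝ)| - |(x j : ℝ)|), sq_nonneg (|(x i : ℝ)|), sq_nonneg (|(x j : ℝ)|)]
  have e : (∑' x, (x i : ℝ) * (x j : ℝ) * p x) = - ∑' x, (x i : ℝ) * (x j : ℝ) * p x := by
    have hinv : Function.Involutive (fun x : Fin d → ℤ => Function.update x i (- x i)) := by
      intro x; simp
    rw [← tsum_neg, ← (hinv.toPerm).tsum_eq]
    refine tsum_congr fun x => ?_
    simp [Function.Involutive.toPerm, h.flip, Function.update_of_ne (Ne.symm hij)]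
  have : (∑' x, (x i : ℝ) * (x j : ℝ) * p x) = 0 := by linarith
  rw [← this]; exact hs.hasSum

lemma PK.quad {d : ℕ} {p : (Fin d → ℤ) → ℝ} {X r : ℝ} (h : PK p X r) (t : Fin d → ℝ) :
    HasSum (fun x => (∑ i, (x i : ℝ) * t i) ^ 2 * p x) (X * ∑ i, t i ^ 2) := by
  have h1 : HasSum (fun x => ∑ i, ∑ j, (t i * t j) * ((x i : ℝ) * (x j : ℝ) * p x))
      (∑ i, ∑ j, (t i * t j) * (if i = j then X else 0)) := by
    refine hasSum_sum fun i _ => hasSum_sum fun j _ => HasSum.mul_left _ ?_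
    split_ifs with hij
    · subst hij
      refine (h.m2 i).congr_fun fun x => ?_
      ring
    · exact h.cross i j hij
  convert h1 using 1
  · ext x
    rw [sq, Finset.sum_mul_sum, Finset.sum_mul]
    refine Finset.sum_congr rfl fun i _ => ?_
    rw [Finset.sum_mul]
    refine Finset.sum_congr rfl fun j _ => ?_
    ring
  · simp only [mul_ite, mul_zero, Finset.sum_ite_eq, Finset.mem_univ, if_true]
    rw [Finset.mul_sum]
    refine Finset.sum_congr rfl fun i _ => ?_
    ring

lemma PK.upper {d : ℕ} {p : (Fin d → ℤ) → ℝ} {X r : ℝ} (h : PK p X r) (t : Fin d → ℝ) :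
    1 - ph p (fun i => (t i : UnitAddCircle)) ≤ 20 * (X * ∑ i, t i ^ 2) := by
  refine hasSum_le (fun x => ?_) (one_sub_ph h.sum _) ((h.quad t).mul_left 20)
  rw [ee_re_cos]
  have := cos_upper (∑ i, (x i : ℝ) * t i)
  nlinarith [h.nonneg x]

lemma PK.lower {d : ℕ} {p : (Fin d → ℤ) → ℝ} {X r : ℝ} (h : PK p X r) (t : Fin d → ℝ)
    (hT : 8 * d ^ 3 * r * X * (∑ i, t i ^ 2) ≤ 1) :
    4 * (X * ∑ i, t i ^ 2) ≤ 1 - ph p (fun i => (t i : UnitAddCircle)) := by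
  have hX : 0 ≤ X := (h.m2 · |>.nonneg fun x => mul_nonneg (sq_nonneg _) (h.nonneg x)) |> fun f => by
    rcases Nat.eq_zero_or_pos d with h0 | h0
    · have := h.rX; have := h.r1; nlinarith
    · exact f ⟨0, h0⟩
  set T := ∑ i, t i ^ 2 with hTd
  have hT0 : 0 ≤ T := Finset.sum_nonneg fun i _ => sq_nonneg _
  have h4 : HasSum (fun x => (d:ℝ) ^ 3 * ∑ i, t i ^ 4 * ((x i : ℝ) ^ 4 * p x))
      ((d:ℝ) ^ 3 * ∑ i, t i ^ 4 * ∑' x, ((x i : ℝ) ^ 4 * p x)) :=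
    HasSum.mul_left _ (hasSum_sum fun i _ => (h.s4 i).hasSum.mul_left _)
  have key : 8 * (X * T) - 32 * ((d:ℝ) ^ 3 * ∑ i, t i ^ 4 * ∑' x, ((x i : ℝ) ^ 4 * p x)) ≤
      1 - ph p (fun i => (t i : UnitAddCircle)) := by
    refine hasSum_le (fun x => ?_) (((h.quad t).mul_left 8).sub (h4.mul_left 32)) (one_sub_ph h.sum _)
    rw [ee_re_cos]
    have h1 := cos_lower (∑ i, (x i : ℝ) * t i)
    have h2 : (∑ i, (x i : ℝ) * t i) ^ 4 ≤ (d:ℝ) ^ 3 * ∑ i, t i ^ 4 * (x i : ℝ) ^ 4 := by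
      have a1 := sq_sum_le_card_mul_sum_sq (s := Finset.univ) (f := fun i => (x i : ℝ) * t i)
      have a2 := sq_sum_le_card_mul_sum_sq (s := Finset.univ) (f := fun i => ((x i : ℝ) * t i) ^ 2)
      simp only [Finset.card_univ, Fintype.card_fin] at a1 a2
      calc (∑ i, (x i : ℝ) * t i) ^ 4 = ((∑ i, (x i : ℝ) * t i) ^ 2) ^ 2 := by ring
        _ ≤ ((d:ℝ) * ∑ i, ((x i : ℝ) * t i) ^ 2) ^ 2 := by gcongr
        _ = (d:ℝ)^2 * (∑ i, ((x i : ℝ) * t i) ^ 2) ^ 2 := by ring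
        _ ≤ (d:ℝ)^2 * ((d:ℝ) * ∑ i, (((x i : ℝ) * t i) ^ 2) ^ 2) := by gcongr
        _ = _ := by
          rw [← mul_assoc, ← pow_succ]
          congr 1
          exact Finset.sum_congr rfl fun i _ => by ring
    have h3 : (∑ i, t i ^ 4 * ((x i : ℝ) ^ 4 * p x)) = (∑ i, t i ^ 4 * (x i : ℝ) ^ 4) * p x := by
      rw [Finset.sum_mul]; exact Finset.sum_congr rfl fun i _ => by ring
    rw [h3]
    have h5 : 0 ≤ p x := h.nonneg x
    calc _ = p x * (8 * (∑ i, (x i : ℝ) * t i) ^ 2 - 32 * ((d:ℝ) ^ 3 * ∑ i, t i ^ 4 * (x i : ℝ) ^ 4)) := by ring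
      _ ≤ _ := by
        refine mul_le_mul_of_nonneg_left ?_ h5
        linarith
  have h6 : (∑ i, t i ^ 4 * ∑' x, ((x i : ℝ) ^ 4 * p x)) ≤ r * X ^ 2 * T ^ 2 := by
    calc _ ≤ ∑ i, t i ^ 4 * (r * X ^ 2) := by
          gcongr with i _
          · exact h.m4 i
      _ = r * X ^ 2 * ∑ i, (t i ^ 2) ^ 2 := by
          rw [Finset.mul_sum]; exact Finset.sum_congr rfl fun i _ => by ring
      _ ≤ r * X ^ 2 * T ^ 2 := by
          have := h.r1
          gcongr
          exact Finset.sum_sq_le_sq_sum_of_nonneg (fun i _ => sq_nonneg _)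
  have h7 : (d:ℝ) ^ 3 * ∑ i, t i ^ 4 * ∑' x, ((x i : ℝ) ^ 4 * p x) ≤ (d:ℝ)^3 * (r * X ^ 2 * T ^ 2) := by
    gcongr
  have h8 : 32 * ((d:ℝ)^3 * (r * X ^ 2 * T ^ 2)) ≤ 4 * (X * T) := by
    calc _ = 4 * (X * T) * (8 * d ^ 3 * r * X * T) := by ring
      _ ≤ 4 * (X * T) * 1 := by gcongr
      _ = _ := by ring
  linarith

lemma lift_exists {d : ℕ} (θ : Tor d) : ∃ t : Fin d → ℝ, (∀ i, |t i| = ‖θ i‖) ∧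
    θ = fun i => (t i : UnitAddCircle) := by
  have : ∀ i, ∃ t : ℝ, |t| = ‖θ i‖ ∧ θ i = (t : UnitAddCircle) := by
    intro i
    obtain ⟨s, hs⟩ := QuotientAddGroup.mk_surjective (θ i)
    refine ⟨s - round s, ?_, ?_⟩
    · rw [← hs]; exact (UnitAddCircle.norm_eq).symm
    · rw [← hs]
      have : ((round s : ℝ) : UnitAddCircle) = 0 := by
        rw [AddCircle.coe_eq_zero_iff]; exact ⟨round s, by simp⟩
      rw [AddCircle.coe_sub, this, sub_zero]
  choose t h1 h2 using this
  exact ⟨t, h1, funext h2⟩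

end SX
end

section
open MeasureTheory Blackbox
namespace SX

def hfun (α s : ℝ) : ℝ → ℝ≥0∞ := (Set.Icc 0 s).indicator fun u => ENNReal.ofReal u ^ (-α)

lemma hfun_meas (α s : ℝ) : Measurable (hfun α s) := by
  unfold hfun
  refine Measurable.indicator ?_ measurableSet_Icc
  fun_prop

lemma hfun_int {α s : ℝ} (hα : α < 1) (hs : 0 ≤ s) :
    ∫⁻ u, hfun α s u = ENNReal.ofReal (s ^ (1 - α) / (1 - α)) := by
  unfold hfun
  rw [lintegral_indicator measurableSet_Icc, ← restrict_Ioc_eq_restrict_Icc]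
  have h1 : ∫⁻ u in Set.Ioc 0 s, ENNReal.ofReal u ^ (-α) =
      ∫⁻ u in Set.Ioc 0 s, ENNReal.ofReal (u ^ (-α)) := by
    refine setLIntegral_congr_fun measurableSet_Ioc fun u hu => ?_
    exact ENNReal.ofReal_rpow_of_pos hu.1
  have h2 : IntegrableOn (fun u : ℝ => u ^ (-α)) (Set.Ioc 0 s) := by
    have := (intervalIntegral.intervalIntegrable_rpow' (a := 0) (b := s) (by linarith : -1 < -α))
    rwa [intervalIntegrable_iff_integrableOn_Ioc_of_le hs] at this
  rw [h1, ← ofReal_integral_eq_lintegral_ofReal h2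
    ((ae_restrict_mem measurableSet_Ioc).mono fun u hu => Real.rpow_nonneg hu.1.le _),
    ← intervalIntegral.integral_of_le hs, integral_rpow (Or.inl (by linarith)),
    Real.zero_rpow (by linarith)]
  congr 1
  rw [sub_zero]; ring_nf

def gfun (α s : ℝ) (v : UnitAddCircle) : ℝ≥0∞ := hfun α s ‖v‖

lemma gfun_meas (α s : ℝ) : Measurable (gfun α s) :=
  (hfun_meas α s).comp continuous_norm.measurable

lemma gfun_int {α s : ℝ} (hα : α ≤ 5/6) (hs : 0 ≤ s) :
    ∫⁻ v, gfun α s v ≤ ENNReal.ofReal (12 * s ^ (1 - α)) := by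
  rw [← UnitAddCircle.lintegral_preimage (-1/2)]
  calc ∫⁻ a in Set.Ioc (-1/2 : ℝ) (-1/2+1), gfun α s (a : UnitAddCircle)
      ≤ ∫⁻ a in Set.Ioc (-1/2 : ℝ) (-1/2+1), (hfun α s a + hfun α s (-a)) := by
        refine setLIntegral_mono (((hfun_meas α s)).add ((hfun_meas α s).comp measurable_neg)) fun a ha => ?_
        have : ‖(a : UnitAddCircle)‖ = |a| := by
          rw [AddCircle.norm_coe_eq_abs_iff 1 (by norm_num)]
          rw [abs_le]; norm_num
          constructor <;> linarith [ha.1, ha.2]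
        unfold gfun
        rw [this]
        rcases abs_choice a with h | h <;> rw [h]
        · exact le_self_add
        · exact le_add_self
    _ ≤ ∫⁻ a, (hfun α s a + hfun α s (-a)) := setLIntegral_le_lintegral _ _
    _ = 2 * ENNReal.ofReal (s ^ (1 - α) / (1 - α)) := by
        rw [lintegral_add_left (hfun_meas α s), lintegral_neg_eq_self, hfun_int (by linarith) hs, two_mul]
    _ ≤ _ := by
        rw [show (2 : ℝ≥0∞) = ENNReal.ofReal 2 by simp, ← ENNReal.ofReal_mul (by norm_num)]
        apply ENNReal.ofReal_le_ofReal
        have h0 : 0 ≤ s ^ (1 - α) := Real.rpow_nonneg hs _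
        rw [mul_div_assoc', div_le_iff₀ (by linarith)]
        nlinarith

instance circProb : IsProbabilityMeasure (volume : Measure UnitAddCircle) :=
  ⟨UnitAddCircle.measure_univ⟩

lemma lint_prod {d : ℕ} (g : UnitAddCircle → ℝ≥0∞) (hg : Measurable g) :
    ∫⁻ θ : Tor d, ∏ i, g (θ i) = (∫⁻ v, g v) ^ d := by
  have hi := ProbabilityTheory.iIndepFun_pi (μ := fun _ : Fin d => (volume : Measure UnitAddCircle))
    (X := fun _ => g) (fun _ => hg.aemeasurable)
  have := ProbabilityTheory.lintegral_prod_eq_prod_lintegral_of_indepFun (Finset.univ) _ hi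
    (fun i => hg.comp (measurable_pi_apply i))
  rw [volume_pi, this]
  have e : ∀ i : Fin d, ∫⁻ ω : Tor d, g (ω i) ∂(Measure.pi fun _ : Fin d => (volume : Measure UnitAddCircle)) = ∫⁻ v, g v := by
    intro i
    exact (measurePreserving_eval (fun _ : Fin d => (volume : Measure UnitAddCircle)) i).lintegral_comp hg
  simp [e]

def box (d : ℕ) (ρ : ℝ) : Set (Tor d) := Set.univ.pi fun _ => Metric.closedBall 0 ρ

lemma box_meas (d : ℕ) (ρ : ℝ) : MeasurableSet (box d ρ) :=
  MeasurableSet.univ_pi fun _ => Metric.isClosed_closedBall.measurableSet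

lemma box_vol (d : ℕ) {ρ : ℝ} (hρ : 0 ≤ ρ) (h : ρ ≤ 1/4) :
    volume (box d ρ) = ENNReal.ofReal ((2 * ρ) ^ d) := by
  unfold box
  rw [volume_pi_pi]
  simp only [AddCircle.volume_closedBall, Finset.prod_const, Finset.card_univ, Fintype.card_fin]
  rw [min_eq_right (by linarith), ENNReal.ofReal_pow (by positivity)]

end SX
end

section
open MeasureTheory Blackbox
namespace SX

def C1c (d : ℕ) (r : ℝ) : ℝ := 12 ^ d * (16 * (d:ℝ) ^ 4 * r) ^ (5/4 : ℝ)

lemma young_inv {ε y : ℝ} (hε : 0 < ε) (hy : 0 < y) :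
    ((ε + y)⁻¹) ^ 2 ≤ ε ^ (-3/4 : ℝ) * y ^ (-5/4 : ℝ) := by
  have h := Real.geom_mean_le_arith_mean2_weighted (w₁ := 3/8) (w₂ := 5/8) (by norm_num) (by norm_num)
    hε.le hy.le (by norm_num)
  have h1 : ε ^ (3/8 : ℝ) * y ^ (5/8 : ℝ) ≤ ε + y := by linarith
  have hp : 0 < ε ^ (3/8 : ℝ) * y ^ (5/8 : ℝ) := by positivity
  have h2 : (ε + y)⁻¹ ≤ (ε ^ (3/8 : ℝ) * y ^ (5/8 : ℝ))⁻¹ := inv_anti₀ hp h1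
  have h3 : ((ε + y)⁻¹) ^ 2 ≤ ((ε ^ (3/8 : ℝ) * y ^ (5/8 : ℝ))⁻¹) ^ 2 := by gcongr
  refine h3.trans (le_of_eq ?_)
  rw [mul_inv, mul_pow, ← Real.rpow_neg hε.le, ← Real.rpow_neg hy.le, ← Real.rpow_natCast,
    ← Real.rpow_natCast, ← Real.rpow_mul hε.le, ← Real.rpow_mul hy.le]
  norm_num

lemma prod_rpow_le {d : ℕ} (hd : 0 < d) (v : Fin d → ℝ) (hv : ∀ i, 0 < v i) :
    (∑ i, v i ^ 2) ^ (-5/4 : ℝ) ≤ ∏ i, v i ^ (-(5/(2*d)) : ℝ) := by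
  have hne : Nonempty (Fin d) := ⟨⟨0, hd⟩⟩
  set T := ∑ i, v i ^ 2 with hT
  have hT0 : 0 < T := Finset.sum_pos (fun i _ => by have := hv i; positivity) Finset.univ_nonempty
  have hi : ∀ i, T ^ (-5/(4*d) : ℝ) ≤ v i ^ (-(5/(2*d)) : ℝ) := by
    intro i
    have h1 : v i ^ 2 ≤ T := Finset.single_le_sum (f := fun i => v i ^ 2) (fun j _ => sq_nonneg _) (Finset.mem_univ i)
    have h2 : T ^ (-5/(4*d) : ℝ) ≤ (v i ^ 2) ^ (-5/(4*d) : ℝ) := by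
      apply Real.rpow_le_rpow_of_nonpos (by have := hv i; positivity) h1
      rw [neg_div]; have : (0:ℝ) ≤ 5/(4*d) := by positivity
      linarith
    refine h2.trans (le_of_eq ?_)
    rw [← Real.rpow_natCast, ← Real.rpow_mul (hv i).le]
    congr 1
    push_cast
    have : (d:ℝ) ≠ 0 := by positivity
    field_simp; norm_num
  calc T ^ (-5/4 : ℝ) = ∏ i : Fin d, T ^ (-5/(4*d) : ℝ) := by
        rw [Finset.prod_const, Finset.card_univ, Fintype.card_fin, ← Real.rpow_natCast, ← Real.rpow_mul hT0.le]
        congr 1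
        have : (d:ℝ) ≠ 0 := by positivity
        field_simp
    _ ≤ _ := Finset.prod_le_prod (fun i _ => by positivity) fun i _ => hi i

lemma L2int {d : ℕ} (hd : 2 < d) {p : (Fin d → ℤ) → ℝ} {X r : ℝ} (h : PK p X r) (a : ℝ)
    (ha : 1/2 ≤ a) (ha1 : a < 1) :
    ∫⁻ θ, ENNReal.ofReal (ph p θ ^ 2 * ((1 - a * ph p θ)⁻¹) ^ 2) ≤
      ENNReal.ofReal (16 + 32 * (C1c d r * (1 - a) ^ (-3/4 : ℝ))) * ∫⁻ θ, ENNReal.ofReal (ph p θ ^ 2) := by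
  have hd0 : 0 < d := by omega
  have hdR : (3:ℝ) ≤ d := by exact_mod_cast hd
  have hr := h.r1
  have hrX := h.rX
  have hX : 0 < X := by
    by_contra hc; push Not at hc
    nlinarith
  set ε := 1 - a with hε
  have hε0 : 0 < ε := by linarith
  set Q : ℝ := 32 * d ^ 4 * r * X with hQ
  have hd4 : (81:ℝ) ≤ (d:ℝ)^4 := by
    calc (81:ℝ) = 3^4 := by norm_num
      _ ≤ _ := by gcongr
  have hQ1 : 2592 ≤ Q := by
    calc (2592:ℝ) = 32 * 81 * 1 := by norm_num
      _ ≤ 32 * d^4 * (r * X) := by gcongr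
      _ = Q := by rw [hQ]; ring
  have hQ0 : 0 < Q := by linarith
  set ρ : ℝ := (Real.sqrt Q)⁻¹ with hρ
  have hsq : 4 ≤ Real.sqrt Q := by
    rw [Real.le_sqrt (by norm_num) hQ0.le]; linarith
  have hρ0 : 0 < ρ := by positivity
  have hρ4 : ρ ≤ 1/4 := by
    rw [hρ, inv_le_comm₀ (by linarith) (by norm_num)]; norm_num; exact hsq
  have hρ2 : ρ ^ 2 = Q⁻¹ := by rw [hρ, inv_pow, Real.sq_sqrt hQ0.le]
  have hρQ : ρ ^ 2 * Q = 1 := by rw [hρ2]; exact inv_mul_cancel₀ hQ0.ne'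
  set s := 2 * ρ with hs
  set α : ℝ := 5/(2*d) with hα
  have hα56 : α ≤ 5/6 := by
    rw [hα]; gcongr; linarith
  have hα0 : 0 < α := by positivity
  set K : ℝ := ε ^ (-3/4 : ℝ) * (X/2) ^ (-5/4 : ℝ) with hK
  have hK0 : 0 < K := by positivity
  set κ : Tor d → ℝ≥0∞ := fun u => ENNReal.ofReal K * ∏ i, gfun α s (u i) with hκd
  have hκm : Measurable κ := by
    have := gfun_meas α s
    fun_prop
  have hbup : ∀ θ ∈ box d ρ, 1 - ph p θ ≤ 1/8 := by
    intro θ hθ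
    obtain ⟨t, ht1, ht2⟩ := lift_exists θ
    have hu := h.upper t
    rw [← ht2] at hu
    have hT : ∑ i, t i ^ 2 ≤ d * ρ ^ 2 := by
      calc ∑ i, t i ^ 2 ≤ ∑ i : Fin d, ρ ^ 2 := by
            refine Finset.sum_le_sum fun i _ => ?_
            rw [← sq_abs, ht1]
            have := hθ i (Set.mem_univ i)
            rw [mem_closedBall_zero_iff] at this
            gcongr
        _ = _ := by simp
    have h3 : X * ∑ i, t i ^ 2 ≤ X * (d * ρ ^ 2) := by gcongr
    have h4 : 160 * (X * (d * ρ^2)) ≤ ρ^2 * Q := by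
      have : 160 * d ≤ 32 * (d:ℝ) ^ 4 * r := by
        have : 5 * (d:ℝ) ≤ d^4 := by nlinarith [sq_nonneg ((d:ℝ)), mul_pos (by linarith : (0:ℝ) < d) (by linarith : (0:ℝ) < d), pow_le_pow_left₀ (by norm_num) hdR 3]
        nlinarith
      calc 160 * (X * (d * ρ^2)) = 160 * d * (X * ρ^2) := by ring
        _ ≤ 32 * (d:ℝ) ^ 4 * r * (X * ρ ^ 2) := by gcongr
        _ = _ := by rw [hQ]; ring
    linarith
  have hκ : ∀ θ ∈ box d ρ, ∀ η ∈ box d ρ,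
      ENNReal.ofReal (((1 - a + (1 - ph p (θ - η)) / 8)⁻¹) ^ 2) ≤ κ (θ - η) := by
    intro θ hθ η hη
    have hu : ∀ i, ‖(θ - η) i‖ ≤ s := by
      intro i
      have h1 := hθ i (Set.mem_univ i)
      have h2 := hη i (Set.mem_univ i)
      rw [mem_closedBall_zero_iff] at h1 h2
      calc ‖(θ - η) i‖ ≤ ‖θ i‖ + ‖η i‖ := norm_sub_le _ _
        _ ≤ s := by rw [hs]; linarith
    generalize θ - η = u at hu
    have hg : ∀ i, gfun α s (u i) = ENNReal.ofReal ‖u i‖ ^ (-α) := by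
      intro i
      unfold gfun hfun
      rw [Set.indicator_of_mem]
      exact ⟨norm_nonneg _, hu i⟩
    simp only [hκd, hg]
    by_cases hz : ∃ i, u i = 0
    · obtain ⟨i, hi⟩ := hz
      have : ∏ i, ENNReal.ofReal ‖u i‖ ^ (-α) = ⊤ := by
        rw [← Finset.mul_prod_erase _ _ (Finset.mem_univ i), hi]
        have h1 : ENNReal.ofReal ‖(0 : UnitAddCircle)‖ ^ (-α) = ⊤ := by
          simp [ENNReal.zero_rpow_of_neg, hα0]
        rw [h1, ENNReal.top_mul]
        rw [Finset.prod_ne_zero_iff]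
        intro j _ h0
        rw [ENNReal.rpow_eq_zero_iff] at h0
        rcases h0 with h0 | h0
        · linarith [h0.2]
        · exact ENNReal.ofReal_ne_top h0.1
      rw [this, ENNReal.mul_top]
      · exact le_top
      · simpa using hK0
    · push Not at hz
      have hpos : ∀ i, 0 < ‖u i‖ := fun i => norm_pos_iff.mpr (hz i)
      obtain ⟨t, ht1, ht2⟩ := lift_exists u
      have hT : ∑ i, t i ^ 2 = ∑ i, ‖u i‖ ^ 2 :=
        Finset.sum_congr rfl fun i _ => by rw [← ht1, sq_abs]
      have hT2 : ∑ i, ‖u i‖ ^ 2 ≤ d * s ^ 2 := by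
        calc ∑ i, ‖u i‖ ^ 2 ≤ ∑ i : Fin d, s ^ 2 := by
              refine Finset.sum_le_sum fun i _ => ?_
              have := hu i
              gcongr
          _ = _ := by simp
      set T := ∑ i, ‖u i‖ ^ 2 with hTd
      have hT0 : 0 < T := Finset.sum_pos (fun i _ => by have := hpos i; positivity) ⟨⟨0, hd0⟩, Finset.mem_univ _⟩
      have hl := h.lower t (by
        rw [hT]
        calc 8 * d^3 * r * X * T ≤ 8 * d^3 * r * X * (d * s ^ 2) := by gcongr
          _ = ρ^2 * Q := by rw [hQ, hs]; ring
          _ ≤ 1 := hρQ.le)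
      rw [← ht2, hT] at hl
      have e : ∏ i, ENNReal.ofReal ‖u i‖ ^ (-α) = ENNReal.ofReal (∏ i, ‖u i‖ ^ (-α)) := by
        rw [ENNReal.ofReal_prod_of_nonneg (fun i _ => by positivity)]
        exact Finset.prod_congr rfl fun i _ => ENNReal.ofReal_rpow_of_pos (hpos i)
      rw [e, ← ENNReal.ofReal_mul hK0.le]
      apply ENNReal.ofReal_le_ofReal
      calc ((ε + (1 - ph p u) / 8)⁻¹) ^ 2 ≤ ((ε + X/2 * T)⁻¹)^2 := by
            have h5 : ε + X/2*T ≤ ε + (1 - ph p u) / 8 := by linarith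
            have h6 : 0 < ε + X/2*T := by positivity
            have h7 : 0 < ε + (1 - ph p u) / 8 := by linarith
            have := inv_anti₀ h6 h5
            have h8 := inv_pos.mpr h7
            gcongr
        _ ≤ ε ^ (-3/4 : ℝ) * (X/2*T) ^ (-5/4 : ℝ) := young_inv hε0 (by positivity)
        _ = K * T ^ (-5/4 : ℝ) := by
            rw [Real.mul_rpow (by positivity) hT0.le, hK]; ring
        _ ≤ K * ∏ i, ‖u i‖ ^ (-α) := by
            gcongr
            exact prod_rpow_le hd0 _ hpos
  have hcore := core (ph p) (ph_continuous h.sum.summable) (abs_ph_le h.nonneg h.sum)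
    (ph_sub h.nonneg h.sum) (box d ρ) (box_meas d ρ) hbup a ha ha1 κ hκm hκ
  have hvol := box_vol d hρ0.le hρ4
  have hs0 : 0 < s := by positivity
  have hint : ∫⁻ u, κ u ≤ volume (box d ρ) * ENNReal.ofReal (C1c d r * ε ^ (-3/4 : ℝ)) := by
    have h1 : ∫⁻ u, κ u = ENNReal.ofReal K * (∫⁻ v, gfun α s v) ^ d := by
      rw [hκd, lintegral_const_mul, lint_prod _ (gfun_meas α s)]
      have := gfun_meas α s
      fun_prop
    rw [h1, hvol, ← ENNReal.ofReal_mul (by positivity)]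
    calc ENNReal.ofReal K * (∫⁻ v, gfun α s v) ^ d
        ≤ ENNReal.ofReal K * (ENNReal.ofReal (12 * s ^ (1 - α))) ^ d := by
          gcongr; exact gfun_int hα56 hs0.le
      _ = ENNReal.ofReal (K * (12 * s ^ (1 - α)) ^ d) := by
          rw [ENNReal.ofReal_mul hK0.le, ENNReal.ofReal_pow (by positivity)]
      _ ≤ _ := by
          apply ENNReal.ofReal_le_ofReal
          apply le_of_eq
          have e1 : (s ^ (1 - α)) ^ d = s ^ d * (s ^ 2) ^ (-5/4 : ℝ) := by
            rw [← Real.rpow_natCast, ← Real.rpow_natCast s d, ← Real.rpow_natCast s 2, ← Real.rpow_mul hs0.le,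
              ← Real.rpow_mul hs0.le, ← Real.rpow_add hs0]
            congr 1
            rw [hα]
            have : (d:ℝ) ≠ 0 := by positivity
            push_cast
            field_simp
            ring
          have e2 : (X / 2) ^ (-5/4 : ℝ) * (s ^ 2) ^ (-5/4 : ℝ) = (16 * (d:ℝ) ^ 4 * r) ^ (5/4 : ℝ) := by
            rw [← Real.mul_rpow (by positivity) (by positivity)]
            have : X / 2 * s ^ 2 = (16 * (d:ℝ) ^ 4 * r)⁻¹ := by
              rw [hs, mul_pow, hρ2, hQ]
              field_simp
              norm_num
            rw [this, Real.inv_rpow (by positivity), ← Real.rpow_neg (by positivity)]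
            norm_num
          rw [mul_pow, e1, hK, C1c, ← e2, hs]
          ring
  have hC0 : 0 ≤ C1c d r * ε ^ (-3/4 : ℝ) := by unfold C1c; positivity
  have hv0 : volume (box d ρ) ≠ 0 := by
    rw [hvol]; simpa using by positivity
  have hvt : volume (box d ρ) ≠ ⊤ := measure_ne_top _ _
  refine (ENNReal.mul_le_mul_iff_right hv0 hvt).mp (hcore.trans ?_)
  rw [← mul_assoc]
  gcongr
  calc 16 * volume (box d ρ) + 32 * ∫⁻ θ, κ θ
      ≤ 16 * volume (box d ρ) + 32 * (volume (box d ρ) * ENNReal.ofReal (C1c d r * ε ^ (-3/4 : ℝ))) := by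
        gcongr
    _ = _ := by
        rw [ENNReal.ofReal_add (by norm_num) (by positivity), ENNReal.ofReal_mul (by norm_num : (0:ℝ) ≤ 32)]
        simp
        ring

end SX
end

section
open MeasureTheory Blackbox
namespace SX

lemma parsevalE {d : ℕ} {u : (Fin d → ℤ) → ℝ} (hu : Summable u) :
    ∫⁻ θ : Tor d, ENNReal.ofReal (‖hat u θ‖ ^ 2) = ENNReal.ofReal (∑' x, u x ^ 2) := by
  rw [← parseval hu, ofReal_integral_eq_lintegral_ofReal]
  · refine Continuous.integrable_of_hasCompactSupport ?_ (HasCompactSupport.of_compactSpace _)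
    exact ((hat_continuous hu).norm).pow 2
  · exact Filter.Eventually.of_forall fun θ => sq_nonneg _

lemma C1c_ge {d : ℕ} (hd : 2 < d) {r : ℝ} (hr : 1 ≤ r) : 1 ≤ C1c d r := by
  unfold C1c
  have hdR : (1:ℝ) ≤ d := by exact_mod_cast (by omega : 1 ≤ d)
  have h1 : (1:ℝ) ≤ 12 ^ d := one_le_pow₀ (by norm_num)
  have h2 : (1:ℝ) ≤ (16 * (d:ℝ) ^ 4 * r) ^ (5/4 : ℝ) := by
    apply Real.one_le_rpow _ (by norm_num)
    have : (1:ℝ) ≤ (d:ℝ)^4 := one_le_pow₀ hdR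
    nlinarith
  nlinarith

lemma summable_rconv {d : ℕ} {u v : (Fin d → ℤ) → ℝ} (hu : Summable u) (hv : Summable v) :
    Summable (rconv u v) := by
  have hs : Summable fun q : (Fin d → ℤ) × (Fin d → ℤ) => u q.1 * v q.2 :=
    summable_mul_of_summable_norm (f := u) (g := v) hu.norm hv.norm
  have h2 := ((shearEquiv d).summable_iff (f := fun q : (Fin d → ℤ) × (Fin d → ℤ) => u q.1 * v q.2)).mpr hs
  exact h2.prod

lemma L2step {d : ℕ} (hd : 2 < d) {p : (Fin d → ℤ) → ℝ} {X r : ℝ} (h : PK p X r) (a : ℝ)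
    (ha : 0 ≤ a) (ha1 : a < 1) (V : (Fin d → ℤ) → ℝ) (hV : Summable V)
    (hVe : ∀ x, V x = p x + a * rconv p V x) :
    ENNReal.ofReal (∑' x, V x ^ 2) ≤
      ENNReal.ofReal (48 * C1c d r * (1 - a) ^ (-3/4 : ℝ)) * ENNReal.ofReal (∑' x, p x ^ 2) := by
  have hp := h.sum.summable
  rw [← parsevalE hV, ← parsevalE hp]
  have hle : ∀ θ, ph p θ ≤ 1 := fun θ => (abs_le.mp (abs_ph_le h.nonneg h.sum θ)).2
  have hge : ∀ θ, -1 ≤ ph p θ := fun θ => (abs_le.mp (abs_ph_le h.nonneg h.sum θ)).1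
  have hpos : ∀ θ, 0 < 1 - a * ph p θ := fun θ => by nlinarith [hle θ]
  have hh : ∀ θ, hat V θ = hat p θ + a * (hat p θ * hat V θ) := by
    intro θ
    rw [← hat_rconv hp hV]
    unfold hat
    rw [← tsum_mul_left, ← (summable_hat hp θ).tsum_add]
    · refine tsum_congr fun x => ?_
      rw [hVe x]; push_cast; ring
    · exact (summable_hat (summable_rconv hp hV) θ).mul_left _
  have hn : ∀ θ, ‖hat V θ‖ ^ 2 = ph p θ ^ 2 * ((1 - a * ph p θ)⁻¹) ^ 2 := by
    intro θ
    have h1 := hh θ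
    rw [hat_eq_ph h.even] at h1
    have hne : ((1 - a * ph p θ : ℝ) : ℂ) ≠ 0 := by exact_mod_cast (hpos θ).ne'
    have h2 : hat V θ = ((ph p θ * (1 - a * ph p θ)⁻¹ : ℝ) : ℂ) := by
      push_cast at hne ⊢
      rw [eq_mul_inv_iff_mul_eq₀ hne]
      linear_combination h1
    rw [h2, Complex.norm_real, Real.norm_eq_abs, sq_abs, mul_pow]
  have hn2 : ∀ θ, ‖hat p θ‖ ^ 2 = ph p θ ^ 2 := by
    intro θ
    rw [hat_eq_ph h.even, Complex.norm_real, Real.norm_eq_abs, sq_abs]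
  simp only [hn, hn2]
  have hC := C1c_ge hd h.r1
  have hε : 1 ≤ (1 - a) ^ (-3/4 : ℝ) :=
    Real.one_le_rpow_of_pos_of_le_one_of_nonpos (by linarith) (by linarith) (by norm_num)
  have hCε : 1 ≤ C1c d r * (1 - a) ^ (-3/4 : ℝ) := by nlinarith
  by_cases ha2 : 1/2 ≤ a
  · refine (L2int hd h a ha2 ha1).trans ?_
    gcongr
    linarith
  · push Not at ha2
    rw [← lintegral_const_mul _ (by
      have := (ph_continuous hp).measurable
      fun_prop)]
    refine lintegral_mono fun θ => ?_
    dsimp only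
    rw [← ENNReal.ofReal_mul (by linarith)]
    apply ENNReal.ofReal_le_ofReal
    have : (1 - a * ph p θ)⁻¹ ≤ 2 := by
      rw [inv_le_comm₀ (hpos θ) (by norm_num)]
      nlinarith [hle θ, hge θ]
    have h0 := inv_pos.mpr (hpos θ)
    have : ((1 - a * ph p θ)⁻¹)^2 ≤ 48 * C1c d r * (1 - a) ^ (-3/4 : ℝ) := by nlinarith
    nlinarith [sq_nonneg (ph p θ)]

/-- convolution in `ℝ≥0∞` -/
def conv {d : ℕ} (u v : (Fin d → ℤ) → ℝ≥0∞) (x : Fin d → ℤ) : ℝ≥0∞ := ∑' y, u y * v (x - y)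

lemma tsum_shift {d : ℕ} (f : (Fin d → ℤ) → ℝ≥0∞) (y : Fin d → ℤ) : ∑' x, f (x - y) = ∑' x, f x :=
  (Equiv.subRight y).tsum_eq f

lemma sum_conv {d : ℕ} (u v : (Fin d → ℤ) → ℝ≥0∞) :
    ∑' x, conv u v x = (∑' x, u x) * ∑' x, v x := by
  unfold conv
  rw [ENNReal.tsum_comm]
  simp_rw [ENNReal.tsum_mul_left, tsum_shift]
  rw [ENNReal.tsum_mul_right]

lemma conv_mono {d : ℕ} {u v w : (Fin d → ℤ) → ℝ≥0∞} (h : ∀ x, v x ≤ w x) (x : Fin d → ℤ) :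
    conv u v x ≤ conv u w x := by
  unfold conv
  gcongr with y
  exact h _

lemma conv_add {d : ℕ} (u v w : (Fin d → ℤ) → ℝ≥0∞) (x : Fin d → ℤ) :
    conv u (fun x => v x + w x) x = conv u v x + conv u w x := by
  unfold conv
  rw [← ENNReal.tsum_add]
  simp_rw [mul_add]

lemma conv_smul {d : ℕ} (c : ℝ≥0∞) (u v : (Fin d → ℤ) → ℝ≥0∞) (x : Fin d → ℤ) :
    conv u (fun x => c * v x) x = c * conv u v x := by
  unfold conv
  rw [← ENNReal.tsum_mul_left]
  exact tsum_congr fun y => by ring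

lemma conv_tsum {d : ℕ} (u : (Fin d → ℤ) → ℝ≥0∞) (v : ℕ → (Fin d → ℤ) → ℝ≥0∞) (x : Fin d → ℤ) :
    conv u (fun x => ∑' k, v k x) x = ∑' k, conv u (v k) x := by
  unfold conv
  rw [ENNReal.tsum_comm]
  exact tsum_congr fun y => ENNReal.tsum_mul_left.symm

def pw {d : ℕ} (u w : (Fin d → ℤ) → ℝ≥0∞) : ℕ → (Fin d → ℤ) → ℝ≥0∞
  | 0 => w
  | n + 1 => conv u (pw u w n)

lemma sum_pw {d : ℕ} (u w : (Fin d → ℤ) → ℝ≥0∞) (n : ℕ) :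
    ∑' x, pw u w n x = (∑' x, u x) ^ n * ∑' x, w x := by
  induction n with
  | zero => simp [pw]
  | succ n ih => rw [pw, sum_conv, ih, pow_succ]; ring

/-- the resolvent -/
def VV {d : ℕ} (D : ℝ≥0∞) (f : (Fin d → ℤ) → ℝ≥0∞) (x : Fin d → ℤ) : ℝ≥0∞ :=
  ∑' k : ℕ, D ^ k * pw f f k x

lemma VV_eq {d : ℕ} (D : ℝ≥0∞) (f : (Fin d → ℤ) → ℝ≥0∞) (x : Fin d → ℤ) :
    VV D f x = f x + D * conv f (VV D f) x := by
  have h1 : conv f (VV D f) x = ∑' k, conv f (fun x => D ^ k * pw f f k x) x :=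
    conv_tsum f (fun k x => D ^ k * pw f f k x) x
  rw [h1, VV, tsum_eq_zero_add' ENNReal.summable, ← ENNReal.tsum_mul_left]
  congr 1
  · simp [pw]
  · refine tsum_congr fun k => ?_
    rw [conv_smul, pw, pow_succ]; ring

lemma sum_VV {d : ℕ} (D : ℝ≥0∞) (f : (Fin d → ℤ) → ℝ≥0∞) (hf : ∑' x, f x ≠ ⊤)
    (h : D * ∑' x, f x < 1) : ∑' x, VV D f x ≠ ⊤ := by
  unfold VV
  rw [ENNReal.tsum_comm]
  simp_rw [ENNReal.tsum_mul_left, sum_pw, ← mul_assoc, ← mul_pow]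
  rw [ENNReal.tsum_mul_right, ENNReal.tsum_geometric]
  refine ENNReal.mul_ne_top ?_ hf
  rw [ENNReal.inv_ne_top]
  exact (tsub_pos_of_lt h).ne'

lemma le_VV {d : ℕ} (D : ℝ≥0∞) (f g : (Fin d → ℤ) → ℝ≥0∞)
    (h : D * ∑' x, f x < 1) (hg : ∑' x, g x ≠ ⊤)
    (hle : ∀ x, g x ≤ f x + D * conv f g x) (x : Fin d → ℤ) : g x ≤ VV D f x := by
  have key : ∀ N : ℕ, ∀ x, g x ≤ VV D f x + D ^ N * pw f g N x := by
    intro N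
    induction N with
    | zero => intro x; simp [pw]
    | succ N ih =>
      intro x
      calc g x ≤ f x + D * conv f g x := hle x
        _ ≤ f x + D * conv f (fun x => VV D f x + D ^ N * pw f g N x) x := by
          gcongr; exact conv_mono ih x
        _ = (f x + D * conv f (VV D f) x) + D ^ (N+1) * conv f (pw f g N) x := by
          rw [conv_add, conv_smul, pow_succ]; ring
        _ = _ := by rw [← VV_eq, pw]
  have key2 : ∀ N : ℕ, g x ≤ VV D f x + (D * ∑' x, f x) ^ N * ∑' x, g x := by
    intro N
    refine (key N x).trans ?_
    rw [mul_pow, mul_assoc, ← sum_pw]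
    gcongr
    exact ENNReal.le_tsum x
  have hl : Filter.Tendsto (fun N : ℕ => VV D f x + (D * ∑' x, f x) ^ N * ∑' x, g x) Filter.atTop
      (nhds (VV D f x + 0 * ∑' x, g x)) := by
    refine Filter.Tendsto.add tendsto_const_nhds ?_
    exact ENNReal.Tendsto.mul_const (ENNReal.tendsto_pow_atTop_nhds_zero_of_lt_one h) (Or.inr hg)
  have := ge_of_tendsto' hl key2
  simpa using this

lemma L2E {d : ℕ} (hd : 2 < d) (f g : (Fin d → ℤ) → ℝ≥0∞) (χ Δ X r : ℝ) (hχ : 0 < χ) (hΔ : 0 ≤ Δ)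
    (hf : ∑' x, f x = ENNReal.ofReal χ) (hg : ∑' x, g x ≠ ⊤)
    (hle : ∀ x, g x ≤ f x + ENNReal.ofReal Δ * conv f g x)
    (ha : Δ * χ < 1) (h : PK (fun x => (f x).toReal / χ) X r) :
    ∑' x, g x ^ 2 ≤ ENNReal.ofReal (48 * C1c d r * (1 - Δ * χ) ^ (-3/4 : ℝ)) * ∑' x, f x ^ 2 := by
  set D := ENNReal.ofReal Δ with hD
  have hDf : D * ∑' x, f x < 1 := by
    rw [hf, hD, ← ENNReal.ofReal_mul hΔ]; simpa using ha
  have hft : ∑' x, f x ≠ ⊤ := by rw [hf]; exact ENNReal.ofReal_ne_top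
  have hfx : ∀ x, f x ≠ ⊤ := ENNReal.ne_top_of_tsum_ne_top hft
  have hVt := sum_VV D f hft hDf
  have hVx : ∀ x, VV D f x ≠ ⊤ := ENNReal.ne_top_of_tsum_ne_top hVt
  have hct : ∀ x, conv f (VV D f) x ≠ ⊤ := by
    apply ENNReal.ne_top_of_tsum_ne_top
    rw [sum_conv]; exact ENNReal.mul_ne_top hft hVt
  set V : (Fin d → ℤ) → ℝ := fun x => (VV D f x).toReal / χ with hV
  have hVs : Summable V := (ENNReal.summable_toReal hVt).div_const χ
  have hVe : ∀ x, V x = (f x).toReal / χ + (Δ * χ) * rconv (fun x => (f x).toReal / χ) V x := by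
    intro x
    have h1 : rconv (fun x => (f x).toReal / χ) V x = (conv f (VV D f) x).toReal / χ ^ 2 := by
      unfold rconv conv
      rw [ENNReal.tsum_toReal_eq (fun y => ENNReal.mul_ne_top (hfx _) (hVx _)), ← tsum_div_const]
      refine tsum_congr fun y => ?_
      rw [ENNReal.toReal_mul, hV]
      field_simp
    rw [h1, hV]
    dsimp only
    rw [VV_eq, ENNReal.toReal_add (hfx x) (ENNReal.mul_ne_top ENNReal.ofReal_ne_top (hct x)),
      ENNReal.toReal_mul, hD, ENNReal.toReal_ofReal hΔ]
    field_simp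
  have := L2step hd h (Δ * χ) (by positivity) ha V hVs hVe
  have conv1 : ∀ u : (Fin d → ℤ) → ℝ≥0∞, (∑' x, u x ≠ ⊤) →
      ENNReal.ofReal (∑' x, ((u x).toReal / χ) ^ 2) * ENNReal.ofReal (χ ^ 2) = ∑' x, u x ^ 2 := by
    intro u hu
    have hux := ENNReal.ne_top_of_tsum_ne_top hu
    have hs : Summable fun x => (u x).toReal ^ 2 := by
      have h1 := ENNReal.summable_toReal hu
      refine Summable.of_nonneg_of_le (fun x => sq_nonneg _) (fun x => ?_) (h1.mul_left ((∑' x, u x).toReal))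
      rw [sq]
      gcongr
      exact ENNReal.le_tsum x
    have e : (∑' x, ((u x).toReal / χ) ^ 2) = (∑' x, (u x).toReal ^ 2) / χ ^ 2 := by
      rw [← tsum_div_const]; exact tsum_congr fun x => by rw [div_pow]
    rw [← ENNReal.ofReal_mul (tsum_nonneg fun x => sq_nonneg _), e, div_mul_cancel₀ _ (by positivity),
      ENNReal.ofReal_tsum_of_nonneg (fun x => sq_nonneg _) hs]
    refine tsum_congr fun x => ?_
    rw [ENNReal.ofReal_pow ENNReal.toReal_nonneg, ENNReal.ofReal_toReal (hux x)]
  calc ∑' x, g x ^ 2 ≤ ∑' x, VV D f x ^ 2 := by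
        gcongr with x; exact le_VV D f g hDf hg hle x
    _ = ENNReal.ofReal (∑' x, V x ^ 2) * ENNReal.ofReal (χ ^ 2) := (conv1 _ hVt).symm
    _ ≤ (ENNReal.ofReal (48 * C1c d r * (1 - Δ * χ) ^ (-3/4 : ℝ)) *
        ENNReal.ofReal (∑' x, ((f x).toReal / χ) ^ 2)) * ENNReal.ofReal (χ ^ 2) := by gcongr
    _ = _ := by rw [mul_assoc, conv1 _ hft]

end SX
end

section
open MeasureTheory Blackbox
namespace SX

/-- coordinate moments -/
def mom {d : ℕ} (k : ℕ) (i : Fin d) (u : (Fin d → ℤ) → ℝ≥0∞) : ℝ≥0∞ :=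
  ∑' x, ENNReal.ofReal ((x i : ℝ) ^ k) * u x

lemma mom_mono {d : ℕ} (k : ℕ) (i : Fin d) {u v : (Fin d → ℤ) → ℝ≥0∞} (h : ∀ x, u x ≤ v x) :
    mom k i u ≤ mom k i v := by
  unfold mom
  gcongr with x
  exact h x

lemma mom_add {d : ℕ} (k : ℕ) (i : Fin d) (u v : (Fin d → ℤ) → ℝ≥0∞) :
    mom k i (fun x => u x + v x) = mom k i u + mom k i v := by
  unfold mom
  rw [← ENNReal.tsum_add]
  simp_rw [mul_add]

lemma mom_smul {d : ℕ} (k : ℕ) (i : Fin d) (c : ℝ≥0∞) (u : (Fin d → ℤ) → ℝ≥0∞) :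
    mom k i (fun x => c * u x) = c * mom k i u := by
  unfold mom
  rw [← ENNReal.tsum_mul_left]
  exact tsum_congr fun y => by ring

lemma sum_weight_conv {d : ℕ} (W : (Fin d → ℤ) → ℝ≥0∞) (u v : (Fin d → ℤ) → ℝ≥0∞) :
    ∑' x, W x * conv u v x = ∑' y, ∑' z, u y * v z * W (y + z) := by
  unfold conv
  simp_rw [← ENNReal.tsum_mul_left]
  rw [ENNReal.tsum_comm]
  refine tsum_congr fun y => ?_
  rw [← tsum_shift (fun z => u y * v z * W (y + z)) y]
  refine tsum_congr fun x => ?_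
  rw [add_sub_cancel]; ring

lemma sum_weight_conv2 {d : ℕ} (W : (Fin d → ℤ) → ℝ≥0∞) (u v : (Fin d → ℤ) → ℝ≥0∞)
    (hv : ∀ x, v (-x) = v x) :
    2 * ∑' x, W x * conv u v x = ∑' y, ∑' z, u y * v z * (W (y + z) + W (y - z)) := by
  rw [sum_weight_conv, two_mul, ← ENNReal.tsum_add]
  refine tsum_congr fun y => ?_
  simp_rw [mul_add]
  rw [ENNReal.tsum_add]
  congr 1
  rw [← (Equiv.neg (Fin d → ℤ)).tsum_eq]
  refine tsum_congr fun z => ?_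
  simp [hv, sub_eq_add_neg]

lemma two_cancel {a b : ℝ≥0∞} (h : 2 * a = 2 * b) : a = b :=
  (ENNReal.mul_right_inj (by norm_num) (by norm_num)).mp h

lemma tsum_two {d : ℕ} (u v : (Fin d → ℤ) → ℝ≥0∞) :
    ∑' y, ∑' z, u y * v z = (∑' y, u y) * ∑' z, v z := by
  simp_rw [ENNReal.tsum_mul_left]
  rw [ENNReal.tsum_mul_right]

lemma mom2_conv {d : ℕ} (i : Fin d) (u v : (Fin d → ℤ) → ℝ≥0∞) (hv : ∀ x, v (-x) = v x) :
    mom 2 i (conv u v) = mom 2 i u * (∑' x, v x) + (∑' x, u x) * mom 2 i v := by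
  apply two_cancel
  unfold mom
  rw [sum_weight_conv2 _ _ _ hv, ← tsum_two, ← tsum_two, mul_add, ← ENNReal.tsum_mul_left,
    ← ENNReal.tsum_mul_left, ← ENNReal.tsum_add]
  refine tsum_congr fun y => ?_
  rw [← ENNReal.tsum_mul_left, ← ENNReal.tsum_mul_left, ← ENNReal.tsum_add]
  refine tsum_congr fun z => ?_
  have : ENNReal.ofReal ((((y + z) i : ℤ) : ℝ) ^ 2) + ENNReal.ofReal ((((y - z) i : ℤ) : ℝ) ^ 2) =
      2 * ENNReal.ofReal ((y i : ℝ) ^ 2) + 2 * ENNReal.ofReal ((z i : ℝ) ^ 2) := by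
    rw [show (2:ℝ≥0∞) = ENNReal.ofReal 2 by simp, ← ENNReal.ofReal_mul (by positivity), ← ENNReal.ofReal_mul (by positivity),
      ← ENNReal.ofReal_add (by positivity) (by positivity), ← ENNReal.ofReal_add (by positivity) (by positivity)]
    congr 1
    simp only [Pi.add_apply, Pi.sub_apply]
    push_cast; ring
  rw [this]; ring

lemma mom4_conv {d : ℕ} (i : Fin d) (u v : (Fin d → ℤ) → ℝ≥0∞) (hv : ∀ x, v (-x) = v x) :
    mom 4 i (conv u v) = mom 4 i u * (∑' x, v x) + 6 * (mom 2 i u * mom 2 i v) +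
      (∑' x, u x) * mom 4 i v := by
  apply two_cancel
  unfold mom
  rw [sum_weight_conv2 _ _ _ hv, ← tsum_two, ← tsum_two, ← tsum_two, mul_add, mul_add,
    ← ENNReal.tsum_mul_left, ← ENNReal.tsum_mul_left, ← ENNReal.tsum_mul_left, ← ENNReal.tsum_mul_left,
    ← ENNReal.tsum_add, ← ENNReal.tsum_add]
  refine tsum_congr fun y => ?_
  rw [← ENNReal.tsum_mul_left, ← ENNReal.tsum_mul_left, ← ENNReal.tsum_mul_left, ← ENNReal.tsum_mul_left,
    ← ENNReal.tsum_add, ← ENNReal.tsum_add]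
  refine tsum_congr fun z => ?_
  have : ENNReal.ofReal ((((y + z) i : ℤ) : ℝ) ^ 4) + ENNReal.ofReal ((((y - z) i : ℤ) : ℝ) ^ 4) =
      2 * ENNReal.ofReal ((y i : ℝ) ^ 4) + 12 * (ENNReal.ofReal ((y i : ℝ) ^ 2) * ENNReal.ofReal ((z i : ℝ) ^ 2))
        + 2 * ENNReal.ofReal ((z i : ℝ) ^ 4) := by
    rw [show (2:ℝ≥0∞) = ENNReal.ofReal 2 by simp, show (12:ℝ≥0∞) = ENNReal.ofReal 12 by simp,
      ← ENNReal.ofReal_mul (by positivity), ← ENNReal.ofReal_mul (by positivity), ← ENNReal.ofReal_mul (by positivity),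
      ← ENNReal.ofReal_mul (by positivity),
      ← ENNReal.ofReal_add (by positivity) (by positivity), ← ENNReal.ofReal_add (by positivity) (by positivity),
      ← ENNReal.ofReal_add (by positivity) (by positivity)]
    congr 1
    simp only [Pi.add_apply, Pi.sub_apply]
    push_cast; ring
  rw [this]; ring

lemma mom2_le_mom4 {d : ℕ} (i : Fin d) (u : (Fin d → ℤ) → ℝ≥0∞) : mom 2 i u ≤ mom 4 i u := by
  unfold mom
  refine ENNReal.tsum_le_tsum fun x => mul_le_mul' (ENNReal.ofReal_le_ofReal ?_) le_rfl
  by_cases h : x i = 0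
  · simp [h]
  · have h1 : (1:ℝ) ≤ (x i : ℝ) ^ 2 := by
      have : (1:ℤ) ≤ (x i) ^ 2 := by
        have := sq_nonneg (x i)
        have h2 : (x i) ^ 2 ≠ 0 := pow_ne_zero 2 h
        omega
      exact_mod_cast this
    nlinarith

lemma mom_young {d : ℕ} (i : Fin d) (u : (Fin d → ℤ) → ℝ≥0∞) (τ : ℝ) (hτ : 0 < τ) :
    2 * mom 2 i u ≤ ENNReal.ofReal τ * (∑' x, u x) + ENNReal.ofReal τ⁻¹ * mom 4 i u := by
  unfold mom
  rw [← ENNReal.tsum_mul_left, ← ENNReal.tsum_mul_left, ← ENNReal.tsum_mul_left, ← ENNReal.tsum_add]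
  gcongr with x
  rw [← mul_assoc, ← mul_assoc, ← add_mul]
  gcongr
  rw [show (2:ℝ≥0∞) = ENNReal.ofReal 2 by simp, ← ENNReal.ofReal_mul (by positivity), ← ENNReal.ofReal_mul (by positivity),
    ← ENNReal.ofReal_add (by positivity) (by positivity)]
  apply ENNReal.ofReal_le_ofReal
  set y := (x i : ℝ) ^ 2
  have e : (x i : ℝ) ^ 4 = y ^ 2 := by simp only [y]; ring
  rw [e]
  have h : 0 ≤ τ⁻¹ * (τ - y) ^ 2 := by positivity
  have h2 : τ⁻¹ * (τ - y) ^ 2 = τ + τ⁻¹ * y ^ 2 - 2 * y := by field_simp; ring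
  linarith

set_option maxHeartbeats 1000000 in
/-- pure arithmetic of the moment step -/
lemma moment_arith {χ l a η r F2 F4 G2 G4 D0 D2 D4 : ℝ} (hχ : 0 < χ) (hl : 32 ≤ l) (hr : 48 ≤ r)
    (hη : 0 ≤ η) (hη2 : η * (2 * l * r + 24 * l ^ 2) ≤ 1)
    (ha0 : 0 ≤ a) (hη1 : 1 - η ≤ l * (1 - a))
    (hF2 : 0 < F2) (hF4 : F4 * χ ≤ r * F2 ^ 2) (hF40 : 0 ≤ F4) (hG2 : 0 ≤ G2) (hG4 : 0 ≤ G4)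
    (hD0 : 0 ≤ D0) (hD2 : 0 ≤ D2) (hD4 : 0 ≤ D4)
    (e0 : l * χ + D0 = χ + a * (l * χ))
    (e2 : G2 + D2 = F2 + a / χ * (F2 * (l * χ) + χ * G2))
    (e4 : G4 + D4 = F4 + a / χ * (F4 * (l * χ) + 6 * (F2 * G2) + χ * G4))
    (hy : ∀ τ > 0, 2 * D2 ≤ τ * D0 + τ⁻¹ * D4) :
    0 < G2 ∧ G4 * (l * χ) ≤ r * G2 ^ 2 := by
  have hM : 0 < 2 * l * r + 24 * l ^ 2 := by positivity
  have hη12 : η ≤ 1/2 := by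
    have h1 : 2 ≤ 2 * l * r + 24 * l ^ 2 := by nlinarith
    nlinarith
  have e2' : G2 * (1 - a) + D2 = F2 * (1 + a * l) := by
    have : a / χ * (F2 * (l * χ) + χ * G2) = a * (F2 * l + G2) := by field_simp
    rw [this] at e2; linarith
  have e4' : (G4 * (1 - a) + D4) * χ = F4 * (1 + a * l) * χ + 6 * a * (F2 * G2) := by
    have : a / χ * (F4 * (l * χ) + 6 * (F2 * G2) + χ * G4) * χ = a * (F4 * (l * χ) + 6 * (F2 * G2) + χ * G4) := by field_simp
    have h3 := congrArg (· * χ) e4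
    simp only [add_mul, this] at h3
    nlinarith
  have hl1a : l * (1 - a) ≤ 1 := by
    have : χ * (l * (1 - a)) ≤ χ * 1 := by nlinarith
    exact le_of_mul_le_mul_left this hχ
  have ha1 : a ≤ 1 := by nlinarith
  have h1al : 1 + a * l ≤ 2 * l := by nlinarith
  have hG2u : G2 ≤ 4 * l ^ 2 * F2 := by
    have h1 : G2 * (1/2) ≤ G2 * (l * (1 - a)) := by gcongr; linarith
    have h2 : G2 * (l * (1 - a)) ≤ l * (F2 * (1 + a * l)) := by nlinarith
    have h3 : l * (F2 * (1 + a * l)) ≤ l * (F2 * (2 * l)) := by gcongr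
    nlinarith
  have hD4u : D4 * χ ≤ (2 * l * r + 24 * l ^ 2) * F2 ^ 2 := by
    have h1 : D4 * χ ≤ F4 * (1 + a * l) * χ + 6 * a * (F2 * G2) := by
      have : 0 ≤ G4 * (1 - a) * χ := by
        have : 0 ≤ 1 - a := by linarith
        positivity
      nlinarith
    have h2 : F4 * (1 + a * l) * χ ≤ 2 * l * (r * F2 ^ 2) := by
      calc F4 * (1 + a * l) * χ = (1 + a * l) * (F4 * χ) := by ring
        _ ≤ 2 * l * (r * F2 ^ 2) := by gcongr
    have h3 : 6 * a * (F2 * G2) ≤ 6 * 1 * (F2 * (4 * l ^ 2 * F2)) := by gcongr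
    linarith
  set Mc := 2 * l * r + 24 * l ^ 2 with hMc
  have hD0u : D0 ≤ η * χ := by nlinarith
  have hD2u : D2 ≤ F2 := by
    have h := hy (F2 * Mc / χ) (by positivity)
    have h1 : F2 * Mc / χ * D0 ≤ F2 := by
      calc F2 * Mc / χ * D0 ≤ F2 * Mc / χ * (η * χ) := by gcongr
        _ = F2 * (η * Mc) := by field_simp
        _ ≤ F2 * 1 := by gcongr
        _ = F2 := mul_one _
    have h2 : (F2 * Mc / χ)⁻¹ * D4 ≤ F2 := by
      rw [inv_mul_le_iff₀ (by positivity), div_mul_eq_mul_div, le_div_iff₀ hχ]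
      nlinarith
    linarith
  have hG2l : l ^ 2 * F2 ≤ 2 * G2 := by
    have h1 : F2 * l ≤ G2 * (1 - a) + D2 := by rw [e2']; gcongr; nlinarith
    have h2 : G2 * (l * (1 - a)) ≤ G2 * 1 := by gcongr
    have h3 : l * (F2 * l) ≤ G2 + l * F2 := by nlinarith
    nlinarith
  refine ⟨by nlinarith [mul_pos (by positivity : 0 < l ^ 2) hF2], ?_⟩
  have hG4u : G4 * χ ≤ 4 * l ^ 2 * (r * F2 ^ 2) + 12 * l * (F2 * G2) := by
    have h1 : G4 * χ * (1/2) ≤ G4 * χ * (l * (1 - a)) := by gcongr; linarith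
    have h2 : G4 * χ * (l * (1 - a)) ≤ l * (F4 * (1 + a * l) * χ + 6 * a * (F2 * G2)) := by
      rw [← e4']
      have : 0 ≤ l * (D4 * χ) := by positivity
      nlinarith
    have h3 : F4 * (1 + a * l) * χ ≤ 2 * l * (r * F2 ^ 2) := by
      calc F4 * (1 + a * l) * χ = (1 + a * l) * (F4 * χ) := by ring
        _ ≤ 2 * l * (r * F2 ^ 2) := by gcongr
    have h4 : 6 * a * (F2 * G2) ≤ 6 * 1 * (F2 * G2) := by gcongr
    have h5 : l * (F4 * (1 + a * l) * χ + 6 * a * (F2 * G2)) ≤ l * (2 * l * (r * F2 ^ 2) + 6 * 1 * (F2 * G2)) := by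
      gcongr
    nlinarith
  have h6 : (l ^ 2 * F2) ^ 2 ≤ (2 * G2) ^ 2 := by gcongr
  have h7 : l ^ 2 * F2 * G2 ≤ 2 * G2 * G2 := by gcongr
  have h8 : l ^ 3 * F2 ^ 2 * 32 ≤ 4 * G2 ^ 2 := by
    have : l ^ 3 * F2 ^ 2 * 32 ≤ l ^ 3 * F2 ^ 2 * l := by gcongr
    nlinarith
  calc G4 * (l * χ) = l * (G4 * χ) := by ring
    _ ≤ l * (4 * l ^ 2 * (r * F2 ^ 2) + 12 * l * (F2 * G2)) := by gcongr
    _ = 4 * r * (l ^ 3 * F2 ^ 2) + 12 * (l ^ 2 * F2 * G2) := by ring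
    _ ≤ 4 * r * (G2 ^ 2 / 8) + 12 * (2 * G2 * G2) := by
      gcongr
      linarith
    _ ≤ r * G2 ^ 2 := by nlinarith [sq_nonneg G2]

lemma moment_step {d : ℕ} (i : Fin d) (f g : (Fin d → ℤ) → ℝ≥0∞) {χ l Δ η r F2 F4 : ℝ}
    (hχ : 0 < χ) (hl : 32 ≤ l) (hr : 48 ≤ r)
    (hη : 0 ≤ η) (hη2 : η * (2 * l * r + 24 * l ^ 2) ≤ 1)
    (hΔ : 0 ≤ Δ) (hη1 : 1 - η ≤ l * (1 - Δ * χ)) (hge : ∀ x, g (-x) = g x)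
    (hf0 : ∑' x, f x = ENNReal.ofReal χ) (hg0 : ∑' x, g x = ENNReal.ofReal (l * χ))
    (hle : ∀ x, g x ≤ f x + ENNReal.ofReal Δ * conv f g x)
    (hF2 : 0 < F2) (hf2 : mom 2 i f = ENNReal.ofReal F2)
    (hF40 : 0 ≤ F4) (hf4 : mom 4 i f = ENNReal.ofReal F4) (hF4 : F4 * χ ≤ r * F2 ^ 2)
    (hg4 : mom 4 i g ≠ ⊤) :
    ∃ G2 G4 : ℝ, 0 < G2 ∧ 0 ≤ G4 ∧ mom 2 i g = ENNReal.ofReal G2 ∧ mom 4 i g = ENNReal.ofReal G4 ∧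
      G4 * (l * χ) ≤ r * G2 ^ 2 := by
  have hg2 : mom 2 i g ≠ ⊤ := ne_top_of_le_ne_top hg4 (mom2_le_mom4 i g)
  set G2 := (mom 2 i g).toReal with hG2
  set G4 := (mom 4 i g).toReal with hG4
  have eG2 : mom 2 i g = ENNReal.ofReal G2 := (ENNReal.ofReal_toReal hg2).symm
  have eG4 : mom 4 i g = ENNReal.ofReal G4 := (ENNReal.ofReal_toReal hg4).symm
  have hG20 : 0 ≤ G2 := ENNReal.toReal_nonneg
  have hG40 : 0 ≤ G4 := ENNReal.toReal_nonneg
  set D : (Fin d → ℤ) → ℝ≥0∞ := fun x => (f x + ENNReal.ofReal Δ * conv f g x) - g x with hD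
  have hDe : ∀ x, g x + D x = f x + ENNReal.ofReal Δ * conv f g x := fun x => by
    rw [hD]; exact add_tsub_cancel_of_le (hle x)
  have hDf : (fun x => g x + D x) = fun x => f x + ENNReal.ofReal Δ * conv f g x := funext hDe
  have s0 : (∑' x, g x) + ∑' x, D x = ENNReal.ofReal (χ + Δ * (χ * (l * χ))) := by
    rw [← ENNReal.tsum_add, hDf, ENNReal.tsum_add, ENNReal.tsum_mul_left, sum_conv, hf0, hg0,
      ← ENNReal.ofReal_mul (by positivity), ← ENNReal.ofReal_mul (by positivity),
      ← ENNReal.ofReal_add (by positivity) (by positivity)]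
  have s2 : mom 2 i g + mom 2 i D = ENNReal.ofReal (F2 + Δ * (F2 * (l * χ) + χ * G2)) := by
    rw [← mom_add, hDf, mom_add, mom_smul, mom2_conv _ _ _ hge, hf0, hg0, hf2, eG2,
      ← ENNReal.ofReal_mul (by positivity), ← ENNReal.ofReal_mul (by positivity),
      ← ENNReal.ofReal_add (by positivity) (by positivity),
      ← ENNReal.ofReal_mul (by positivity),
      ← ENNReal.ofReal_add (by positivity) (by positivity)]
  have s4 : mom 4 i g + mom 4 i D = ENNReal.ofReal (F4 + Δ * (F4 * (l * χ) + 6 * (F2 * G2) + χ * G4)) := by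
    rw [← mom_add, hDf, mom_add, mom_smul, mom4_conv _ _ _ hge, hf0, hg0, hf2, hf4, eG2, eG4,
      show (6:ℝ≥0∞) = ENNReal.ofReal 6 by simp,
      ← ENNReal.ofReal_mul (by positivity), ← ENNReal.ofReal_mul (by positivity),
      ← ENNReal.ofReal_mul (by positivity), ← ENNReal.ofReal_mul (by positivity),
      ← ENNReal.ofReal_add (by positivity) (by positivity),
      ← ENNReal.ofReal_add (by positivity) (by positivity),
      ← ENNReal.ofReal_mul (by positivity),
      ← ENNReal.ofReal_add (by positivity) (by positivity)]
  have t0 : ∑' x, D x ≠ ⊤ := ne_top_of_le_ne_top (by rw [s0]; exact ENNReal.ofReal_ne_top) le_add_self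
  have t2 : mom 2 i D ≠ ⊤ := ne_top_of_le_ne_top (by rw [s2]; exact ENNReal.ofReal_ne_top) le_add_self
  have t4 : mom 4 i D ≠ ⊤ := ne_top_of_le_ne_top (by rw [s4]; exact ENNReal.ofReal_ne_top) le_add_self
  have r0 := congrArg ENNReal.toReal s0
  have r2 := congrArg ENNReal.toReal s2
  have r4 := congrArg ENNReal.toReal s4
  rw [ENNReal.toReal_add (by rw [hg0]; exact ENNReal.ofReal_ne_top) t0, hg0, ENNReal.toReal_ofReal (by positivity),
    ENNReal.toReal_ofReal (by positivity)] at r0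
  rw [ENNReal.toReal_add hg2 t2, ENNReal.toReal_ofReal (by positivity)] at r2
  rw [ENNReal.toReal_add hg4 t4, ENNReal.toReal_ofReal (by positivity)] at r4
  have := moment_arith (χ := χ) (l := l) (a := Δ * χ) (η := η) (r := r) (F2 := F2) (F4 := F4)
    (G2 := G2) (G4 := G4) (D0 := (∑' x, D x).toReal) (D2 := (mom 2 i D).toReal) (D4 := (mom 4 i D).toReal)
    hχ hl hr hη hη2 (by positivity) hη1 hF2 hF4 hF40 hG20 hG40 ENNReal.toReal_nonneg
    ENNReal.toReal_nonneg ENNReal.toReal_nonneg (by rw [r0]; ring)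
    (by rw [r2, mul_div_cancel_right₀ _ hχ.ne']) (by rw [r4, mul_div_cancel_right₀ _ hχ.ne']) ?_
  · exact ⟨G2, G4, this.1, hG40, eG2, eG4, this.2⟩
  · intro τ hτ
    have h := ENNReal.toReal_mono ?_ (mom_young i D τ hτ)
    · rw [ENNReal.toReal_mul, ENNReal.toReal_add, ENNReal.toReal_mul, ENNReal.toReal_mul,
        ENNReal.toReal_ofReal hτ.le, ENNReal.toReal_ofReal (by positivity)] at h
      · simpa using h
      · exact ENNReal.mul_ne_top ENNReal.ofReal_ne_top t0
      · exact ENNReal.mul_ne_top ENNReal.ofReal_ne_top t4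
    · exact ENNReal.add_ne_top.mpr ⟨ENNReal.mul_ne_top ENNReal.ofReal_ne_top t0, ENNReal.mul_ne_top ENNReal.ofReal_ne_top t4⟩

end SX
end

section
open MeasureTheory Blackbox
namespace SX

lemma tsum_pi_prod (w : ℤ → ℝ≥0∞) (d : ℕ) :
    ∑' x : Fin d → ℤ, ∏ i, w (x i) = (∑' n, w n) ^ d := by
  induction d with
  | zero => simp [tsum_fintype]
  | succ n ih =>
    rw [← (Fin.consEquiv (fun _ => ℤ)).tsum_eq]
    have e : ∀ p : ℤ × (Fin n → ℤ), ∏ i, w ((Fin.consEquiv (fun _ => ℤ)) p i)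
        = (fun a b => w a * ∏ i, w (b i)) p.1 p.2 := by
      intro p
      simp [Fin.consEquiv, Fin.prod_univ_succ]
    rw [tsum_congr e]
    have := ENNReal.tsum_prod (f := fun (a : ℤ) (b : Fin n → ℤ) => w a * ∏ i, w (b i))
    rw [this]
    simp_rw [ENNReal.tsum_mul_left, ih]
    rw [ENNReal.tsum_mul_right, pow_succ]; ring

lemma natAbs_le_supNorm {d : ℕ} (x : Fin d → ℤ) (i : Fin d) : |(x i : ℝ)| ≤ supNorm x := by
  unfold supNorm
  rw [← Int.cast_abs, Int.abs_eq_natAbs]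
  have := Finset.le_sup (f := fun i => (x i).natAbs) (Finset.mem_univ i)
  exact_mod_cast this

lemma supNorm_nonneg {d : ℕ} (x : Fin d → ℤ) : 0 ≤ supNorm x := by
  unfold supNorm; positivity

lemma tsum_exp_ne_top (d : ℕ) (C c : ℝ) (hC : 0 < C) (hc : 0 < c) :
    ∑' x : Fin d → ℤ, ENNReal.ofReal (C * Real.exp (-c * supNorm x)) ≠ ⊤ := by
  rcases Nat.eq_zero_or_pos d with h0 | hd
  · subst h0
    rw [tsum_fintype]
    simp
  set b := c / d with hb
  have hb0 : 0 < b := by positivity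
  set w : ℤ → ℝ≥0∞ := fun n => ENNReal.ofReal (Real.exp (-b * |(n:ℝ)|)) with hw
  have hwt : ∑' n, w n ≠ ⊤ := by
    have hs : Summable fun n : ℤ => Real.exp (-b * |(n:ℝ)|) := by
      have h1 : Summable fun n : ℕ => Real.exp (-b * n) := by
        have := Real.summable_exp_nat_mul_iff.mpr (neg_lt_zero.mpr hb0)
        refine this.congr fun n => ?_
        rw [mul_comm]
      refine Summable.of_nat_of_neg ?_ ?_
      · simpa using h1
      · simpa using h1
    rw [← ENNReal.ofReal_tsum_of_nonneg (fun n => (Real.exp_pos _).le) hs]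
    exact ENNReal.ofReal_ne_top
  refine ne_top_of_le_ne_top (b := ENNReal.ofReal C * (∑' n, w n) ^ d)
    (ENNReal.mul_ne_top ENNReal.ofReal_ne_top (ENNReal.pow_ne_top hwt)) ?_
  rw [← tsum_pi_prod, ← ENNReal.tsum_mul_left]
  refine ENNReal.tsum_le_tsum fun x => ?_
  rw [hw, ← ENNReal.ofReal_prod_of_nonneg (fun i _ => (Real.exp_pos _).le), ← ENNReal.ofReal_mul hC.le,
    ← Real.exp_sum]
  apply ENNReal.ofReal_le_ofReal
  gcongr
  calc -c * supNorm x = ∑ i : Fin d, (-b * supNorm x) := by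
        simp [hb]; field_simp
    _ ≤ ∑ i, (-b * |(x i : ℝ)|) := by
        refine Finset.sum_le_sum fun i _ => ?_
        have := natAbs_le_supNorm x i
        nlinarith

lemma tsum_exp4_ne_top (d : ℕ) (i : Fin d) (C c : ℝ) (hC : 0 < C) (hc : 0 < c) :
    ∑' x : Fin d → ℤ, ENNReal.ofReal ((x i : ℝ) ^ 4) * ENNReal.ofReal (C * Real.exp (-c * supNorm x)) ≠ ⊤ := by
  refine ne_top_of_le_ne_top (tsum_exp_ne_top d (24 * (2/c)^4 * C) (c/2) (by positivity) (by positivity)) ?_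
  refine ENNReal.tsum_le_tsum fun x => ?_
  rw [← ENNReal.ofReal_mul (by positivity)]
  apply ENNReal.ofReal_le_ofReal
  have h0 := supNorm_nonneg x
  have h1 := Real.pow_div_factorial_le_exp (c/2 * supNorm x) (by positivity) 4
  have h2 : (x i : ℝ) ^ 4 ≤ supNorm x ^ 4 := by
    have : (x i : ℝ) ^ 4 = |(x i : ℝ)| ^ 4 := by rw [pow_abs, abs_of_nonneg (by positivity)]
    rw [this]
    have := natAbs_le_supNorm x i
    gcongr
  have h3 : supNorm x ^ 4 ≤ 24 * (2/c)^4 * Real.exp (c/2 * supNorm x) := by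
    have e : (c/2 * supNorm x)^4 / (Nat.factorial 4 : ℕ) * (24 * (2/c)^4) = supNorm x ^ 4 := by
      have : ((Nat.factorial 4 : ℕ) : ℝ) = 24 := by norm_num [Nat.factorial]
      rw [this]; field_simp
    rw [← e]
    have : 0 < 24 * (2/c)^4 := by positivity
    nlinarith
  have e2 : Real.exp (-(c/2) * supNorm x) = Real.exp (c/2 * supNorm x) * Real.exp (-c * supNorm x) := by
    rw [← Real.exp_add]; congr 1; ring
  rw [e2]
  have hE := Real.exp_pos (-c * supNorm x)
  calc (x i : ℝ) ^ 4 * (C * Real.exp (-c * supNorm x))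
      ≤ (24 * (2/c)^4 * Real.exp (c/2 * supNorm x)) * (C * Real.exp (-c * supNorm x)) := by
        gcongr; exact h2.trans h3
    _ = _ := by ring

lemma conv_assoc {d : ℕ} (u v w : (Fin d → ℤ) → ℝ≥0∞) (x : Fin d → ℤ) :
    conv (conv u v) w x = conv u (conv v w) x := by
  unfold conv
  simp_rw [← ENNReal.tsum_mul_right, ← ENNReal.tsum_mul_left]
  rw [ENNReal.tsum_comm]
  refine tsum_congr fun z => ?_
  rw [← tsum_shift (fun y => u z * (v y * w (x - z - y))) z]
  refine tsum_congr fun y => ?_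
  rw [show x - z - (y - z) = x - y by abel]; ring

lemma halving {φ : ℝ → ℝ} {s t K : ℝ} (hst : s ≤ t)
    (h : ∀ u v, s ≤ u → u ≤ v → v ≤ t → φ v - φ u ≤ K * (v - u) ^ 2) : φ t ≤ φ s := by
  have key : ∀ n : ℕ, ∀ u v, s ≤ u → u ≤ v → v ≤ t → φ v - φ u ≤ K * (v - u) ^ 2 / 2 ^ n := by
    intro n
    induction n with
    | zero => intro u v h1 h2 h3; simpa using h u v h1 h2 h3
    | succ n ih =>
      intro u v h1 h2 h3
      have a1 := ih u ((u + v)/2) h1 (by linarith) (by linarith)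
      have a2 := ih ((u + v)/2) v (by linarith) (by linarith) h3
      have : K * (v - u) ^ 2 / 2 ^ (n+1) = K * ((u + v)/2 - u) ^ 2 / 2 ^ n + K * (v - (u+v)/2) ^ 2 / 2 ^ n := by
        rw [pow_succ]; field_simp; ring
      linarith
  have hl : Filter.Tendsto (fun n : ℕ => K * (t - s) ^ 2 / 2 ^ n) Filter.atTop (nhds 0) := by
    have := (tendsto_pow_atTop_nhds_zero_of_lt_one (by norm_num : (0:ℝ) ≤ 1/2) (by norm_num)).const_mul (K * (t - s) ^ 2)
    simp only [mul_zero] at this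
    refine this.congr fun n => ?_
    rw [div_pow, one_pow]; ring
  have := ge_of_tendsto' hl (fun n => key n s t le_rfl hst le_rfl)
  linarith

lemma chi_lower {c : ℝ → ℝ} {β δ : ℝ} (hδ0 : 0 ≤ δ) (hδ : δ ≤ 1)
    (h1 : ∀ t, 0 ≤ t → t ≤ β → 1 ≤ c t)
    (hm : ∀ s t, 0 ≤ s → s ≤ t → t ≤ β → c s ≤ c t)
    (hu : ∀ s t, 0 ≤ s → s ≤ t → t ≤ β → c t - c s ≤ (t - s) * (c s * c t))
    (hl : ∀ s t, 0 ≤ s → s ≤ t → t ≤ β → (t - s) * (c s ^ 2 - δ * c t ^ 2) ≤ c t - c s)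
    (s t : ℝ) (hs : 0 ≤ s) (hst : s ≤ t) (ht : t ≤ β) :
    (1 - δ) * (t - s) ≤ (c s)⁻¹ - (c t)⁻¹ := by
  have := halving (φ := fun u => (c u)⁻¹ + (1 - δ) * u) (s := s) (t := t) (K := 2 * c t) hst ?_
  · linarith
  intro u v h2 h3 h4
  have cu := h1 u (by linarith) (by linarith)
  have cv := h1 v (by linarith) (by linarith)
  have cuv := hm u v (by linarith) h3 (by linarith)
  have cvt := hm v t (by linarith) h4 ht
  have a1 := hu u v (by linarith) h3 (by linarith)
  have a2 := hl u v (by linarith) h3 (by linarith)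
  set e := v - u with he
  have he0 : 0 ≤ e := by linarith
  have e1 : (c v)⁻¹ + (1 - δ) * v - ((c u)⁻¹ + (1 - δ) * u) = (1 - δ) * e - (c v - c u) / (c u * c v) := by
    rw [he]; field_simp; ring
  rw [e1]
  have e2 : e * (c u ^ 2 - δ * c v ^ 2) / (c u * c v) ≤ (c v - c u) / (c u * c v) := by gcongr
  have e3 : e * (c u ^ 2 - δ * c v ^ 2) / (c u * c v) = e * (c u / c v - δ * (c v / c u)) := by
    field_simp
  -- ratio bounds
  have r1 : c v / c u ≤ 1 + e * c t := by
    rw [div_le_iff₀ (by linarith)]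
    have : e * (c u * c v) ≤ e * (c u * c t) := by gcongr
    nlinarith
  have r2 : 1 - e * c t ≤ c u / c v := by
    rw [le_div_iff₀ (by linarith)]
    have : e * (c u * c v) ≤ e * (c t * c v) := by gcongr; linarith
    nlinarith
  have r3 : δ * (c v / c u) ≤ δ * (1 + e * c t) := by gcongr
  have r4 : δ * (e * c t) ≤ 1 * (e * c t) := by
    have : 0 ≤ e * c t := mul_nonneg he0 (by linarith)
    gcongr
  have r5 : e * (1 - δ - 2 * (e * c t)) ≤ e * (c u / c v - δ * (c v / c u)) := by
    exact mul_le_mul_of_nonneg_left (by linarith) he0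
  nlinarith

end SX
end

section
open MeasureTheory Blackbox
namespace SX
variable {d : ℕ} {c₀ : ℝ}

def jE (M : Model d c₀) (y : Fin d → ℤ) : ℝ≥0∞ := ENNReal.ofReal (M.K.J y)

lemma F_eq (M : Model d c₀) (β : ℝ) : M.F β = conv (jE M) (M.G β) := rfl

lemma sum_jE (M : Model d c₀) : ∑' y, jE M y = 1 := by
  unfold jE
  rw [← ENNReal.ofReal_tsum_of_nonneg M.K.nonneg M.K.summable, M.K.norm_one, ENNReal.ofReal_one]

lemma sum_F (M : Model d c₀) (β : ℝ) : ∑' x, M.F β x = M.chi β := by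
  rw [F_eq, sum_conv, sum_jE, one_mul]; rfl

lemma conv_comm (u v : (Fin d → ℤ) → ℝ≥0∞) (x : Fin d → ℤ) : conv u v x = conv v u x := by
  unfold conv
  rw [← (Equiv.subLeft x).tsum_eq]
  refine tsum_congr fun y => ?_
  simp [mul_comm]

lemma I1G (M : Model d c₀) {s t : ℝ} (hs : 0 ≤ s) (hst : s ≤ t) (ht : ENNReal.ofReal t < M.βc)
    (x : Fin d → ℤ) : M.G t x ≤ M.G s x + ENNReal.ofReal (t - s) * conv (M.G s) (M.F t) x := by
  refine (M.I1 hs hst ht x).trans (le_of_eq ?_)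
  congr 2
  have := ENNReal.tsum_prod (f := fun (a b : Fin d → ℤ) => M.G s a * ENNReal.ofReal (M.K.J b) * M.G t (x - a - b))
  rw [this]
  unfold conv Model.F
  refine tsum_congr fun a => ?_
  rw [← ENNReal.tsum_mul_left]
  exact tsum_congr fun b => by ring

lemma I1F (M : Model d c₀) {s t : ℝ} (hs : 0 ≤ s) (hst : s ≤ t) (ht : ENNReal.ofReal t < M.βc)
    (x : Fin d → ℤ) : M.F t x ≤ M.F s x + ENNReal.ofReal (t - s) * conv (M.F s) (M.F t) x := by
  calc M.F t x = conv (jE M) (M.G t) x := by rw [← F_eq]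
    _ ≤ conv (jE M) (fun x => M.G s x + ENNReal.ofReal (t - s) * conv (M.G s) (M.F t) x) x :=
        conv_mono (fun x => I1G M hs hst ht x) x
    _ = _ := by
        rw [conv_add, conv_smul, ← conv_assoc, ← F_eq]

lemma good_mono (M : Model d c₀) {s t : ℝ} (hst : s ≤ t) (ht : ENNReal.ofReal t < M.βc) :
    ENNReal.ofReal s < M.βc := (ENNReal.ofReal_le_ofReal hst).trans_lt ht

lemma G_mono (M : Model d c₀) {s t : ℝ} (hs : 0 ≤ s) (hst : s ≤ t) (ht : ENNReal.ofReal t < M.βc)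
    (x : Fin d → ℤ) : M.G s x ≤ M.G t x := M.mono x hs hst ht.le

lemma F_mono (M : Model d c₀) {s t : ℝ} (hs : 0 ≤ s) (hst : s ≤ t) (ht : ENNReal.ofReal t < M.βc)
    (x : Fin d → ℤ) : M.F s x ≤ M.F t x := by
  rw [F_eq, F_eq]; exact conv_mono (fun x => G_mono M hs hst ht x) x

lemma chi_ne_top (M : Model d c₀) {t : ℝ} (h0 : 0 ≤ t) (ht : ENNReal.ofReal t < M.βc) : M.chi t ≠ ⊤ := by
  obtain ⟨C, hC, c, hc, h⟩ := M.expDecay h0 ht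
  exact ne_top_of_le_ne_top (tsum_exp_ne_top d C c hC hc) (ENNReal.tsum_le_tsum h)

lemma chi_mono (M : Model d c₀) {s t : ℝ} (hs : 0 ≤ s) (hst : s ≤ t) (ht : ENNReal.ofReal t < M.βc) :
    M.chi s ≤ M.chi t := ENNReal.tsum_le_tsum fun x => G_mono M hs hst ht x

lemma chi_zero (M : Model d c₀) : M.chi 0 = 1 := by
  unfold Model.chi
  simp_rw [M.init]
  rw [tsum_ite_eq]

lemma F_zero (M : Model d c₀) : M.F 0 = jE M := by
  funext x
  rw [F_eq, conv_comm]
  unfold conv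
  simp_rw [M.init]
  rw [tsum_eq_single 0]
  · simp
  · intro y hy; simp [hy]

/-- real susceptibility -/
def cc (M : Model d c₀) (t : ℝ) : ℝ := (M.chi t).toReal

lemma ofReal_cc (M : Model d c₀) {t : ℝ} (h0 : 0 ≤ t) (ht : ENNReal.ofReal t < M.βc) :
    ENNReal.ofReal (cc M t) = M.chi t := ENNReal.ofReal_toReal (chi_ne_top M h0 ht)

lemma cc_mono (M : Model d c₀) {s t : ℝ} (hs : 0 ≤ s) (hst : s ≤ t) (ht : ENNReal.ofReal t < M.βc) :
    cc M s ≤ cc M t := ENNReal.toReal_mono (chi_ne_top M (hs.trans hst) ht) (chi_mono M hs hst ht)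

lemma cc_zero (M : Model d c₀) : cc M 0 = 1 := by rw [cc, chi_zero]; rfl

lemma one_le_cc (M : Model d c₀) {t : ℝ} (h0 : 0 ≤ t) (ht : ENNReal.ofReal t < M.βc) : 1 ≤ cc M t := by
  rw [← cc_zero M]; exact cc_mono M le_rfl h0 ht

lemma cc_upper (M : Model d c₀) {s t : ℝ} (hs : 0 ≤ s) (hst : s ≤ t) (ht : ENNReal.ofReal t < M.βc) :
    cc M t - cc M s ≤ (t - s) * (cc M s * cc M t) := by
  have h : M.chi t ≤ M.chi s + ENNReal.ofReal (t - s) * (M.chi s * M.chi t) := by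
    calc M.chi t = ∑' x, M.F t x := (sum_F M t).symm
      _ ≤ ∑' x, (M.F s x + ENNReal.ofReal (t - s) * conv (M.F s) (M.F t) x) :=
          ENNReal.tsum_le_tsum fun x => I1F M hs hst ht x
      _ = _ := by rw [ENNReal.tsum_add, ENNReal.tsum_mul_left, sum_conv, sum_F, sum_F]
  have hs' := good_mono M hst ht
  have c1 := one_le_cc M hs hs'
  have c2 := one_le_cc M (hs.trans hst) ht
  rw [← ofReal_cc M hs hs', ← ofReal_cc M (hs.trans hst) ht, ← ENNReal.ofReal_mul (by linarith),
    ← ENNReal.ofReal_mul (by linarith), ← ENNReal.ofReal_add (by linarith)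
      (mul_nonneg (by linarith) (by positivity)), ENNReal.ofReal_le_ofReal_iff
      (add_nonneg (by linarith) (mul_nonneg (by linarith) (by positivity)))] at h
  linarith

/-- symmetries -/
lemma symm_flip {α : Type*} {f : (Fin d → ℤ) → α} (h : IsSymmFun f) (i : Fin d) (x : Fin d → ℤ) :
    f (Function.update x i (- x i)) = f x := by
  rw [← h 1 (fun j => decide (j = i)) x]
  congr 1; funext j
  by_cases hj : j = i
  · subst hj; simp
  · simp [hj]

lemma symm_even {α : Type*} {f : (Fin d → ℤ) → α} (h : IsSymmFun f) (x : Fin d → ℤ) : f (-x) = f x := by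
  rw [← h 1 (fun j => true) x]
  congr 1; funext j
  simp

lemma mom_symm {f : (Fin d → ℤ) → ℝ≥0∞} (h : IsSymmFun f) (k : ℕ) (i j : Fin d) : mom k i f = mom k j f := by
  unfold mom
  rw [← (Equiv.arrowCongr (Equiv.swap i j) (Equiv.refl ℤ)).tsum_eq]
  refine tsum_congr fun x => ?_
  congr 1
  · simp [Equiv.arrowCongr]
  · rw [← h (Equiv.swap i j) (fun _ => false) x]
    congr 1; funext l
    simp [Equiv.arrowCongr]

lemma sgnperm_bij (π : Equiv.Perm (Fin d)) (e : Fin d → Bool) :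
    Function.Bijective (fun (x : Fin d → ℤ) (i : Fin d) => (if e i then (-1:ℤ) else 1) * x (π i)) := by
  constructor
  · intro x y hxy
    funext j
    have := congrFun hxy (π.symm j)
    simp only [Equiv.apply_symm_apply] at this
    split_ifs at this <;> simpa using this
  · intro y
    refine ⟨fun j => (if e (π.symm j) then (-1:ℤ) else 1) * y (π.symm j), ?_⟩
    funext i
    simp only [Equiv.symm_apply_apply]
    split_ifs <;> simp

lemma conv_symm {u v : (Fin d → ℤ) → ℝ≥0∞} (hu : IsSymmFun u) (hv : IsSymmFun v) : IsSymmFun (conv u v) := by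
  intro π e x
  unfold conv
  rw [← (Equiv.ofBijective _ (sgnperm_bij π e)).tsum_eq]
  refine tsum_congr fun y => ?_
  have h1 : (Equiv.ofBijective _ (sgnperm_bij π e)) y = fun i => (if e i then (-1:ℤ) else 1) * y (π i) := rfl
  rw [h1, hu π e y, ← hv π e (x - y)]
  congr 2
  funext i
  simp only [Pi.sub_apply]; ring

lemma jE_symm (M : Model d c₀) : IsSymmFun (jE M) := by
  intro π e x
  unfold jE; rw [M.K.symm π e x]

lemma F_symm (M : Model d c₀) (t : ℝ) : IsSymmFun (M.F t) := by
  rw [F_eq]; exact conv_symm (jE_symm M) (M.symm t)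

lemma mom4_J_le (M : Model d c₀) (i : Fin d) (k : ℕ) (hk : Even k):
    mom (k+2) i (jE M) ≤ ENNReal.ofReal (M.K.R ^ k) * mom 2 i (jE M) := by
  unfold mom
  rw [← ENNReal.tsum_mul_left]
  refine ENNReal.tsum_le_tsum fun x => ?_
  rcases (M.K.nonneg x).eq_or_lt with h | h
  · simp [jE, ← h]
  · have h1 := (natAbs_le_supNorm x i).trans (M.K.range_le x h)
    rw [← mul_assoc, ← ENNReal.ofReal_mul (pow_nonneg (by linarith [M.K.R_ge_one]) _)]
    gcongr
    rw [pow_add]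
    have h2 : (x i : ℝ) ^ k ≤ M.K.R ^ k := by
      rw [← hk.pow_abs]
      exact pow_le_pow_left₀ (abs_nonneg _) h1 k
    gcongr

lemma mom_J_ne_top (M : Model d c₀) (i : Fin d) : mom 4 i (jE M) ≠ ⊤ := by
  have h1 : mom 4 i (jE M) ≤ ENNReal.ofReal (M.K.R ^ 4) := by
    calc mom 4 i (jE M) ≤ ∑' x, ENNReal.ofReal (M.K.R ^ 4) * jE M x := by
          unfold mom
          refine ENNReal.tsum_le_tsum fun x => ?_
          rcases (M.K.nonneg x).eq_or_lt with h | h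
          · simp [jE, ← h]
          · have h1 := (natAbs_le_supNorm x i).trans (M.K.range_le x h)
            have h2 : (x i : ℝ) ^ 4 ≤ M.K.R ^ 4 := by
              rw [← (show Even 4 by decide).pow_abs]
              exact pow_le_pow_left₀ (abs_nonneg _) h1 4
            exact mul_le_mul' (ENNReal.ofReal_le_ofReal h2) le_rfl
      _ = _ := by rw [ENNReal.tsum_mul_left, sum_jE, mul_one]
  exact ne_top_of_le_ne_top ENNReal.ofReal_ne_top h1

lemma mom4_F_ne_top (M : Model d c₀) {t : ℝ} (h0 : 0 ≤ t) (ht : ENNReal.ofReal t < M.βc) (i : Fin d) :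
    mom 4 i (M.F t) ≠ ⊤ := by
  have hG4 : mom 4 i (M.G t) ≠ ⊤ := by
    obtain ⟨C, hC, c, hc, h⟩ := M.expDecay h0 ht
    refine ne_top_of_le_ne_top (tsum_exp4_ne_top d i C c hC hc) ?_
    unfold mom
    gcongr with x
    exact h x
  have hJ4 := mom_J_ne_top M i
  have hG2 := ne_top_of_le_ne_top hG4 (mom2_le_mom4 i _)
  have hJ2 := ne_top_of_le_ne_top hJ4 (mom2_le_mom4 i _)
  have hc : ∑' x, M.G t x ≠ ⊤ := chi_ne_top M h0 ht
  rw [F_eq, mom4_conv i _ _ (symm_even (M.symm t)), sum_jE, one_mul]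
  refine ENNReal.add_ne_top.mpr ⟨ENNReal.add_ne_top.mpr ⟨ENNReal.mul_ne_top hJ4 hc,
    ENNReal.mul_ne_top (by norm_num) (ENNReal.mul_ne_top hJ2 hG2)⟩, hG4⟩

end SX
end

section
open MeasureTheory Blackbox
namespace SX
variable {d : ℕ} {c₀ : ℝ}

def rE (K : (Fin d → ℤ) → ℝ) (y : Fin d → ℤ) : ℝ≥0∞ := ENNReal.ofReal (K y)

lemma trip (u : (Fin d → ℤ) → ℝ≥0∞) (K : (Fin d → ℤ) → ℝ) (hK : ∀ x, 0 ≤ K x) (x : Fin d → ℤ)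
    (hT : conv u (conv (rE K) u) x ≠ ⊤) :
    HasSum (fun p : (Fin d → ℤ) × (Fin d → ℤ) => (u p.1).toReal * K p.2 * (u (x - p.1 - p.2)).toReal)
      (conv u (conv (rE K) u) x).toReal := by
  have e : ∑' p : (Fin d → ℤ) × (Fin d → ℤ), u p.1 * ENNReal.ofReal (K p.2) * u (x - p.1 - p.2)
      = conv u (conv (rE K) u) x := by
    have := ENNReal.tsum_prod (f := fun (a b : Fin d → ℤ) => u a * ENNReal.ofReal (K b) * u (x - a - b))
    rw [this]
    unfold conv rE
    refine tsum_congr fun a => ?_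
    rw [← ENNReal.tsum_mul_left]
    exact tsum_congr fun b => by ring
  rw [← e] at hT ⊢
  have h := ENNReal.hasSum_toReal hT
  rw [← ENNReal.tsum_toReal_eq (fun p => ENNReal.ne_top_of_tsum_ne_top hT p)] at h
  refine h.congr_fun ?_
  intro p
  simp [ENNReal.toReal_mul, ENNReal.toReal_ofReal (hK _)]

lemma sum_trip (u w : (Fin d → ℤ) → ℝ≥0∞) : ∑' x, conv u (conv w u) x = (∑' x, u x) * ((∑' x, w x) * ∑' x, u x) := by
  rw [sum_conv, sum_conv]

lemma H_sum_ne_top (M : Model d c₀) {t : ℝ} (h0 : 0 ≤ t) (ht : ENNReal.ofReal t < M.βc) :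
    ∑' x, rE (M.H t) x ≠ ⊤ := by
  obtain ⟨C, hC, c, hc, h⟩ := M.H_expDecay h0 ht
  exact ne_top_of_le_ne_top (tsum_exp_ne_top d C c hC hc)
    (ENNReal.tsum_le_tsum fun x => ENNReal.ofReal_le_ofReal (h x))

lemma H_sum_eq (M : Model d c₀) {t : ℝ} (h0 : 0 ≤ t) (ht : ENNReal.ofReal t < M.βc) :
    ∑' x, rE (M.H t) x = ENNReal.ofReal (∑' x, M.H t x) := by
  have hs := ENNReal.summable_toReal (H_sum_ne_top M h0 ht)
  have : Summable (M.H t) := by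
    refine hs.congr fun x => ?_
    rw [rE, ENNReal.toReal_ofReal (M.H_nonneg t x)]
  rw [ENNReal.ofReal_tsum_of_nonneg (M.H_nonneg t) this]; rfl

def AA (M : Model d c₀) (t : ℝ) (x : Fin d → ℤ) : ℝ≥0∞ := conv (M.G t) (conv (rE M.K.J) (M.G t)) x
def BB (M : Model d c₀) (t : ℝ) (x : Fin d → ℤ) : ℝ≥0∞ := conv (M.G t) (conv (rE (M.H t)) (M.G t)) x

lemma sum_AA (M : Model d c₀) (t : ℝ) : ∑' x, AA M t x = M.chi t * M.chi t := by
  have : ∑' x, rE M.K.J x = 1 := sum_jE M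
  unfold AA; rw [sum_trip, this, one_mul]; rfl

lemma sum_BB (M : Model d c₀) (t : ℝ) : ∑' x, BB M t x = M.chi t * ((∑' x, rE (M.H t) x) * M.chi t) := by
  unfold BB; rw [sum_trip]; rfl

lemma dlow (M : Model d c₀) {t : ℝ} (h0 : 0 ≤ t) (ht : ENNReal.ofReal t < M.βc) (x : Fin d → ℤ) :
    (AA M t x).toReal - (BB M t x).toReal ≤ M.G' t x := by
  have hA : ∑' x, AA M t x ≠ ⊤ := by
    rw [sum_AA]; exact ENNReal.mul_ne_top (chi_ne_top M h0 ht) (chi_ne_top M h0 ht)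
  have hB : ∑' x, BB M t x ≠ ⊤ := by
    rw [sum_BB]
    exact ENNReal.mul_ne_top (chi_ne_top M h0 ht) (ENNReal.mul_ne_top (H_sum_ne_top M h0 ht) (chi_ne_top M h0 ht))
  have a := trip (M.G t) M.K.J M.K.nonneg x (ENNReal.ne_top_of_tsum_ne_top hA x)
  have b := trip (M.G t) (M.H t) (M.H_nonneg t) x (ENNReal.ne_top_of_tsum_ne_top hB x)
  have := M.I2 h0 ht x
  rw [show (∑' p : (Fin d → ℤ) × (Fin d → ℤ),
      (M.G t p.1).toReal * (M.K.J p.2 - M.H t p.2) * (M.G t (x - p.1 - p.2)).toReal)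
      = (AA M t x).toReal - (BB M t x).toReal from ?_] at this
  · exact this
  · refine ((a.sub b).congr_fun ?_).tsum_eq
    intro p; ring

lemma AA_mono (M : Model d c₀) {s t : ℝ} (hs : 0 ≤ s) (hst : s ≤ t) (ht : ENNReal.ofReal t < M.βc)
    (x : Fin d → ℤ) : AA M s x ≤ AA M t x := by
  unfold AA conv
  gcongr with y z
  · exact G_mono M hs hst ht y
  · exact G_mono M hs hst ht _

lemma cc_low (M : Model d c₀) {δ s t : ℝ} (hs : 0 ≤ s) (hst : s ≤ t) (ht : ENNReal.ofReal t < M.βc)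
    (hδ : 0 ≤ δ) (hH : ∀ u, 0 ≤ u → u ≤ t → ∑' x, M.H u x ≤ δ) :
    (t - s) * (cc M s ^ 2 - δ * cc M t ^ 2) ≤ cc M t - cc M s := by
  have ht0 := hs.trans hst
  have hs' := good_mono M hst ht
  have hAne : ∑' x, AA M s x ≠ ⊤ := by
    rw [sum_AA]; exact ENNReal.mul_ne_top (chi_ne_top M hs hs') (chi_ne_top M hs hs')
  have hAs : HasSum (fun x => (AA M s x).toReal) (cc M s ^ 2) := by
    have := ENNReal.hasSum_toReal hAne
    rw [← ENNReal.tsum_toReal_eq (fun p => ENNReal.ne_top_of_tsum_ne_top hAne p), sum_AA,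
      ENNReal.toReal_mul, ← sq] at this
    exact this
  have hG : ∀ u, 0 ≤ u → ENNReal.ofReal u < M.βc → HasSum (fun x => (M.G u x).toReal) (cc M u) := by
    intro u h1 h2
    have hne := chi_ne_top M h1 h2
    have := ENNReal.hasSum_toReal hne
    rw [← ENNReal.tsum_toReal_eq (fun p => ENNReal.ne_top_of_tsum_ne_top hne p)] at this
    exact this
  have key : ∀ Λ : Finset (Fin d → ℤ),
      (∑ x ∈ Λ, (AA M s x).toReal - δ * cc M t ^ 2) * (t - s) ≤ cc M t - cc M s := by
    intro Λ
    have hd : ∀ u, 0 ≤ u → u ≤ t → HasDerivWithinAt (fun v => ∑ x ∈ Λ, (M.G v x).toReal)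
        (∑ x ∈ Λ, M.G' u x) (Set.Ici 0) u := by
      intro u h1 h2
      exact HasDerivWithinAt.fun_sum fun x _ => M.deriv x h1 (good_mono M h2 ht)
    have hd2 : ∀ u ∈ interior (Set.Icc s t), HasDerivAt (fun v => ∑ x ∈ Λ, (M.G v x).toReal)
        (∑ x ∈ Λ, M.G' u x) u := by
      intro u hu
      rw [interior_Icc] at hu
      exact (hd u (hs.trans hu.1.le) hu.2.le).hasDerivAt (Ici_mem_nhds (hs.trans_lt hu.1))
    have := Convex.mul_sub_le_image_sub_of_le_deriv (convex_Icc s t)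
      (f := fun v => ∑ x ∈ Λ, (M.G v x).toReal)
      (fun u hu => ((hd u (hs.trans hu.1) hu.2).continuousWithinAt).mono
        (fun v hv => hs.trans hv.1))
      (fun u hu => (hd2 u hu).differentiableAt.differentiableWithinAt)
      (C := ∑ x ∈ Λ, (AA M s x).toReal - δ * cc M t ^ 2) ?_ s ⟨le_rfl, hst⟩ t ⟨hst, le_rfl⟩ hst
    · refine this.trans ?_
      rw [← Finset.sum_sub_distrib]
      refine sum_le_hasSum Λ ?_ ((hG t ht0 ht).sub (hG s hs hs'))
      intro x _
      rw [sub_nonneg]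
      exact ENNReal.toReal_mono (ENNReal.ne_top_of_tsum_ne_top (chi_ne_top M ht0 ht) x) (G_mono M hs hst ht x)
    · intro u hu
      rw [(hd2 u hu).deriv]
      rw [interior_Icc] at hu
      have hu0 := hs.trans hu.1.le
      have hut := good_mono M hu.2.le ht
      have hc := chi_ne_top M hu0 hut
      have hAu : ∑' x, AA M u x ≠ ⊤ := by
        rw [sum_AA]; exact ENNReal.mul_ne_top hc hc
      have hBu : ∑' x, BB M u x ≠ ⊤ := by
        rw [sum_BB]
        exact ENNReal.mul_ne_top hc (ENNReal.mul_ne_top (H_sum_ne_top M hu0 hut) hc)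
      have hB : ∑ x ∈ Λ, (BB M u x).toReal ≤ δ * cc M t ^ 2 := by
        rw [← ENNReal.toReal_sum (fun x _ => ENNReal.ne_top_of_tsum_ne_top hBu x)]
        refine (ENNReal.toReal_mono hBu (ENNReal.sum_le_tsum Λ)).trans ?_
        rw [sum_BB, H_sum_eq M hu0 hut, ENNReal.toReal_mul, ENNReal.toReal_mul, ENNReal.toReal_ofReal
          (tsum_nonneg (M.H_nonneg u))]
        have c1 := one_le_cc M hu0 hut
        have c2 := cc_mono M hu0 hu.2.le ht
        have h3 := hH u hu0 hu.2.le
        have h4 : 0 ≤ ∑' x, M.H u x := tsum_nonneg (M.H_nonneg u)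
        calc cc M u * ((∑' x, M.H u x) * cc M u) = (∑' x, M.H u x) * cc M u ^ 2 := by ring
          _ ≤ δ * cc M t ^ 2 := by gcongr
      have hA : ∑ x ∈ Λ, (AA M s x).toReal ≤ ∑ x ∈ Λ, (AA M u x).toReal := by
        refine Finset.sum_le_sum fun x _ => ENNReal.toReal_mono (ENNReal.ne_top_of_tsum_ne_top hAu x)
          (AA_mono M hs hu.1.le hut x)
      have hF : ∑ x ∈ Λ, ((AA M u x).toReal - (BB M u x).toReal) ≤ ∑ x ∈ Λ, M.G' u x :=
        Finset.sum_le_sum fun x _ => dlow M hu0 hut x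
      rw [Finset.sum_sub_distrib] at hF
      linarith
  have hlim : Filter.Tendsto (fun Λ : Finset (Fin d → ℤ) =>
      (∑ x ∈ Λ, (AA M s x).toReal - δ * cc M t ^ 2) * (t - s)) Filter.atTop
      (nhds ((cc M s ^ 2 - δ * cc M t ^ 2) * (t - s))) :=
    (Filter.Tendsto.sub_const hAs _).mul_const _
  have := le_of_tendsto' hlim key
  linarith

lemma cc_inv_low (M : Model d c₀) {δ b s t : ℝ} (hs : 0 ≤ s) (hst : s ≤ t) (htb : t ≤ b)
    (hb : ENNReal.ofReal b < M.βc) (hδ : 0 ≤ δ) (hδ1 : δ ≤ 1)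
    (hH : ∀ u, 0 ≤ u → u ≤ b → ∑' x, M.H u x ≤ δ) :
    (1 - δ) * (t - s) ≤ (cc M s)⁻¹ - (cc M t)⁻¹ :=
  chi_lower (c := cc M) (β := b) hδ hδ1 (fun _ h1 h2 => one_le_cc M h1 (good_mono M h2 hb))
    (fun _ _ h1 h2 h3 => cc_mono M h1 h2 (good_mono M h3 hb))
    (fun _ _ h1 h2 h3 => cc_upper M h1 h2 (good_mono M h3 hb))
    (fun _ _ h1 h2 h3 => cc_low M h1 h2 (good_mono M h3 hb) hδ (fun u h4 h5 => hH u h4 (h5.trans h3)))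
    s t hs hst htb

/-- intermediate values of the susceptibility -/
lemma cc_ivt (M : Model d c₀) {s b y : ℝ} (hs : 0 ≤ s) (hsb : s ≤ b) (hb : ENNReal.ofReal b < M.βc)
    (h1 : cc M s ≤ y) (h2 : y ≤ cc M b) : ∃ t, s ≤ t ∧ t ≤ b ∧ cc M t = y := by
  have hc : ContinuousOn (cc M) (Set.Icc s b) := by
    have hL : LipschitzOnWith (Real.toNNReal (cc M b ^ 2)) (cc M) (Set.Icc s b) := by
      refine LipschitzOnWith.of_le_add_mul _ ?_
      intro u hu v hv
      rw [Real.coe_toNNReal _ (sq_nonneg _)]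
      have hgb : ∀ w, w ≤ b → ENNReal.ofReal w < M.βc := fun w hw => good_mono M hw hb
      have cu := one_le_cc M (hs.trans hu.1) (hgb u hu.2)
      have cv := one_le_cc M (hs.trans hv.1) (hgb v hv.2)
      have cub := cc_mono M (hs.trans hu.1) hu.2 hb
      have cvb := cc_mono M (hs.trans hv.1) hv.2 hb
      rcases le_total u v with h | h
      · have := cc_mono M (hs.trans hu.1) h (hgb v hv.2)
        have : 0 ≤ cc M b ^ 2 * dist u v := by positivity
        linarith
      · have h3 := cc_upper M (hs.trans hv.1) h (hgb u hu.2)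
        rw [Real.dist_eq, abs_of_nonneg (by linarith)]
        have h4 : cc M v * cc M u ≤ cc M b * cc M b := by gcongr; linarith
        have : (u - v) * (cc M v * cc M u) ≤ (u - v) * (cc M b * cc M b) :=
          mul_le_mul_of_nonneg_left h4 (by linarith)
        nlinarith
    exact hL.continuousOn
  obtain ⟨t, ht, h⟩ := intermediate_value_Icc hsb hc ⟨h1, h2⟩
  exact ⟨t, ht.1, ht.2, h⟩

end SX
end

section
open MeasureTheory Blackbox
namespace SX
variable {d : ℕ} {c₀ : ℝ}

lemma conv_le_sq (f g : (Fin d → ℤ) → ℝ≥0∞) (x : Fin d → ℤ) :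
    conv f g x ≤ ∑' y, f y ^ 2 + ∑' y, g y ^ 2 := by
  have e : ∑' y, g y ^ 2 = ∑' y, g (x - y) ^ 2 := ((Equiv.subLeft x).tsum_eq (fun y => g y ^ 2)).symm
  rw [e, ← ENNReal.tsum_add]
  refine ENNReal.tsum_le_tsum fun y => ?_
  rcases le_total (f y) (g (x - y)) with h | h
  · calc f y * g (x - y) ≤ g (x - y) * g (x - y) := by gcongr
      _ ≤ _ := by rw [← sq]; exact le_add_self
  · calc f y * g (x - y) ≤ f y * f y := by gcongr
      _ ≤ _ := by rw [← sq]; exact le_self_add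

def Mo (M : Model d c₀) (t r : ℝ) : Prop := ∀ i : Fin d, ∃ F2 F4 : ℝ, 0 < F2 ∧ 0 ≤ F4 ∧
  mom 2 i (M.F t) = ENNReal.ofReal F2 ∧ mom 4 i (M.F t) = ENNReal.ofReal F4 ∧ F4 * cc M t ≤ r * F2 ^ 2

lemma hasSum_mom (k : ℕ) (hk : Even k) (i : Fin d) (u : (Fin d → ℤ) → ℝ≥0∞) {a c : ℝ} (ha : 0 ≤ a)
    (h : mom k i u = ENNReal.ofReal a) :
    HasSum (fun x => (x i : ℝ) ^ k * ((u x).toReal / c)) (a / c) := by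
  have hne : mom k i u ≠ ⊤ := by rw [h]; exact ENNReal.ofReal_ne_top
  unfold mom at hne h
  have h1 := ENNReal.hasSum_toReal hne
  rw [← ENNReal.tsum_toReal_eq (fun p => ENNReal.ne_top_of_tsum_ne_top hne p), h,
    ENNReal.toReal_ofReal ha] at h1
  refine (h1.div_const c).congr_fun ?_
  intro x
  rw [ENNReal.toReal_mul, ENNReal.toReal_ofReal (hk.pow_nonneg _), mul_div_assoc]

lemma Mo.pk {M : Model d c₀} {t r : ℝ} (hd : 2 < d) (h0 : 0 ≤ t) (ht : ENNReal.ofReal t < M.βc)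
    (hr : 1 ≤ r) (h : Mo M t r) : ∃ X, PK (fun x => (M.F t x).toReal / cc M t) X r := by
  have hc := one_le_cc M h0 ht
  set i0 : Fin d := ⟨0, by omega⟩
  obtain ⟨F2, F4, hF2, hF4, e2, e4, hr4⟩ := h i0
  have e2' : ∀ i, mom 2 i (M.F t) = ENNReal.ofReal F2 := fun i => by
    rw [← e2]; exact mom_symm (F_symm M t) 2 i i0
  have e4' : ∀ i, mom 4 i (M.F t) = ENNReal.ofReal F4 := fun i => by
    rw [← e4]; exact mom_symm (F_symm M t) 4 i i0
  have h24 : F2 ≤ F4 := by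
    have := mom2_le_mom4 i0 (M.F t)
    rw [e2, e4] at this
    exact (ENNReal.ofReal_le_ofReal_iff hF4).mp this
  have hchi := chi_ne_top M h0 ht
  have h4s : ∀ i : Fin d, HasSum (fun x : Fin d → ℤ => (x i : ℝ) ^ 4 * ((M.F t x).toReal / cc M t)) (F4 / cc M t) :=
    fun i => hasSum_mom 4 (by decide) i _ hF4 (e4' i)
  refine ⟨F2 / cc M t, ?_⟩
  refine { nonneg := fun x => by positivity
           sum := ?_
           flip := fun i x => by rw [symm_flip (F_symm M t)]
           even := fun x => by rw [symm_even (F_symm M t)]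
           m2 := fun i => hasSum_mom 2 (by decide) i _ hF2.le (e2' i)
           s4 := fun i => (h4s i).summable
           m4 := fun i => ?_
           r1 := hr
           rX := ?_ }
  · have hne : ∑' x, M.F t x ≠ ⊤ := by rw [sum_F]; exact hchi
    have h1 := ENNReal.hasSum_toReal hne
    rw [← ENNReal.tsum_toReal_eq (fun p => ENNReal.ne_top_of_tsum_ne_top hne p), sum_F] at h1
    have := h1.div_const (cc M t)
    rwa [show (M.chi t).toReal / cc M t = 1 from div_self (by linarith : cc M t ≠ 0)] at this
  · rw [(h4s i).tsum_eq, div_pow, ← mul_div_assoc, div_le_div_iff₀ (by linarith) (by positivity)]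
    calc F4 * cc M t ^ 2 = (F4 * cc M t) * cc M t := by ring
      _ ≤ r * F2 ^ 2 * cc M t := by gcongr
  · rw [← mul_div_assoc, le_div_iff₀ (by linarith), one_mul]
    have : F2 * cc M t ≤ F2 * (r * F2) := by
      calc F2 * cc M t ≤ F4 * cc M t := by gcongr
        _ ≤ _ := by linarith
    exact le_of_mul_le_mul_left this hF2

/-- gap estimate -/
lemma gap (M : Model d c₀) {δ η l b s t : ℝ} (hs : 0 ≤ s) (hst : s ≤ t) (htb : t ≤ b)
    (hb : ENNReal.ofReal b < M.βc) (hδ : 0 ≤ δ) (hη : η ≤ 1/2) (hl : 1 ≤ l) (hδl : δ * l ≤ η)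
    (hH : ∀ u, 0 ≤ u → u ≤ b → ∑' x, M.H u x ≤ δ) (hcc : cc M t ≤ l * cc M s) :
    (t - s) * cc M s ≤ 1 ∧ (1 - η) ≤ (cc M t / cc M s) * (1 - (t - s) * cc M s) := by
  have hs' := good_mono M (hst.trans htb) hb
  have c1 := one_le_cc M hs hs'
  have c2 := cc_mono M hs hst (good_mono M htb hb)
  have hδη : δ ≤ η := by nlinarith
  have k := cc_inv_low M hs hst htb hb hδ (by linarith) hH
  set m := cc M t / cc M s with hm
  have hm1 : 1 ≤ m := by rw [hm, le_div_iff₀ (by linarith)]; linarith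
  have hml : m ≤ l := by rw [hm, div_le_iff₀ (by linarith)]; linarith
  set a := (t - s) * cc M s with ha
  have ha0 : 0 ≤ a := mul_nonneg (by linarith) (by linarith)
  have k2 : (1 - δ) * a ≤ 1 - 1 / m := by
    have := mul_le_mul_of_nonneg_right k (by linarith : 0 ≤ cc M s)
    have e : ((cc M s)⁻¹ - (cc M t)⁻¹) * cc M s = 1 - 1 / m := by
      rw [hm]; field_simp
    rw [e] at this
    rw [ha]; linarith
  have hδm : δ * m ≤ η := le_trans (by gcongr) hδl
  have k3 : m * ((1 - δ) * a) ≤ m - 1 := by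
    have := mul_le_mul_of_nonneg_left k2 (by linarith : 0 ≤ m)
    have e : m * (1 - 1 / m) = m - 1 := by field_simp
    rwa [e] at this
  have ha1 : a ≤ 1 := by
    by_contra hcon
    push Not at hcon
    have h : (m - δ * m) * 1 < (m - δ * m) * a := mul_lt_mul_of_pos_left hcon (by linarith)
    nlinarith
  refine ⟨ha1, ?_⟩
  have : m * δ * a ≤ m * δ * 1 := by gcongr
  nlinarith

/-- one step -/
lemma step {M : Model d c₀} (hd : 2 < d) {δ η l r b s t : ℝ} {n : ℕ} {U : ℝ≥0∞} (hs : 0 ≤ s) (hst : s ≤ t) (htb : t ≤ b)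
    (hb : ENNReal.ofReal b < M.βc) (hδ : 0 ≤ δ) (hη : η ≤ 1/2) (hl : 1 ≤ l) (hδl : δ * l ≤ η) (hr : 1 ≤ r)
    (hL : 48 * C1c d r * (2 * l) ^ (3/4 : ℝ) ≤ l / 2)
    (hH : ∀ u, 0 ≤ u → u ≤ b → ∑' x, M.H u x ≤ δ) (hcc : cc M t ≤ l * cc M s) (hn : cc M s = l ^ n)
    (hMo : Mo M s r) (hS : ∑' x, M.F s x ^ 2 ≤ ENNReal.ofReal ((l/2)^n) * U) :
    ∑' x, M.F t x ^ 2 ≤ ENNReal.ofReal ((l/2)^(n+1)) * U ∧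
    ∀ x, M.F t x ≤ M.F s x + ENNReal.ofReal (l * (1/2)^n) * U := by
  have ht0 := hs.trans hst
  have htg := good_mono M htb hb
  have hsg := good_mono M hst htg
  have c1 := one_le_cc M hs hsg
  have c2 := one_le_cc M ht0 htg
  obtain ⟨ha1, hg⟩ := gap M hs hst htb hb hδ hη hl hδl hH hcc
  obtain ⟨X, hPK⟩ := hMo.pk hd hs hsg hr
  set a := (t - s) * cc M s with ha
  have hml : cc M t / cc M s ≤ l := by rw [div_le_iff₀ (by linarith)]; linarith
  have h1a : 1 / (2 * l) ≤ 1 - a := by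
    rw [div_le_iff₀ (by linarith)]
    have : cc M t / cc M s * (1 - a) ≤ l * (1 - a) := mul_le_mul_of_nonneg_right hml (by linarith)
    linarith
  have hpos : 0 < 1 / (2 * l) := by positivity
  have hpow : (1 - a) ^ (-3/4 : ℝ) ≤ (2 * l) ^ (3/4 : ℝ) := by
    calc (1 - a) ^ (-3/4 : ℝ) ≤ (1 / (2 * l)) ^ (-3/4 : ℝ) :=
          Real.rpow_le_rpow_of_nonpos hpos h1a (by norm_num)
      _ = _ := by
          rw [one_div, Real.inv_rpow (by positivity), neg_div, Real.rpow_neg (by positivity), inv_inv]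
  have hC := C1c_ge hd hr
  have hSt : ∑' x, M.F t x ^ 2 ≤ ENNReal.ofReal ((l/2)^(n+1)) * U := by
    have := L2E hd (M.F s) (M.F t) (cc M s) (t - s) X r (by linarith) (by linarith)
      (by rw [sum_F, ofReal_cc M hs hsg]) (by rw [sum_F]; exact chi_ne_top M ht0 htg)
      (fun x => I1F M hs hst htg x) (by linarith) hPK
    calc ∑' x, M.F t x ^ 2 ≤ _ := this
      _ ≤ ENNReal.ofReal (l / 2) * (ENNReal.ofReal ((l/2)^n) * U) := by
          refine mul_le_mul' (ENNReal.ofReal_le_ofReal (le_trans ?_ hL)) hS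
          gcongr
      _ = _ := by rw [← mul_assoc, ← ENNReal.ofReal_mul (by positivity), pow_succ, mul_comm (l/2)]
  refine ⟨hSt, fun x => (I1F M hs hst htg x).trans ?_⟩
  refine add_le_add le_rfl ?_
  have hcv : conv (M.F s) (M.F t) x ≤ ENNReal.ofReal (2 * (l/2)^(n+1)) * U := by
    calc conv (M.F s) (M.F t) x ≤ ∑' y, M.F s y ^ 2 + ∑' y, M.F t y ^ 2 := conv_le_sq _ _ x
      _ ≤ ∑' y, M.F t y ^ 2 + ∑' y, M.F t y ^ 2 := by
          gcongr with y
          exact F_mono M hs hst htg y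
      _ = 2 * ∑' y, M.F t y ^ 2 := (two_mul _).symm
      _ ≤ 2 * (ENNReal.ofReal ((l/2)^(n+1)) * U) := by gcongr
      _ = _ := by
          rw [ENNReal.ofReal_mul (by norm_num), mul_assoc]; norm_num
  calc ENNReal.ofReal (t - s) * conv (M.F s) (M.F t) x
      ≤ ENNReal.ofReal ((l^n)⁻¹) * (ENNReal.ofReal (2 * (l/2)^(n+1)) * U) := by
        refine mul_le_mul' (ENNReal.ofReal_le_ofReal ?_) hcv
        rw [← hn, inv_eq_one_div, le_div_iff₀ (by linarith)]
        exact ha1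
    _ = _ := by
        rw [← mul_assoc, ← ENNReal.ofReal_mul (by positivity)]
        congr 2
        rw [pow_succ, div_pow, div_pow, one_pow]
        field_simp

end SX
end

section
open MeasureTheory Blackbox
namespace SX
variable {d : ℕ} {c₀ : ℝ}

lemma sigma_sq (M : Model d c₀) : M.sigma ^ 2 = ∑' x, sqNorm x * M.K.J x := by
  unfold Model.sigma AdmissibleKernel.sigma
  refine Real.sq_sqrt (tsum_nonneg fun x => mul_nonneg ?_ (M.K.nonneg x))
  unfold sqNorm; positivity

lemma sigma_low (M : Model d c₀) : c₀ * M.K.R ≤ M.sigma := M.K.sigma_lower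

lemma sigma_up (M : Model d c₀) (hd : 1 ≤ d) : M.sigma ≤ d * M.K.R := by
  have hR := M.K.R_ge_one
  have hd1 : (1:ℝ) ≤ d := by exact_mod_cast hd
  have h : M.sigma ^ 2 ≤ d * M.K.R ^ 2 := by
    rw [sigma_sq]
    calc ∑' x, sqNorm x * M.K.J x ≤ ∑' x, (d * M.K.R ^ 2) * M.K.J x := by
          refine Summable.tsum_le_tsum ?_ M.K.summable_sq (M.K.summable.mul_left _)
          intro x
          rcases (M.K.nonneg x).eq_or_lt with h | h
          · simp [← h]
          · gcongr
            unfold sqNorm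
            calc ∑ i, (x i : ℝ) ^ 2 ≤ ∑ _i : Fin d, M.K.R ^ 2 := by
                  refine Finset.sum_le_sum fun i _ => ?_
                  rw [← sq_abs]
                  exact pow_le_pow_left₀ (abs_nonneg _) ((natAbs_le_supNorm x i).trans (M.K.range_le x h)) 2
              _ = _ := by simp
      _ = _ := by rw [tsum_mul_left, M.K.norm_one, mul_one]
  refine (abs_le_of_sq_le_sq' ?_ (by positivity)).2
  calc M.sigma ^ 2 ≤ d * M.K.R ^ 2 := h
    _ ≤ d ^ 2 * M.K.R ^ 2 := by gcongr; nlinarith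
    _ = _ := by ring

lemma sum_mom2 (M : Model d c₀) : ∑ i, mom 2 i (jE M) = ENNReal.ofReal (M.sigma ^ 2) := by
  rw [sigma_sq, ENNReal.ofReal_tsum_of_nonneg ?_ M.K.summable_sq]
  · unfold mom
    rw [← tsum_fintype (L := .unconditional _), ENNReal.tsum_comm]
    refine tsum_congr fun x => ?_
    rw [ENNReal.tsum_mul_right, tsum_fintype, ENNReal.ofReal_mul (by unfold sqNorm; positivity), jE]
    congr 1
    unfold sqNorm
    rw [ENNReal.ofReal_sum_of_nonneg (fun i _ => sq_nonneg _)]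
  · intro x; exact mul_nonneg (by unfold sqNorm; positivity) (M.K.nonneg x)

lemma mo_zero (M : Model d c₀) (hd : 2 < d) (hc : 0 < c₀) {r : ℝ} (hr : d / c₀ ^ 2 ≤ r) : Mo M 0 r := by
  intro i
  have hR := M.K.R_ge_one
  have hσ := sigma_low M
  have hσ0 : 0 < M.sigma := lt_of_lt_of_le (by positivity) hσ
  have hd0 : (0:ℝ) < d := by exact_mod_cast (by omega : 0 < d)
  have h4 := mom_J_ne_top M i
  have h2 : mom 2 i (jE M) = ENNReal.ofReal (M.sigma ^ 2 / d) := by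
    have := sum_mom2 M
    rw [Finset.sum_congr rfl (fun j _ => mom_symm (jE_symm M) 2 j i)] at this
    simp only [Finset.sum_const, Finset.card_univ, Fintype.card_fin, nsmul_eq_mul] at this
    rw [ENNReal.ofReal_div_of_pos hd0, ← this, ENNReal.ofReal_natCast, mul_comm,
      ENNReal.mul_div_cancel_right (by exact_mod_cast (by omega : d ≠ 0)) (by simp)]
  refine ⟨M.sigma ^ 2 / d, (mom 4 i (jE M)).toReal, by positivity, ENNReal.toReal_nonneg, ?_, ?_, ?_⟩
  · rw [F_zero, h2]
  · rw [F_zero, ENNReal.ofReal_toReal h4]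
  · rw [cc_zero, mul_one]
    have h := mom4_J_le M i 2 (by decide)
    rw [h2, ← ENNReal.ofReal_mul (by positivity)] at h
    have h' := ENNReal.toReal_mono ENNReal.ofReal_ne_top h
    rw [ENNReal.toReal_ofReal (by positivity)] at h'
    refine h'.trans ?_
    rw [sq (M.sigma ^ 2 / d), ← mul_assoc]
    gcongr
    have h5 : (c₀ * M.K.R) ^ 2 ≤ M.sigma ^ 2 := by gcongr
    calc M.K.R ^ 2 = d / c₀ ^ 2 * ((c₀ * M.K.R) ^ 2 / d) := by field_simp
      _ ≤ r * (M.sigma ^ 2 / d) := by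
          refine mul_le_mul hr (by gcongr) (by positivity) (le_trans (by positivity) hr)

lemma S_zero (M : Model d c₀) : ∑' x, M.F 0 x ^ 2 ≤ ENNReal.ofReal (c₀⁻¹ / M.K.R ^ d) := by
  rw [F_zero]
  calc ∑' x, jE M x ^ 2 ≤ ∑' x, ENNReal.ofReal (c₀⁻¹ / M.K.R ^ d) * jE M x := by
        gcongr with x
        rw [sq]
        gcongr
        exact ENNReal.ofReal_le_ofReal (M.K.J_upper x)
    _ = _ := by rw [ENNReal.tsum_mul_left, sum_jE, mul_one]

lemma induct (M : Model d c₀) (hd : 2 < d) (hc : 0 < c₀) {δ η l r b : ℝ} {U : ℝ≥0∞}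
    (hU : U = ENNReal.ofReal (c₀⁻¹ / M.K.R ^ d)) (hb0 : 0 ≤ b)
    (hb : ENNReal.ofReal b < M.βc) (hδ : 0 ≤ δ) (hη0 : 0 ≤ η) (hη : η ≤ 1/2) (hl : 32 ≤ l) (hδl : δ * l ≤ η)
    (hr : 48 ≤ r) (hr2 : d / c₀ ^ 2 ≤ r) (hη2 : η * (2 * l * r + 24 * l ^ 2) ≤ 1)
    (hL : 48 * C1c d r * (2 * l) ^ (3/4 : ℝ) ≤ l / 2)
    (hH : ∀ u, 0 ≤ u → u ≤ b → ∑' x, M.H u x ≤ δ) (n : ℕ) (hn : l ^ n ≤ cc M b) :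
    ∃ s, 0 ≤ s ∧ s ≤ b ∧ cc M s = l ^ n ∧ Mo M s r ∧
      ∑' x, M.F s x ^ 2 ≤ ENNReal.ofReal ((l/2)^n) * U ∧
      ∀ x, M.F s x ≤ ENNReal.ofReal (1 + 2 * l * (1 - (1/2)^n)) * U := by
  induction n with
  | zero =>
    refine ⟨0, le_rfl, hb0, by simp [cc_zero], mo_zero M hd hc hr2, ?_, ?_⟩
    · simpa [hU] using S_zero M
    · intro x
      simp only [pow_zero, sub_self, mul_zero, add_zero, ENNReal.ofReal_one, one_mul]
      rw [hU, F_zero]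
      exact ENNReal.ofReal_le_ofReal (M.K.J_upper x)
  | succ n ih =>
    have hln : l ^ n ≤ l ^ (n+1) := pow_le_pow_right₀ (by linarith) (by omega)
    obtain ⟨s, hs, hsb, hcs, hMo, hS, hF⟩ := ih (hln.trans hn)
    obtain ⟨t, hst, htb, hct⟩ := cc_ivt M hs hsb hb (by rw [hcs]; exact hln) hn
    have hcc : cc M t = l * cc M s := by rw [hct, hcs, pow_succ]; ring
    have ht0 := hs.trans hst
    have htg := good_mono M htb hb
    have hsg := good_mono M hst htg
    have c1 := one_le_cc M hs hsg
    obtain ⟨h1, h2⟩ := step hd hs hst htb hb hδ hη (by linarith) hδl (by linarith) hL hH hcc.le hcs hMo hS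
    obtain ⟨-, hg⟩ := gap M hs hst htb hb hδ hη (by linarith) hδl hH hcc.le
    have hm : cc M t / cc M s = l := by rw [hcc]; field_simp
    rw [hm] at hg
    refine ⟨t, ht0, htb, hct, ?_, h1, ?_⟩
    · intro i
      obtain ⟨F2, F4, hF2, hF4, e2, e4, h4⟩ := hMo i
      rw [hcc]
      exact moment_step i (M.F s) (M.F t) (by linarith) hl hr hη0 hη2 (by linarith) hg
        (symm_even (F_symm M t)) (by rw [sum_F, ofReal_cc M hs hsg])
        (by rw [sum_F, ← hcc, ofReal_cc M ht0 htg]) (fun x => I1F M hs hst htg x) hF2 e2 hF4 e4 h4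
        (mom4_F_ne_top M ht0 htg i)
    · intro x
      refine (h2 x).trans ((add_le_add (hF x) le_rfl).trans (le_of_eq ?_))
      have hp : ((1:ℝ)/2)^n ≤ 1 := pow_le_one₀ (by norm_num) (by norm_num)
      rw [← add_mul, ← ENNReal.ofReal_add (by nlinarith) (by positivity)]
      congr 2
      rw [pow_succ]; ring

lemma F_bound (M : Model d c₀) (hd : 2 < d) (hc : 0 < c₀) {δ η l r b : ℝ}
    (hb0 : 0 ≤ b)
    (hb : ENNReal.ofReal b < M.βc) (hδ : 0 ≤ δ) (hη0 : 0 ≤ η) (hη : η ≤ 1/2) (hl : 32 ≤ l) (hδl : δ * l ≤ η)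
    (hr : 48 ≤ r) (hr2 : d / c₀ ^ 2 ≤ r) (hη2 : η * (2 * l * r + 24 * l ^ 2) ≤ 1)
    (hL : 48 * C1c d r * (2 * l) ^ (3/4 : ℝ) ≤ l / 2)
    (hH : ∀ u, 0 ≤ u → u ≤ b → ∑' x, M.H u x ≤ δ) (x : Fin d → ℤ) :
    M.F b x ≤ ENNReal.ofReal ((1 + 2 * l) * (c₀⁻¹ / M.K.R ^ d)) := by
  obtain ⟨n, hn, hn1⟩ := exists_nat_pow_near (one_le_cc M hb0 hb) (by linarith : 1 < l)
  obtain ⟨s, hs, hsb, hcs, hMo, hS, hF⟩ := induct M hd hc rfl hb0 hb hδ hη0 hη hl hδl hr hr2 hη2 hL hH n hn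
  obtain ⟨-, h2⟩ := step hd hs hsb le_rfl hb hδ hη (by linarith) hδl (by linarith) hL hH
    (by rw [hcs]; rw [pow_succ] at hn1; linarith) hcs hMo hS
  refine (h2 x).trans ((add_le_add (hF x) le_rfl).trans ?_)
  have hp : ((1:ℝ)/2)^n ≤ 1 := pow_le_one₀ (by norm_num) (by norm_num)
  have hp0 : 0 < ((1:ℝ)/2)^n := by positivity
  rw [← add_mul, ← ENNReal.ofReal_add (by nlinarith) (by positivity), ENNReal.ofReal_mul (by linarith)]
  refine mul_le_mul' (ENNReal.ofReal_le_ofReal ?_) le_rfl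
  nlinarith

theorem main_thm (d : ℕ) (hd : 2 < d) (c₀ : ℝ) (hc₀ : c₀ ∈ Set.Ioc (0:ℝ) 1) :
    ∃ δs : ℝ, δs ∈ Set.Ioc (0:ℝ) (1/2) ∧ ∃ C > (0:ℝ),
      ∀ M : Model d c₀, ∀ β : ℝ, 0 ≤ β → β < M.betaOf δs →
        ∀ x : Fin d → ℤ, supNorm x ≤ 2 * M.sigma →
          M.F β x ≤ ENNReal.ofReal (C / M.sigma ^ d *
            (M.sigma / max M.sigma (supNorm x)) ^ ((d:ℝ) - 2)) := by
  obtain ⟨hc, -⟩ := hc₀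
  have hd0 : (0:ℝ) < d := by exact_mod_cast (by omega : 0 < d)
  set r : ℝ := max 48 (d / c₀ ^ 2) with hr
  have hr48 : 48 ≤ r := le_max_left _ _
  have hrd : d / c₀ ^ 2 ≤ r := le_max_right _ _
  have hC1 := C1c_ge hd (by linarith : 1 ≤ r)
  set A : ℝ := 192 * C1c d r with hA
  have hA1 : 192 ≤ A := by linarith
  set l : ℝ := A ^ 4 / 2 with hl
  have hl32 : 32 ≤ l := by
    have : (192:ℝ) ^ 4 ≤ A ^ 4 := by gcongr
    rw [hl]; linarith
  have hL : 48 * C1c d r * (2 * l) ^ (3/4 : ℝ) ≤ l / 2 := by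
    have e : (2 * l) ^ (3/4 : ℝ) = A ^ 3 := by
      rw [show 2 * l = A ^ 4 by rw [hl]; ring, ← Real.rpow_natCast, ← Real.rpow_mul (by linarith),
        ← Real.rpow_natCast]
      norm_num
    rw [e, hl]
    have : 48 * C1c d r = A / 4 := by rw [hA]; ring
    rw [this]
    apply le_of_eq; ring
  set η : ℝ := 1 / (2 * l * r + 24 * l ^ 2) with hη
  have hden : 2 ≤ 2 * l * r + 24 * l ^ 2 := by nlinarith
  have hη0 : 0 < η := by rw [hη]; positivity
  have hη1 : η ≤ 1/2 := by rw [hη]; gcongr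
  have hη2 : η * (2 * l * r + 24 * l ^ 2) ≤ 1 := by
    rw [hη, one_div, inv_mul_cancel₀ (by linarith)]
  set δ : ℝ := η / l with hδ
  have hδ0 : 0 < δ := by rw [hδ]; positivity
  have hδl : δ * l ≤ η := by rw [hδ, div_mul_cancel₀ _ (by linarith)]
  have hδ2 : δ ≤ 1/2 := by nlinarith
  refine ⟨δ, ⟨hδ0, hδ2⟩, (1 + 2 * l) * c₀⁻¹ * d ^ d * 2 ^ d, by positivity, ?_⟩
  intro M β hβ0 hβ x hx
  have hne : {β : ℝ | 0 ≤ β ∧ ENNReal.ofReal β < M.βc ∧ M.E β < ENNReal.ofReal δ}.Nonempty := by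
    by_contra h
    rw [Set.not_nonempty_iff_eq_empty] at h
    unfold Model.betaOf at hβ
    rw [h, Real.sSup_empty] at hβ
    linarith
  obtain ⟨b, ⟨hb0, hbc, hE⟩, hβb⟩ := exists_lt_of_lt_csSup hne hβ
  have hH : ∀ u, 0 ≤ u → u ≤ β → ∑' x, M.H u x ≤ δ := by
    intro u h0 h1
    have h2 : ENNReal.ofReal (∑' x, M.H u x) ≤ M.E b := by
      unfold Model.E
      refine le_trans le_self_add (le_iSup₂ (f := fun t (_ : t ∈ Set.Icc (0:ℝ) b) =>
        (ENNReal.ofReal (∑' x, M.H t x) +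
      ENNReal.ofReal (∑' x, sqNorm x * M.H t x) / M.xiSq t)) u ⟨h0, h1.trans hβb.le⟩)
    exact (ENNReal.ofReal_le_ofReal_iff hδ0.le).mp (h2.trans hE.le)
  refine (F_bound M hd hc hβ0 (good_mono M hβb.le hbc) hδ0.le hη0.le hη1 hl32 hδl hr48 hrd hη2 hL hH x).trans ?_
  apply ENNReal.ofReal_le_ofReal
  have hR := M.K.R_ge_one
  have hσ0 : 0 < M.sigma := lt_of_lt_of_le (by positivity) (sigma_low M)
  have hσ := sigma_up M (by omega)
  have hmx : 0 < max M.sigma (supNorm x) := lt_max_of_lt_left hσ0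
  have hd2 : (2:ℝ) < d := by exact_mod_cast hd
  have hfac : ((1:ℝ)/2) ^ d ≤ (M.sigma / max M.sigma (supNorm x)) ^ ((d:ℝ) - 2) := by
    have h1 : (1:ℝ)/2 ≤ M.sigma / max M.sigma (supNorm x) := by
      rw [le_div_iff₀ hmx]
      have : max M.sigma (supNorm x) ≤ 2 * M.sigma := max_le (by linarith) hx
      linarith
    calc ((1:ℝ)/2) ^ d = ((1:ℝ)/2) ^ (d:ℝ) := (Real.rpow_natCast _ _).symm
      _ ≤ ((1:ℝ)/2) ^ ((d:ℝ) - 2) :=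
          Real.rpow_le_rpow_of_exponent_ge (by norm_num) (by norm_num) (by linarith)
      _ ≤ _ := Real.rpow_le_rpow (by norm_num) h1 (by linarith)
  have hRσ : 1 / M.K.R ^ d ≤ d ^ d / M.sigma ^ d := by
    rw [div_le_div_iff₀ (by positivity) (by positivity), one_mul, ← mul_pow]
    gcongr
  calc (1 + 2 * l) * (c₀⁻¹ / M.K.R ^ d) = (1 + 2 * l) * c₀⁻¹ * (1 / M.K.R ^ d) := by ring
    _ ≤ (1 + 2 * l) * c₀⁻¹ * (d ^ d / M.sigma ^ d) := by gcongr
    _ = (1 + 2 * l) * c₀⁻¹ * d ^ d * 2 ^ d / M.sigma ^ d * (1/2) ^ d := by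
        rw [div_pow, one_pow]; field_simp
    _ ≤ _ := by gcongr

end SX
end

open Blackbox

/-- bounds at small scales `|x| ≤ 2σ_J` (`Prop:smallx`). -/
theorem statement16 (d : ℕ) (hd : 2 < d) (c₀ : ℝ) (hc₀ : c₀ ∈ Set.Ioc (0:ℝ) 1) :
    ∃ δs : ℝ, δs ∈ Set.Ioc (0:ℝ) (1/2) ∧ ∃ C > (0:ℝ),
      ∀ M : Model d c₀, ∀ β : ℝ, 0 ≤ β → β < M.betaOf δs →
        ∀ x : Fin d → ℤ, supNorm x ≤ 2 * M.sigma →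
          M.F β x ≤ ENNReal.ofReal (C / M.sigma ^ d *
            (M.sigma / max M.sigma (supNorm x)) ^ ((d:ℝ) - 2)) := by
  exact SX.main_thm d hd c₀ hc₀
end
end

section
/- Let d > 2 be an integer, let a, b, c₁, c₂, σ, ξ, μ > 0, and let ε ∈ [0,1]. Suppose f, g : ℤ^d → [0,∞) satisfy, for every x ∈ ℤ^d: f(x) ≤ c₁·σ^{−d}·(σ/(σ∨|x|))^{d−2−ε}·exp(−a|x|/ξ) and ∑_{y ∈ Λ_ξ(x)} g(y) ≤ c₂·(ξ/(ξ∨|x|))^{d−2}·exp(−b|x|/ξ), and suppose ‖g‖₁ := ∑_{y ∈ ℤ^d} g(y) < ∞. Then there exists a constant C > 0 depending only on (a, μ, d) such that for every x ∈ ℤ^d with |x| ≥ 2·max{σ, ξ}: ∑_{y ∉ Λ_{μξ}(0)} f(y)·g(x−y) ≤ (c₁/(σ²·|x|^{d−2}))·(|x|/σ)^ε·( 2^d·‖g‖₁·exp(−a|x|/(2ξ)) + c₂·C·(ξ/|x|)^ε·exp(−b|x|/(2ξ)) ). -/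
open scoped ENNReal

noncomputable section

open Blackbox


theorem supNorm_eq_norm {d : ℕ} (x : Fin d → ℤ) : supNorm x = ‖x‖ := by
  unfold supNorm
  apply le_antisymm
  · have h : (Finset.univ.sup fun i => (x i).natAbs) ≤ ⌊‖x‖⌋₊ := by
      apply Finset.sup_le
      intro i _
      apply Nat.le_floor
      have := norm_le_pi_norm x i
      rw [Int.norm_eq_abs] at this
      rw [Nat.cast_natAbs]
      simpa using this
    exact (Nat.le_floor_iff (norm_nonneg x)).1 h
  · rw [pi_norm_le_iff_of_nonneg (Nat.cast_nonneg _)]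
    intro i
    rw [Int.norm_eq_abs]
    have h : (x i).natAbs ≤ (Finset.univ.sup fun i => (x i).natAbs) :=
      Finset.le_sup (f := fun i => (x i).natAbs) (Finset.mem_univ i)
    have h2 : (((x i).natAbs : ℕ) : ℝ) ≤ ((Finset.univ.sup fun i => (x i).natAbs : ℕ) : ℝ) := by
      exact_mod_cast h
    rw [Nat.cast_natAbs] at h2
    simpa using h2

theorem exp_abs_summable (c : ℝ) (hc : 0 < c) :
    Summable (fun n : ℤ => Real.exp (-c * |(n:ℝ)|)) := by
  have h : Summable (fun n : ℕ => Real.exp (-c * (n:ℝ))) := by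
    have := Real.summable_exp_nat_mul_iff.2 (show -c < 0 by linarith)
    refine this.congr fun n => ?_
    rw [mul_comm]
  apply Summable.of_nat_of_neg
  · simpa using h
  · simpa using h

theorem exp_norm_sum_bound (d : ℕ) (hd : 0 < d) (c : ℝ) (hc : 0 < c) :
    ∃ K > (0:ℝ), ∀ s : Finset (Fin d → ℤ), ∑ k ∈ s, Real.exp (-c * ‖k‖) ≤ K := by
  have hd' : (0:ℝ) < d := by exact_mod_cast hd
  have hS := exp_abs_summable (c / d) (by positivity)
  refine ⟨(∑' n : ℤ, Real.exp (-(c / d) * |(n:ℝ)|)) ^ d, ?_, ?_⟩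
  · have := hS.tsum_pos (fun n => (Real.exp_pos _).le) 0 (Real.exp_pos _)
    positivity
  · intro s
    classical
    let t : Fin d → Finset ℤ := fun i => s.image (fun k => k i)
    calc ∑ k ∈ s, Real.exp (-c * ‖k‖)
        ≤ ∑ k ∈ s, ∏ i, Real.exp (-(c / d) * |((k i : ℤ):ℝ)|) := by
          apply Finset.sum_le_sum
          intro k _
          rw [← Real.exp_sum, ← Finset.mul_sum]
          apply Real.exp_le_exp.2
          have h1 : ∑ i, |((k i : ℤ):ℝ)| ≤ d * ‖k‖ := by
            calc ∑ i, |((k i : ℤ):ℝ)| ≤ ∑ i : Fin d, ‖k‖ := by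
                  apply Finset.sum_le_sum
                  intro i _
                  have := norm_le_pi_norm k i
                  rwa [Int.norm_eq_abs] at this
              _ = d * ‖k‖ := by simp
          have h2 : c / d * ∑ i, |((k i : ℤ):ℝ)| ≤ c / d * (d * ‖k‖) := by gcongr
          have h3 : c / d * (d * ‖k‖) = c * ‖k‖ := by field_simp
          linarith
      _ ≤ ∑ k ∈ Fintype.piFinset t, ∏ i, Real.exp (-(c / d) * |((k i : ℤ):ℝ)|) := by
          apply Finset.sum_le_sum_of_subset_of_nonneg
          · intro k hk
            rw [Fintype.mem_piFinset]
            intro i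
            exact Finset.mem_image_of_mem _ hk
          · intro k _ _
            positivity
      _ = ∏ i, ∑ n ∈ t i, Real.exp (-(c / d) * |((n : ℤ):ℝ)|) := by
          rw [Finset.prod_univ_sum]
      _ ≤ ∏ i : Fin d, ∑' n : ℤ, Real.exp (-(c / d) * |(n:ℝ)|) := by
          apply Finset.prod_le_prod
          · intro i _
            positivity
          · intro i _
            exact hS.sum_le_tsum _ (fun n _ => (Real.exp_pos _).le)
      _ = _ := by simp

/-- Truncated division block bound. -/
theorem block_exists (d : ℕ) (ξ : ℝ) (hξ : 0 < ξ) :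
    ∃ κ : (Fin d → ℤ) → (Fin d → ℤ), ∃ n : ℤ, ξ ≤ 2 * n ∧ ∀ y, ‖n • κ y‖ ≤ ‖y‖ ∧
      ‖y - n • κ y‖ ≤ ξ ∧ ‖n • κ y‖ = n * ‖κ y‖ := by
  have hn : ∃ n : ℤ, 1 ≤ n ∧ ((n:ℝ) - 1 ≤ ξ) ∧ ξ ≤ 2 * n ∧ ((n:ℝ) = 1 ∨ (n:ℝ) ≤ ξ) := by
    by_cases h : ξ < 1
    · exact ⟨1, le_refl _, by simpa using hξ.le, by norm_num; linarith, Or.inl (by simp)⟩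
    · push Not at h
      have h1 : (1:ℤ) ≤ ⌊ξ⌋ := Int.le_floor.2 (by simpa using h)
      have h1' : (1:ℝ) ≤ ⌊ξ⌋ := by exact_mod_cast h1
      have h2 := Int.floor_le ξ
      have h3 := Int.lt_floor_add_one ξ
      exact ⟨⌊ξ⌋, h1, by linarith, by linarith, Or.inr h2⟩
  obtain ⟨n, hn1, hn2, hn3, -⟩ := hn
  refine ⟨fun y i => (y i).tdiv n, n, hn3, fun y => ⟨?_, ?_, ?_⟩⟩
  · rw [pi_norm_le_iff_of_nonneg (norm_nonneg _)]
    intro i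
    refine le_trans ?_ (norm_le_pi_norm y i)
    rw [Int.norm_eq_abs, Int.norm_eq_abs]
    have : |n * (y i).tdiv n| ≤ |y i| := by
      rw [mul_comm]
      rcases le_total 0 (y i) with h | h
      · have h1 := Int.tdiv_mul_le (y i) (b := n) (by omega)
        have h2 : 0 ≤ (y i).tdiv n := Int.tdiv_nonneg h (by omega)
        rw [abs_of_nonneg h, abs_of_nonneg (by positivity)]
        simpa [h] using h1
      · have h0 : 0 ≤ - y i := by omega
        have h1 := Int.tdiv_mul_le (-(y i)) (b := n) (by omega)
        have h2 : 0 ≤ (-(y i)).tdiv n := Int.tdiv_nonneg h0 (by omega)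
        have e : (-(y i)).tdiv n = - (y i).tdiv n := Int.neg_tdiv _ _
        rw [← abs_neg, ← abs_neg (y i), abs_of_nonneg h0, ← neg_mul, ← e,
          abs_of_nonneg (by positivity)]
        rw [if_pos h0] at h1
        simpa using h1
    simp only [Pi.smul_apply, smul_eq_mul]
    exact_mod_cast this
  · rw [pi_norm_le_iff_of_nonneg hξ.le]
    intro i
    rw [Int.norm_eq_abs]
    simp only [Pi.smul_apply, smul_eq_mul, Pi.sub_apply]
    have e : y i - n * (y i).tdiv n = (y i).tmod n := by
      have := Int.mul_tdiv_add_tmod (y i) n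
      omega
    rw [e]
    have h : |(y i).tmod n| ≤ n - 1 := by
      have h1 := Int.tmod_lt_of_pos (y i) (b := n) (by omega)
      have h2 := Int.lt_tmod_of_pos (y i) (b := n) (by omega)
      rw [abs_le]
      omega
    have h' : |(((y i).tmod n : ℤ) : ℝ)| ≤ (n:ℝ) - 1 := by exact_mod_cast h
    linarith
  · have hn0 : (0:ℝ) ≤ n := by exact_mod_cast (by omega : (0:ℤ) ≤ n)
    rw [norm_smul, Int.norm_eq_abs, abs_of_nonneg hn0]

/-- convolution estimate (`lemma:fstarg`).  `C` depends only on `(a, μ, d)`. -/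
theorem statement19 (d : ℕ) (hd : 2 < d) (a μ : ℝ) (ha : 0 < a) (hμ : 0 < μ) :
    ∃ C > (0:ℝ), ∀ b c₁ c₂ σ ξ ε : ℝ, 0 < b → 0 < c₁ → 0 < c₂ → 0 < σ → 0 < ξ →
      ε ∈ Set.Icc (0:ℝ) 1 → ∀ f g : (Fin d → ℤ) → ℝ,
      (∀ x, 0 ≤ f x) → (∀ x, 0 ≤ g x) → Summable g →
      (∀ x : Fin d → ℤ, f x ≤ c₁ / σ ^ d *
          (σ / max σ (supNorm x)) ^ ((d:ℝ) - 2 - ε) * Real.exp (-a * supNorm x / ξ)) →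
      (∀ x : Fin d → ℤ,
        (∑' y : {y : Fin d → ℤ // supNorm (y - x) ≤ ξ}, g y.1) ≤
          c₂ * (ξ / max ξ (supNorm x)) ^ ((d:ℝ) - 2) * Real.exp (-b * supNorm x / ξ)) →
      ∀ x : Fin d → ℤ, 2 * max σ ξ ≤ supNorm x →
        (∑' y : {y : Fin d → ℤ // ¬ supNorm y ≤ μ * ξ}, f y.1 * g (x - y.1)) ≤
          c₁ / (σ ^ 2 * supNorm x ^ (d - 2)) * (supNorm x / σ) ^ ε *
            (2 ^ d * (∑' y, g y) * Real.exp (-a * supNorm x / (2 * ξ)) +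
              c₂ * C * (ξ / supNorm x) ^ ε * Real.exp (-b * supNorm x / (2 * ξ))) := by
  have hd0 : 0 < d := by omega
  obtain ⟨K, hK, hKb⟩ := exp_norm_sum_bound d hd0 (a / 2) (by positivity)
  obtain ⟨m, rfl⟩ : ∃ m, d = m + 2 := ⟨d - 2, by omega⟩
  have hm : 1 ≤ m := by omega
  have hm' : (1:ℝ) ≤ m := by exact_mod_cast hm
  set M : ℝ := (max 1 (1 / μ)) ^ m with hM
  have hMpos : 0 < M := by positivity
  refine ⟨M * 2 ^ m * K, by positivity, ?_⟩
  intro b c₁ c₂ σ ξ ε hb hc₁ hc₂ hσ hξ hε f g hf hg hgs hfb hgb x hx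
  obtain ⟨hε0, hε1⟩ := hε
  simp only [supNorm_eq_norm] at *
  have hcast : (((m + 2 : ℕ) : ℝ) - 2) = m := by push_cast; ring
  simp only [hcast, Real.rpow_natCast] at hfb hgb
  have hm2 : m + 2 - 2 = m := by omega
  rw [hm2]
  obtain ⟨X, hX⟩ : ∃ X, X = ‖x‖ := ⟨_, rfl⟩
  rw [← hX] at hx ⊢
  have hXσ : 2 * σ ≤ X := le_trans (by gcongr; exact le_max_left _ _) hx
  have hXξ : 2 * ξ ≤ X := le_trans (by gcongr; exact le_max_right _ _) hx
  have hX0 : 0 < X := by linarith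
  set p : ℝ := (m:ℝ) - ε with hp
  have hp0 : 0 ≤ p := by linarith
  have hpm : p ≤ m := by linarith
  set P : ℝ := c₁ / (σ ^ 2 * X ^ m) * (X / σ) ^ ε with hP
  have hP0 : 0 < P := by positivity
  have key : ∀ A : ℝ, 0 < A → (c₁ / σ ^ (m + 2)) * (σ / A) ^ p
      = P * (X / A) ^ m * (A / X) ^ ε := by
    intro A hA
    rw [hP, hp, Real.rpow_sub (by positivity), Real.rpow_natCast, Real.div_rpow hσ.le hA.le,
      Real.div_rpow hX0.le hσ.le, Real.div_rpow hA.le hX0.le]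
    have h1 := Real.rpow_pos_of_pos hσ ε
    have h2 := Real.rpow_pos_of_pos hA ε
    have h3 := Real.rpow_pos_of_pos hX0 ε
    rw [div_pow, div_pow, pow_add σ m 2]
    field_simp
  -- far region
  set E1 := Real.exp (-a * X / (2 * ξ)) with hE1
  set E2 := Real.exp (-b * X / (2 * ξ)) with hE2
  have far : ∀ y : Fin (m + 2) → ℤ, X / 2 < ‖y‖ → f y ≤ P * 2 ^ (m + 2) * E1 := by
    intro y hy
    have h1 : (σ / max σ ‖y‖) ^ p ≤ (σ / (X / 2)) ^ p := by
      apply Real.rpow_le_rpow (by positivity) _ hp0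
      gcongr
      exact hy.le.trans (le_max_right _ _)
    have h2 : Real.exp (-a * ‖y‖ / ξ) ≤ E1 := by
      apply Real.exp_le_exp.2
      rw [div_le_div_iff₀ hξ (by positivity)]
      nlinarith [mul_pos ha hξ]
    have h3 : (X / 2 / X) ^ ε ≤ 1 := by
      apply Real.rpow_le_one (by positivity) _ hε0
      rw [div_le_one hX0]; linarith
    calc f y ≤ _ := hfb y
      _ ≤ c₁ / σ ^ (m + 2) * (σ / (X / 2)) ^ p * E1 := by gcongr
      _ = P * 2 ^ m * (X / 2 / X) ^ ε * E1 := by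
          rw [key _ (by positivity)]
          congr 4
          field_simp
      _ ≤ P * 2 ^ m * 1 * E1 := by gcongr
      _ ≤ P * 2 ^ (m + 2) * E1 := by
          rw [mul_one]
          gcongr
          · norm_num
          · omega
  set D : ℝ := P * (X / ξ) ^ m * (ξ / X) ^ ε * M with hD
  have hD0 : 0 < D := by positivity
  have near : ∀ y : Fin (m + 2) → ℤ, μ * ξ < ‖y‖ → f y ≤ D * Real.exp (-a * ‖y‖ / ξ) := by
    intro y hy
    have h1 : (σ / max σ ‖y‖) ^ p ≤ (σ / ξ * max 1 (1 / μ)) ^ p := by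
      apply Real.rpow_le_rpow (by positivity) _ hp0
      calc σ / max σ ‖y‖ ≤ σ / (μ * ξ) := by
            gcongr
            exact hy.le.trans (le_max_right _ _)
        _ = σ / ξ * (1 / μ) := by field_simp
        _ ≤ _ := by gcongr; exact le_max_right _ _
    have h2 : (σ / ξ * max 1 (1 / μ)) ^ p ≤ (σ / ξ) ^ p * M := by
      rw [Real.mul_rpow (by positivity) (by positivity)]
      gcongr
      rw [hM, ← Real.rpow_natCast]
      exact Real.rpow_le_rpow_of_exponent_le (le_max_left _ _) hpm
    calc f y ≤ _ := hfb y
      _ ≤ c₁ / σ ^ (m + 2) * ((σ / ξ) ^ p * M) * Real.exp (-a * ‖y‖ / ξ) := by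
          gcongr
          exact h1.trans h2
      _ = _ := by rw [← mul_assoc, key _ hξ]
  obtain ⟨κ, n, hn, hκ⟩ := block_exists (m + 2) ξ hξ
  set G : ℝ := c₂ * (2 * ξ / X) ^ m * E2 with hG
  have hG0 : 0 < G := by positivity
  have hnear : ∀ T : Finset (Fin (m + 2) → ℤ), (∀ y ∈ T, ‖y‖ ≤ X / 2) →
      ∑ y ∈ T, Real.exp (-a * ‖y‖ / ξ) * g (x - y) ≤ K * G := by
    intro T hT
    classical
    rw [← Finset.sum_fiberwise_of_maps_to (t := T.image κ) (g := κ)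
      (fun y hy => Finset.mem_image_of_mem _ hy)]
    calc _ ≤ ∑ k ∈ T.image κ, Real.exp (-(a / 2) * ‖k‖) * G := by
          apply Finset.sum_le_sum
          intro k hk
          obtain ⟨y0, hy0, rfl⟩ := Finset.mem_image.1 hk
          have hz : ‖n • κ y0‖ ≤ X / 2 := (hκ y0).1.trans (hT y0 hy0)
          have hxz : X / 2 ≤ ‖x - n • κ y0‖ := by
            have := norm_sub_norm_le x (n • κ y0)
            linarith
          have hGb : ∑ y ∈ T with κ y = κ y0, g (x - y) ≤ G := by
            calc ∑ y ∈ T with κ y = κ y0, g (x - y)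
                ≤ ∑' y : {y : Fin (m + 2) → ℤ // supNorm (y - (x - n • κ y0)) ≤ ξ}, g y.1 := by
                  have hsub : Summable
                      (fun y : {y : Fin (m + 2) → ℤ // supNorm (y - (x - n • κ y0)) ≤ ξ} => g y.1) :=
                    hgs.subtype _
                  have hmem : ∀ y ∈ (T.filter (fun y => κ y = κ y0)).image (fun y => x - y),
                      supNorm (y - (x - n • κ y0)) ≤ ξ := by
                    intro y hy
                    obtain ⟨w, hw, rfl⟩ := Finset.mem_image.1 hy
                    have hw2 := (Finset.mem_filter.1 hw).2
                    have h := (hκ w).2.1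
                    rw [hw2] at h
                    rw [show x - w - (x - n • κ y0) = -(w - n • κ y0) by abel, supNorm_eq_norm, norm_neg]
                    exact h
                  calc ∑ y ∈ T with κ y = κ y0, g (x - y)
                      = ∑ y ∈ (T.filter (fun y => κ y = κ y0)).image (fun y => x - y), g y := by
                        rw [Finset.sum_image]
                        intro u _ v _ h
                        exact sub_right_injective h
                    _ = ∑ y ∈ ((T.filter (fun y => κ y = κ y0)).image (fun y => x - y)).subtype
                          (fun y => supNorm (y - (x - n • κ y0)) ≤ ξ), g y.1 := by
                        rw [Finset.sum_subtype_of_mem (f := g) hmem]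
                    _ ≤ _ := hsub.sum_le_tsum _ (fun y _ => hg _)
              _ ≤ _ := hgb (x - n • κ y0)
              _ ≤ G := by
                  rw [hG]
                  have e1 : ξ / max ξ ‖x - n • κ y0‖ ≤ 2 * ξ / X := by
                    calc ξ / max ξ ‖x - n • κ y0‖ ≤ ξ / (X / 2) := by
                          gcongr
                          exact hxz.trans (le_max_right _ _)
                      _ = _ := by field_simp
                  have e2 : Real.exp (-b * ‖x - n • κ y0‖ / ξ) ≤ E2 := by
                    apply Real.exp_le_exp.2
                    rw [div_le_div_iff₀ hξ (by positivity)]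
                    nlinarith [mul_pos hb hξ]
                  gcongr
          calc _ ≤ ∑ y ∈ T with κ y = κ y0, Real.exp (-(a / 2) * ‖κ y0‖) * g (x - y) := by
                apply Finset.sum_le_sum
                intro y hy
                have hy2 := (Finset.mem_filter.1 hy).2
                apply mul_le_mul_of_nonneg_right _ (hg _)
                apply Real.exp_le_exp.2
                rw [← hy2, div_le_iff₀ hξ]
                have h1 := (hκ y).1
                rw [(hκ y).2.2] at h1
                have h2 : ξ * ‖κ y‖ ≤ 2 * ‖y‖ := by nlinarith [norm_nonneg (κ y)]
                nlinarith
            _ = Real.exp (-(a / 2) * ‖κ y0‖) * ∑ y ∈ T with κ y = κ y0, g (x - y) := by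
                rw [Finset.mul_sum]
            _ ≤ _ := by gcongr
      _ = (∑ k ∈ T.image κ, Real.exp (-(a / 2) * ‖k‖)) * G := by rw [Finset.sum_mul]
      _ ≤ K * G := by
          gcongr
          exact hKb _
  have hfar : ∀ T : Finset (Fin (m + 2) → ℤ), ∑ y ∈ T, g (x - y) ≤ ∑' y, g y := by
    intro T
    classical
    calc ∑ y ∈ T, g (x - y) = ∑ y ∈ T.image (fun y => x - y), g y := by
          rw [Finset.sum_image]
          intro u _ v _ h
          exact sub_right_injective h
      _ ≤ _ := hgs.sum_le_tsum _ (fun y _ => hg _)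
  have htot0 : 0 ≤ ∑' y, g y := tsum_nonneg hg
  have hDG : D * (K * G) = P * (c₂ * (M * 2 ^ m * K) * (ξ / X) ^ ε * E2) := by
    rw [hD, hG]
    have : (X / ξ) ^ m * (2 * ξ / X) ^ m = 2 ^ m := by
      rw [← mul_pow]; congr 1; field_simp
    rw [← this]; ring
  apply tsum_le_of_sum_le'
  · positivity
  · intro s
    classical
    set S : Finset (Fin (m + 2) → ℤ) := s.map (Function.Embedding.subtype _) with hS
    have e : ∑ y ∈ s, f y.1 * g (x - y.1) = ∑ y ∈ S, f y * g (x - y) := by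
      rw [hS, Finset.sum_map]; rfl
    have hSm : ∀ y ∈ S, μ * ξ < ‖y‖ := by
      intro y hy
      obtain ⟨w, hw, rfl⟩ := Finset.mem_map.1 hy
      have h := not_le.1 w.2
      rw [supNorm_eq_norm] at h
      exact h
    rw [e, ← Finset.sum_filter_add_sum_filter_not S (fun y => X / 2 < ‖y‖), mul_add]
    apply add_le_add
    · calc _ ≤ ∑ y ∈ S with X / 2 < ‖y‖, P * 2 ^ (m + 2) * E1 * g (x - y) := by
            apply Finset.sum_le_sum
            intro y hy
            exact mul_le_mul_of_nonneg_right (far y (Finset.mem_filter.1 hy).2) (hg _)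
        _ = P * 2 ^ (m + 2) * E1 * ∑ y ∈ S with X / 2 < ‖y‖, g (x - y) := by
            rw [Finset.mul_sum]
        _ ≤ P * 2 ^ (m + 2) * E1 * ∑' y, g y := by
            gcongr
            exact hfar _
        _ = _ := by ring
    · rw [← hDG]
      calc _ ≤ ∑ y ∈ S with ¬ X / 2 < ‖y‖, D * (Real.exp (-a * ‖y‖ / ξ) * g (x - y)) := by
            apply Finset.sum_le_sum
            intro y hy
            rw [← mul_assoc]
            exact mul_le_mul_of_nonneg_right (near y (hSm y (Finset.mem_filter.1 hy).1)) (hg _)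
        _ = D * ∑ y ∈ S with ¬ X / 2 < ‖y‖, Real.exp (-a * ‖y‖ / ξ) * g (x - y) := by
            rw [Finset.mul_sum]
        _ ≤ _ := by
            gcongr
            exact hnear _ (fun y hy => not_lt.1 (Finset.mem_filter.1 hy).2)
end
end
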